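/- arXiv:2003.07810 — 2 statements merged into one kernel-verified Lean document; each statement's English description precedes it below -/
import Mathlib

section
/- Let G = (V, E) be a graph on n vertices, let x ∈ [0,1]^E, let c ∈ ℝ_+^E, and let ε ∈ (0, 1/8). Suppose the graph formed by the edges e with x_e > 0 is connected (equivalently, the Laplacian L_x has rank n − 1), that for every edge e = uv ∈ E one has b_e b_eᵀ ⪯ ε²·L_x (i.e., the effective resistance Reff_x(u, v) ≤ ε²), and that c_∞ ≤ ε²·⟨c, x⟩. Then there exists z ∈ {0,1}^E such that (1 − 8ε)·L_x ⪯ L_z ⪯ (1 + 8ε)·L_x and (1 − 8ε)·⟨c, x⟩ ≤ ⟨c, z⟩ ≤ (1 + 8ε)·⟨c, x⟩. -/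
/-!
The proof is by the method of interlacing families, applied to the polynomials
`x ↦ det (x M - S) · det (x M + S)`, where `S = ∑ (zᵢ - xᵢ) wᵢ wᵢᵀ` and the `zᵢ` are independent `0`/`1`
variables of mean `xᵢ`. If such a product is positive on `[8ε, ∞)`, then `-8ε M ⪯ S ⪯ 8ε M`.

A determinant is affine in the coefficient of each rank-one term, so the product is quadratic in each
of them. Hence averaging over one `zᵢ` amounts to applying `1 - (vᵢ/2) ∂ᵢ²` with `vᵢ = xᵢ (1 - xᵢ)`
(`Affine.op_pairing`), and this operator preserves the property of having no zero in the upper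
half-plane (`NonVan.op`).

* The expected polynomial is positive on `[8ε, ∞)`. This is a multivariate barrier argument
  (`step_real`, `Inv.op`, `base_inv`, `ops_base_pos`): each operator is paid for by a shift of size
  `2ε vᵢ` in its variable, and the Rayleigh inequalities `F ∂ᵢ∂ⱼF ≤ ∂ᵢF ∂ⱼF` (`rayleigh`), which follow from
  stability, show that the logarithmic derivatives do not increase.
* Some outcome is as good as the average. The coordinates are fixed one at a time; all convex
  combinations of the two conditional expectations are stable, and `exists_pos_of_mix` shows that
  positivity on a half-line then passes from a convex combination to one of its two ends. That lemma
  compares the arguments of the two polynomials along a vertical ray.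

For the graph, costs are treated as one more coordinate of the edge vectors (`exists_rounding`): the
vectors are `(b_e, √(c_e / ⟨c, x⟩))`, and `M` is `L_x` completed by the all-ones rank-one matrix and a
unit entry. The spectral bounds and the cost bounds are then read off from the two diagonal blocks.
-/

open Matrix BigOperators

namespace SpectralRounding

/-! ### Difference operators on functions that are quadratic in each variable -/

section Operators
variable {ι K : Type*} [DecidableEq ι] [Field K]

/-- Symmetric first difference of `F` in the variable `i`. On functions that are quadratic in each
variable it equals the partial derivative `∂ᵢF`. -/
def d1 (i : ι) (F : (ι → K) → K) (z : ι → K) : K :=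
  (F (z + Pi.single i 1) - F (z - Pi.single i 1)) / 2

/-- Symmetric second difference of `F` in the variable `i`, divided by two. On functions that are
quadratic in each variable it equals `∂ᵢ²F / 2`. -/
def d2 (i : ι) (F : (ι → K) → K) (z : ι → K) : K :=
  (F (z + Pi.single i 1) + F (z - Pi.single i 1)) / 2 - F z

/-- The operator `1 - (v/2) ∂ᵢ²`, written with differences. By `Affine.op_pairing` it averages out a
two-valued random shift of variance `v`. -/
def op (v : K) (i : ι) (F : (ι → K) → K) (z : ι → K) : K := F z - v * d2 i F z

/-- The composition of the operators `op (v i) i` over the entries `i` of the list `l`. -/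
def ops (v : ι → K) (l : List ι) (F : (ι → K) → K) : (ι → K) → K :=
  l.foldr (fun i H => op (v i) i H) F

/-- `F` is a polynomial of degree at most two in each variable separately, its coefficients being
given by `d1` and `d2`. -/
def Quad (F : (ι → K) → K) : Prop :=
  ∀ z i s, F (z + Pi.single i s) = F z + s * d1 i F z + s ^ 2 * d2 i F z

lemma Quad.sub {F : (ι → K) → K} (h : Quad F) (z : ι → K) (i : ι) (s : K) :
    F (z - Pi.single i s) = F z - s * d1 i F z + s ^ 2 * d2 i F z := by
  have := h z i (-s)
  rw [Pi.single_neg, ← sub_eq_add_neg] at this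
  rw [this]; ring

lemma Quad.d1 {F : (ι → K) → K} (h : Quad F) (j : ι) : Quad (d1 j F) := by
  intro z i s
  have e1 := h (z + Pi.single j 1) i s
  have e2 := h (z - Pi.single j 1) i s
  rw [add_right_comm] at e1
  rw [← add_sub_right_comm] at e2
  simp only [SpectralRounding.d1, SpectralRounding.d2] at *
  rw [e1, e2, add_right_comm z (Pi.single i 1), add_sub_right_comm z (Pi.single i 1),
    ← add_sub_right_comm z (Pi.single j 1) (Pi.single i 1),
    sub_right_comm z (Pi.single i 1)]
  ring_nf

lemma Quad.d2 {F : (ι → K) → K} (h : Quad F) (j : ι) : Quad (d2 j F) := by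
  intro z i s
  have e1 := h (z + Pi.single j 1) i s
  have e2 := h (z - Pi.single j 1) i s
  have e3 := h z i s
  rw [add_right_comm] at e1
  rw [← add_sub_right_comm] at e2
  simp only [SpectralRounding.d1, SpectralRounding.d2] at *
  rw [e1, e2, e3, add_right_comm z (Pi.single i 1), add_sub_right_comm z (Pi.single i 1),
    ← add_sub_right_comm z (Pi.single j 1) (Pi.single i 1),
    sub_right_comm z (Pi.single i 1)]
  ring_nf

lemma Quad.op {F : (ι → K) → K} (h : Quad F) (v : K) (j : ι) : Quad (op v j F) := by
  intro z i s
  have e1 := h z i s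
  have e2 := h.d2 j z i s
  simp only [SpectralRounding.op, SpectralRounding.d1] at *
  rw [e1, e2]
  simp only [SpectralRounding.op, SpectralRounding.d2]
  ring_nf

lemma Quad.ops {F : (ι → K) → K} (h : Quad F) (v : ι → K) (l : List ι) : Quad (ops v l F) := by
  induction l with
  | nil => exact h
  | cons i l ih => exact ih.op _ _

lemma d2_comm (i j : ι) (F : (ι → K) → K) : d2 i (d2 j F) = d2 j (d2 i F) := by
  funext z
  simp only [d2]
  rw [add_right_comm z (Pi.single i 1), add_sub_right_comm z (Pi.single i 1),
    ← add_sub_right_comm z (Pi.single j 1) (Pi.single i 1),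
    sub_right_comm z (Pi.single i 1)]
  ring_nf

lemma d1_d2_comm (i j : ι) (F : (ι → K) → K) : d1 i (d2 j F) = d2 j (d1 i F) := by
  funext z
  simp only [d2, d1]
  rw [add_right_comm z (Pi.single i 1), add_sub_right_comm z (Pi.single i 1),
    ← add_sub_right_comm z (Pi.single j 1) (Pi.single i 1),
    sub_right_comm z (Pi.single i 1)]
  ring_nf

lemma d1_comm (i j : ι) (F : (ι → K) → K) : d1 i (d1 j F) = d1 j (d1 i F) := by
  funext z
  simp only [d1]
  rw [add_right_comm z (Pi.single i 1), add_sub_right_comm z (Pi.single i 1),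
    ← add_sub_right_comm z (Pi.single j 1) (Pi.single i 1),
    sub_right_comm z (Pi.single i 1)]
  ring_nf

lemma d2_op (v : K) (i j : ι) (F : (ι → K) → K) :
    d2 i (op v j F) = op v j (d2 i F) := by
  funext z
  have := congrFun (d2_comm i j F) z
  simp only [op]
  rw [← this]
  simp only [op, d2]; ring_nf

lemma d1_op (v : K) (i j : ι) (F : (ι → K) → K) :
    d1 i (op v j F) = op v j (d1 i F) := by
  funext z
  have := congrFun (d1_d2_comm i j F) z
  simp only [op]
  rw [← this]
  simp only [op, d1]; ring_nf

lemma op_comm (v v' : K) (i j : ι) (F : (ι → K) → K) :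
    op v i (op v' j F) = op v' j (op v i F) := by
  funext z
  have h1 := congrFun (d2_op v' i j F) z
  have h2 := congrFun (d2_op v j i F) z
  have h3 := congrFun (d2_comm i j F) z
  simp only [op] at *
  rw [h1, h2, h3]; ring

lemma op_ops (v : ι → K) (v' : K) (i : ι) (l : List ι) (F : (ι → K) → K) :
    op v' i (ops v l F) = ops v l (op v' i F) := by
  induction l with
  | nil => rfl
  | cons j l ih =>
    change op v' i (op (v j) j (ops v l F)) = op (v j) j (ops v l (op v' i F))
    rw [op_comm, ih]

lemma op_lin (v : K) (i : ι) (F H : (ι → K) → K) (s t : K) :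
    op v i (fun z => s * F z + t * H z) = fun z => s * op v i F z + t * op v i H z := by
  funext z; simp only [op, d2]; ring

lemma ops_lin (v : ι → K) (l : List ι) (F H : (ι → K) → K) (s t : K) :
    ops v l (fun z => s * F z + t * H z) = fun z => s * ops v l F z + t * ops v l H z := by
  induction l with
  | nil => rfl
  | cons i l ih =>
    change op (v i) i (ops v l _) = _
    rw [ih, op_lin]; rfl

/-- `F` is affine in each variable separately. -/
def Affine (F : (ι → K) → K) : Prop :=
  ∀ z i s, F (z + Pi.single i s) = F z + s * (F (z + Pi.single i 1) - F z)

/-- The symmetrized product `F(z - ξ) F(z + ξ)`; for a determinant `F` its positivity controls the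
signed sum with coefficients `ξ` from both sides at once. -/
def pairing (F : (ι → K) → K) (ξ : ι → K) (z : ι → K) : K := F (z - ξ) * F (z + ξ)

lemma Affine.sub {F : (ι → K) → K} (h : Affine F) (z : ι → K) (i : ι) (s : K) :
    F (z - Pi.single i s) = F z - s * (F (z + Pi.single i 1) - F z) := by
  have := h z i (-s)
  rw [Pi.single_neg, ← sub_eq_add_neg] at this
  rw [this]; ring

lemma Affine.quad_pairing [CharZero K] {F : (ι → K) → K} (h : Affine F) (ξ : ι → K) :
    Quad (pairing F ξ) := by
  intro z i s
  simp only [d1, d2, pairing]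
  rw [add_sub_right_comm z (Pi.single i s), add_sub_right_comm z (Pi.single i 1),
    add_right_comm z (Pi.single i s), add_right_comm z (Pi.single i 1),
    sub_right_comm z (Pi.single i 1), ← add_sub_right_comm z ξ (Pi.single i 1),
    h (z - ξ) i s, h (z + ξ) i s, h.sub (z - ξ) i 1, h.sub (z + ξ) i 1]
  field_simp
  ring

/-- Averaging identity: if the `i`-th shift takes the value `t₁` with probability `s` and `t₂` with
probability `1 - s`, the expectation of the pairing is obtained from the pairing at the mean shift
by applying `op` with the variance of the shift. -/
lemma Affine.op_pairing [CharZero K] {F : (ι → K) → K} (h : Affine F) (ξ : ι → K) (i : ι)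
    (s t₁ t₂ : K) :
    op (s * (1 - s) * (t₁ - t₂) ^ 2) i
        (pairing F (ξ + Pi.single i (s * t₁ + (1 - s) * t₂))) =
      fun z => s * pairing F (ξ + Pi.single i t₁) z + (1 - s) * pairing F (ξ + Pi.single i t₂) z := by
  funext z
  simp only [op, d2, pairing]
  simp only [← sub_sub, ← add_assoc]
  rw [add_sub_right_comm z (Pi.single i 1),
    add_right_comm z (Pi.single i 1),
    sub_right_comm z (Pi.single i 1), ← add_sub_right_comm z ξ (Pi.single i 1)]
  have e1 : (Pi.single i (1 + (s * t₁ + (1 - s) * t₂)) : ι → K) =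
      Pi.single i 1 + Pi.single i (s * t₁ + (1 - s) * t₂) := Pi.single_add _ _ _
  have e2 : z - ξ + Pi.single i 1 - Pi.single i (s * t₁ + (1 - s) * t₂)
    = z - ξ + Pi.single i (1 - (s * t₁ + (1 - s) * t₂)) := by rw [Pi.single_sub, add_sub_assoc]
  have e3 : z - ξ - Pi.single i 1 - Pi.single i (s * t₁ + (1 - s) * t₂)
    = z - ξ - Pi.single i (1 + (s * t₁ + (1 - s) * t₂)) := by
    rw [e1, sub_sub]
  have e4 : z + ξ + Pi.single i 1 + Pi.single i (s * t₁ + (1 - s) * t₂)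
    = z + ξ + Pi.single i (1 + (s * t₁ + (1 - s) * t₂)) := by
    rw [e1, add_assoc]
  have e5 : z + ξ - Pi.single i 1 + Pi.single i (s * t₁ + (1 - s) * t₂)
    = z + ξ + Pi.single i ((s * t₁ + (1 - s) * t₂) - 1) := by rw [Pi.single_sub]; abel
  rw [e2, e3, e4, e5]
  rw [h (z - ξ) i (1 - _), h.sub (z - ξ) i (1 + _), h (z + ξ) i (1 + _), h (z + ξ) i (_ - 1),
    h.sub (z - ξ) i (s * t₁ + (1 - s) * t₂), h (z + ξ) i (s * t₁ + (1 - s) * t₂),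
    h.sub (z - ξ) i t₁, h.sub (z - ξ) i t₂, h (z + ξ) i t₁, h (z + ξ) i t₂]
  field_simp
  ring

end Operators

/-! ### Stability and the Rayleigh inequality -/

section Stability
variable {ι : Type*} [DecidableEq ι]

/-- A genuinely quadratic polynomial without zeros in the closed upper half-plane has both roots in
the open lower half-plane. -/
lemma quad_roots {a b c : ℂ} (h : ∀ s : ℂ, 0 ≤ s.im → a + s * b + s ^ 2 * c ≠ 0) (hc : c ≠ 0) :
    ∃ r q : ℂ, r.im < 0 ∧ q.im < 0 ∧ b = -(c * (r + q)) ∧ a = c * (q * r) := by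
  obtain ⟨w, hw⟩ := IsAlgClosed.exists_pow_nat_eq (b ^ 2 - 4 * c * a) (n := 2) (by norm_num)
  have him : ∀ r : ℂ, a + r * b + r ^ 2 * c = 0 → r.im < 0 := fun r hr => by
    by_contra! h'
    exact h r h' hr
  refine ⟨(-b + w) / (2 * c), (-b - w) / (2 * c), him _ ?_, him _ ?_, ?_, ?_⟩
  · field_simp
    linear_combination hw
  · field_simp
    linear_combination hw
  · field_simp; ring
  · field_simp
    linear_combination hw

/-- The product of two points of the open lower half-plane is never a nonnegative real; this is why
`op` preserves the absence of zeros. -/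
lemma quad_ne {a b c : ℂ} (h : ∀ s : ℂ, 0 ≤ s.im → a + s * b + s ^ 2 * c ≠ 0) {v : ℝ}
    (hv : 0 ≤ v) : a - v * c ≠ 0 := by
  intro h0
  by_cases hc : c = 0
  · refine h 0 le_rfl ?_
    rw [hc] at h0 ⊢
    simpa using h0
  obtain ⟨r, q, hr, hq, hb, ha⟩ := quad_roots h hc
  have h1 : q * r = v := by
    have : c * (q * r - v) = 0 := by rw [ha] at h0; linear_combination h0
    rcases mul_eq_zero.1 this with h2 | h2
    · exact absurd h2 hc
    · exact sub_eq_zero.1 h2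
  have hre := congrArg Complex.re h1
  have him := congrArg Complex.im h1
  simp at hre him
  have h2 : 0 < q.re * r.re := by linarith [mul_pos_of_neg_of_neg hq hr]
  have h3 : q.re * r.re * r.im + q.im * r.re ^ 2 = 0 := by linear_combination r.re * him
  nlinarith [mul_neg_of_pos_of_neg h2 hr, mul_nonneg (neg_nonneg.2 hq.le) (sq_nonneg r.re)]

/-- The logarithmic derivative `b / a` at `0` is a sum of terms `-1/r` over the roots `r`, each of
which has nonpositive imaginary part. -/
lemma quad_im {a b c : ℂ} (h : ∀ s : ℂ, 0 ≤ s.im → a + s * b + s ^ 2 * c ≠ 0) :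
    (b * (starRingEnd ℂ) a).im ≤ 0 := by
  by_cases hc : c = 0
  · by_contra! hlt
    have hb : b ≠ 0 := by rintro rfl; simp at hlt
    refine h (-a / b) ?_ (by rw [hc]; field_simp; ring)
    have : (-a / b).im = (b * (starRingEnd ℂ) a).im / Complex.normSq b := by
      simp [Complex.div_im]; ring
    rw [this]
    exact div_nonneg hlt.le (Complex.normSq_nonneg b)
  · obtain ⟨r, q, hr, hq, hb, ha⟩ := quad_roots h hc
    have e : b * (starRingEnd ℂ) a = -((Complex.normSq c : ℝ) : ℂ) *
        ((Complex.normSq r : ℝ) * (starRingEnd ℂ) q + (Complex.normSq q : ℝ) * (starRingEnd ℂ) r) := by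
      rw [ha, hb]
      simp only [map_mul, ← Complex.mul_conj]
      ring
    rw [e]
    simp only [← Complex.ofReal_neg, Complex.im_ofReal_mul, Complex.add_im, Complex.conj_im]
    have h1 := Complex.normSq_nonneg c
    have h2 := mul_nonneg (Complex.normSq_nonneg r) (neg_nonneg.2 hq.le)
    have h3 := mul_nonneg (Complex.normSq_nonneg q) (neg_nonneg.2 hr.le)
    nlinarith [mul_nonneg h1 h2, mul_nonneg h1 h3]

/-- `F` has no zero all of whose coordinates lie in the closed upper half-plane. -/
def NonVan (F : (ι → ℂ) → ℂ) : Prop := ∀ z, (∀ i, 0 ≤ (z i).im) → F z ≠ 0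

lemma NonVan.quad {F : (ι → ℂ) → ℂ} (hF : NonVan F) (hq : Quad F) {z : ι → ℂ}
    (hz : ∀ i, 0 ≤ (z i).im) (i : ι) (s : ℂ) (hs : 0 ≤ s.im) :
    F z + s * d1 i F z + s ^ 2 * d2 i F z ≠ 0 := by
  rw [← hq z i s]
  apply hF
  intro j
  rcases eq_or_ne j i with rfl | hj
  · simpa using add_nonneg (hz j) hs
  · simpa [hj] using hz j

lemma NonVan.op {F : (ι → ℂ) → ℂ} (hF : NonVan F) (hq : Quad F) (i : ι) {v : ℝ} (hv : 0 ≤ v) :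
    NonVan (op (v : ℂ) i F) := fun _ hz => quad_ne (hF.quad hq hz i) hv

lemma NonVan.im_le {F : (ι → ℂ) → ℂ} (hF : NonVan F) (hq : Quad F) {z : ι → ℂ}
    (hz : ∀ i, 0 ≤ (z i).im) (i : ι) : (d1 i F z * (starRingEnd ℂ) (F z)).im ≤ 0 :=
  quad_im (hF.quad hq hz i)

lemma NonVan.ops {F : (ι → ℂ) → ℂ} (hF : NonVan F) (hq : Quad F) {v : ι → ℝ} (hv : ∀ i, 0 ≤ v i)
    (l : List ι) : NonVan (ops (fun i => (v i : ℂ)) l F) := by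
  induction l with
  | nil => exact hF
  | cons i l ih => exact ih.op (hq.ops _ _) i (hv i)

/-- `Fc` restricts to `Fr` on real arguments. -/
def Lifts (Fc : (ι → ℂ) → ℂ) (Fr : (ι → ℝ) → ℝ) : Prop :=
  ∀ z : ι → ℝ, Fc (fun i => (z i : ℂ)) = (Fr z : ℂ)

lemma Lifts.shift {Fc : (ι → ℂ) → ℂ} {Fr : (ι → ℝ) → ℝ} (h : Lifts Fc Fr) (i : ι) (z : ι → ℝ) :
    Fc ((fun i => (z i : ℂ)) + Pi.single i 1) = (Fr (z + Pi.single i 1) : ℂ) ∧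
    Fc ((fun i => (z i : ℂ)) - Pi.single i 1) = (Fr (z - Pi.single i 1) : ℂ) := by
  rw [← h, ← h]
  constructor <;> congr 1 <;> funext j <;> rcases eq_or_ne j i with rfl | hj <;> simp [*]

lemma Lifts.d1 {Fc : (ι → ℂ) → ℂ} {Fr : (ι → ℝ) → ℝ} (h : Lifts Fc Fr) (i : ι) :
    Lifts (d1 i Fc) (d1 i Fr) := by
  intro z
  simp only [SpectralRounding.d1, (h.shift i z).1, (h.shift i z).2]; push_cast; rfl

lemma Lifts.d2 {Fc : (ι → ℂ) → ℂ} {Fr : (ι → ℝ) → ℝ} (h : Lifts Fc Fr) (i : ι) :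
    Lifts (d2 i Fc) (d2 i Fr) := by
  intro z
  simp only [SpectralRounding.d2, (h.shift i z).1, (h.shift i z).2, h z]; push_cast; rfl

lemma Lifts.op {Fc : (ι → ℂ) → ℂ} {Fr : (ι → ℝ) → ℝ} (h : Lifts Fc Fr) (v : ℝ) (i : ι) :
    Lifts (op (v : ℂ) i Fc) (op v i Fr) := by
  intro z
  simp only [SpectralRounding.op, h.d2 i z, h z]; push_cast; rfl

lemma Lifts.ops {Fc : (ι → ℂ) → ℂ} {Fr : (ι → ℝ) → ℝ} (h : Lifts Fc Fr) (v : ι → ℝ) (l : List ι) :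
    Lifts (ops (fun i => (v i : ℂ)) l Fc) (ops v l Fr) := by
  induction l with
  | nil => exact h
  | cons i l ih => exact ih.op _ _

/-- Rayleigh inequality `F · ∂ⱼ∂ᵢF ≤ ∂ᵢF · ∂ⱼF` for real stable `F`: it is the limit `η → 0` of the
hypothesis `him` at the point `z + iη eⱼ`. -/
lemma rayleigh {Fc : (ι → ℂ) → ℂ} {Fr : (ι → ℝ) → ℝ} (h : Lifts Fc Fr) (hq : Quad Fc)
    (him : ∀ z : ι → ℂ, (∀ i, 0 ≤ (z i).im) → ∀ i, (d1 i Fc z * (starRingEnd ℂ) (Fc z)).im ≤ 0)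
    (z : ι → ℝ) (i j : ι) : Fr z * d1 j (d1 i Fr) z ≤ d1 i Fr z * d1 j Fr z := by
  have key : ∀ η : ℝ, 0 < η →
      Fr z * d1 j (d1 i Fr) z - d1 i Fr z * d1 j Fr z ≤
        η ^ 2 * (d1 j (d1 i Fr) z * d2 j Fr z - d2 j (d1 i Fr) z * d1 j Fr z) := by
    intro η hη
    have h0 := him ((fun i => (z i : ℂ)) + Pi.single j (η * Complex.I)) (by
      intro k
      rcases eq_or_ne k j with rfl | hk
      · simpa using hη.le
      · simp [hk]) i
    rw [hq, hq.d1 i, h z, (h.d1 i) z, h.d1 j z, h.d2 j z, (h.d1 i).d1 j z, (h.d1 i).d2 j z,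
      mul_pow, Complex.I_sq] at h0
    simp [← Complex.ofReal_pow] at h0
    refine le_of_mul_le_mul_left ?_ hη
    nlinarith [h0]
  by_contra! hlt
  set d := Fr z * d1 j (d1 i Fr) z - d1 i Fr z * d1 j Fr z with hd
  set k := d1 j (d1 i Fr) z * d2 j Fr z - d2 j (d1 i Fr) z * d1 j Fr z
  have hd0 : 0 < d := sub_pos.2 hlt
  have hk : 0 < |k| + 1 := by positivity
  have h1 := key (Real.sqrt (d / (2 * (|k| + 1)))) (by positivity)
  rw [Real.sq_sqrt (by positivity)] at h1
  have h2 : d / (2 * (|k| + 1)) * k ≤ d / (2 * (|k| + 1)) * (|k| + 1) :=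
    mul_le_mul_of_nonneg_left (by linarith [le_abs_self k]) (by positivity)
  have h3 : d / (2 * (|k| + 1)) * (|k| + 1) = d / 2 := by field_simp
  linarith

end Stability

/-! ### The barrier argument -/

section Barrier
variable {ι : Type*} [DecidableEq ι]

/-- One step of the barrier argument along a single variable. Here `a + s b + s² c` is the function
on a line, `a' + s b' + s² c'` one of its partial derivatives on the same line, and `hii`, `hij` are
the Rayleigh inequalities. Under the barrier bound `v b ≤ δ a`, applying `1 - (v/2) ∂²` and moving by
`δ` keeps the function positive and does not increase the ratio `a' / a`. -/
lemma step_real {a b c a' b' c' v δ : ℝ} (ha : ∀ s : ℝ, 0 ≤ s → 0 < a + s * b + s ^ 2 * c)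
    (hii : ∀ s : ℝ, (a + s * b + s ^ 2 * c) * (2 * c) ≤ (b + 2 * s * c) ^ 2)
    (hij : ∀ s : ℝ, (a + s * b + s ^ 2 * c) * (b' + 2 * s * c') ≤
      (b + 2 * s * c) * (a' + s * b' + s ^ 2 * c'))
    (hv : 0 ≤ v) (hvb : v * b ≤ δ * a) :
    0 < a + δ * b + δ ^ 2 * c - v * c ∧
    (a' + δ * b' + δ ^ 2 * c' - v * c') * a ≤ a' * (a + δ * b + δ ^ 2 * c - v * c) := by
  have ha0 : 0 < a := by simpa using ha 0 le_rfl
  have hc : 0 ≤ c := by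
    by_contra! hc
    obtain ⟨s, hs1, hs2⟩ : ∃ s : ℝ, 1 ≤ s ∧ s * (-c) = |b| + a + 1 - c := by
      have h0 : 0 ≤ (|b| + a + 1) / -c := div_nonneg (by positivity) (by linarith)
      refine ⟨(|b| + a + 1) / -c + 1, by linarith, ?_⟩
      rw [add_mul, div_mul_cancel₀ _ (by linarith)]; ring
    have h1 := ha s (by linarith)
    nlinarith [le_abs_self b, mul_le_mul_of_nonneg_left (le_abs_self b) (by linarith : 0 ≤ s)]
  have hbc : 4 * a * c ≤ b ^ 2 := by
    rcases hc.eq_or_lt with h | h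
    · rw [← h]; nlinarith [sq_nonneg b]
    · have := hii (-b / (2 * c))
      have e1 : b + 2 * (-b / (2 * c)) * c = 0 := by field_simp; ring
      have e2 : (a + -b / (2 * c) * b + (-b / (2 * c)) ^ 2 * c) * (2 * c) = 2 * a * c - b ^ 2 / 2 := by
        field_simp; ring
      rw [e1, e2] at this
      nlinarith
  have hb : 0 ≤ b := by
    by_contra! hb
    rcases hc.eq_or_lt with h | h
    · have := ha (a / -b) (div_nonneg ha0.le (by linarith))
      rw [← h] at this
      have e : a / -b * b = -a := by
        have : b ≠ 0 := hb.ne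
        field_simp
      rw [e] at this; linarith
    · have := ha (-b / (2 * c)) (div_nonneg (by linarith) (by linarith))
      have e : a + -b / (2 * c) * b + (-b / (2 * c)) ^ 2 * c = (4 * a * c - b ^ 2) / (4 * c) := by
        field_simp; ring
      rw [e] at this
      have := (div_pos_iff_of_pos_right (by linarith : 0 < 4 * c)).1 this
      linarith
  -- The Wronskian of the two quadratics, `W0 + 2 s H + s² W2`, is nonnegative for every real `s`.
  set W0 := b * a' - a * b'
  set H := c * a' - a * c'
  set W2 := c * b' - b * c'
  have hW : ∀ s : ℝ, 0 ≤ W0 + 2 * s * H + s ^ 2 * W2 := fun s => by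
    have := hij s; simp only [W0, H, W2]; nlinarith
  have hW0 : 0 ≤ W0 := by simpa using hW 0
  have hdisc : H ^ 2 ≤ W0 * W2 := by
    have := discrim_le_zero (a := W2) (b := 2 * H) (c := W0) (fun s => by
      have := hW s; nlinarith)
    rw [discrim] at this; nlinarith
  have hid : a * W2 = b * H - c * W0 := by simp only [W0, H, W2]; ring
  have hHb : a * H ≤ b * W0 := by
    by_contra! hlt
    have h1 : a * H ^ 2 ≤ W0 * (b * H) := by nlinarith [mul_nonneg hc (mul_nonneg hW0 hW0)]
    have hH : 0 < H := by
      by_contra! hH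
      nlinarith [mul_nonneg hb hW0]
    nlinarith
  have hH0 : 0 ≤ H := by
    rcases hb.eq_or_lt with h | h
    · have hc0 : c = 0 := by
        rw [← h] at hbc; nlinarith
      rw [← h, hc0] at hid
      have : W2 = 0 := by
        have : a * W2 = 0 := by linarith
        rcases mul_eq_zero.1 this with h' | h'
        · linarith
        · exact h'
      rw [this] at hdisc
      nlinarith
    · have hW2 : 0 ≤ W2 := by
        by_contra! hW2
        have : W0 = 0 ∨ 0 < W0 := by
          rcases hW0.eq_or_lt with h' | h' <;> simp_all
        rcases this with h' | h'
        · have hH : H = 0 := by rw [h'] at hdisc; nlinarith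
          have := hW 1
          rw [h', hH] at this; linarith
        · nlinarith [sq_nonneg H, mul_neg_of_pos_of_neg h' hW2]
      by_contra! hH
      nlinarith [mul_nonneg ha0.le hW2, mul_nonneg hc hW0]
  have hvH : v * H ≤ δ * W0 := by
    refine le_of_mul_le_mul_left ?_ ha0
    calc a * (v * H) = v * (a * H) := by ring
      _ ≤ v * (b * W0) := mul_le_mul_of_nonneg_left hHb hv
      _ = (v * b) * W0 := by ring
      _ ≤ (δ * a) * W0 := mul_le_mul_of_nonneg_right hvb hW0
      _ = a * (δ * W0) := by ring
  have hvc : v * c ≤ δ * b := by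
    refine le_of_mul_le_mul_left ?_ ha0
    have h1 : v * (4 * a * c) ≤ v * b ^ 2 := mul_le_mul_of_nonneg_left hbc hv
    have h2 : (v * b) * b ≤ (δ * a) * b := mul_le_mul_of_nonneg_right hvb hb
    nlinarith [mul_nonneg (mul_nonneg hv ha0.le) hc]
  refine ⟨by nlinarith [mul_nonneg (sq_nonneg δ) hc], ?_⟩
  have : a' * (a + δ * b + δ ^ 2 * c - v * c) - (a' + δ * b' + δ ^ 2 * c' - v * c') * a
      = δ * W0 + δ ^ 2 * H - v * H := by simp only [W0, H]; ring
  nlinarith [mul_nonneg (sq_nonneg δ) hH0]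

lemma Quad.d1_add {F : (ι → ℝ) → ℝ} (h : Quad F) (z : ι → ℝ) (i : ι) (s : ℝ) :
    SpectralRounding.d1 i F (z + Pi.single i s) =
      SpectralRounding.d1 i F z + 2 * s * SpectralRounding.d2 i F z := by
  conv_lhs => rw [SpectralRounding.d1]
  rw [add_assoc, add_sub_assoc, ← Pi.single_add, ← Pi.single_sub, h, h]
  ring

lemma Quad.d2_add {F : (ι → ℝ) → ℝ} (h : Quad F) (z : ι → ℝ) (i : ι) (s : ℝ) :
    SpectralRounding.d2 i F (z + Pi.single i s) = SpectralRounding.d2 i F z := by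
  conv_lhs => rw [SpectralRounding.d2]
  rw [add_assoc, add_sub_assoc, ← Pi.single_add, ← Pi.single_sub, h, h, h]
  ring

/-- The barrier invariant: on the orthant above `z₀` the function is positive and its logarithmic
derivatives, weighted by `v`, are at most `δ`. -/
def Inv (v δ : ι → ℝ) (F : (ι → ℝ) → ℝ) (z₀ : ι → ℝ) : Prop :=
  ∀ z, z₀ ≤ z → 0 < F z ∧ ∀ j, v j * d1 j F z ≤ δ j * F z

/-- Applying the `i`-th operator preserves the invariant once the orthant is moved by `δ i` along `i`. -/
lemma Inv.op {v δ : ι → ℝ} (hv : ∀ i, 0 ≤ v i) {F : (ι → ℝ) → ℝ}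
    {z₀ : ι → ℝ} (hI : Inv v δ F z₀) (hq : Quad F)
    (hR : ∀ z i j, F z * d1 j (d1 i F) z ≤ d1 i F z * d1 j F z) (i : ι) :
    Inv v δ (op (v i) i F) (z₀ + Pi.single i (δ i)) := by
  intro z hz
  obtain ⟨y, rfl⟩ : ∃ y, z = y + Pi.single i (δ i) := ⟨z - Pi.single i (δ i), by simp⟩
  have hy : z₀ ≤ y := by simpa using hz
  have hqo : ∀ s, SpectralRounding.op (v i) i F (y + Pi.single i s) =
      F y + s * d1 i F y + s ^ 2 * d2 i F y - v i * d2 i F y := by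
    intro s
    rw [SpectralRounding.op, hq.d2_add, hq]
  have hqd : ∀ j s, d1 j (SpectralRounding.op (v i) i F) (y + Pi.single i s) =
      d1 j F y + s * d1 i (d1 j F) y + s ^ 2 * d2 i (d1 j F) y - v i * d2 i (d1 j F) y := by
    intro j s
    rw [d1_op, SpectralRounding.op, (hq.d1 j).d2_add, hq.d1 j]
  have key := fun j => step_real (a := F y) (b := d1 i F y) (c := d2 i F y) (a' := d1 j F y)
    (b' := d1 i (d1 j F) y) (c' := d2 i (d1 j F) y) (v := v i) (δ := δ i)
    (fun s hs => by
      rw [← hq y i s]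
      refine (hI _ (hy.trans ?_)).1
      simpa using hs)
    (fun s => by
      have := hR (y + Pi.single i s) i i
      have e : d1 i (d1 i F) (y + Pi.single i s) = 2 * d2 i F y := by
        rw [SpectralRounding.d1, add_assoc, add_sub_assoc, ← Pi.single_add, ← Pi.single_sub,
          hq.d1_add, hq.d1_add]; ring
      rw [e, hq.d1_add, hq] at this
      nlinarith [this])
    (fun s => by
      have := hR (y + Pi.single i s) i j
      rw [d1_comm, (hq.d1 j).d1_add, hq.d1_add, hq, hq.d1 j] at this
      exact this)
    (hv i) ((hI y hy).2 i)
  have hpos := (key i).1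
  refine ⟨by rw [hqo]; exact hpos, fun j => ?_⟩
  rw [hqo, hqd]
  have h2 := (key j).2
  have h3 := (hI y hy).2 j
  have ha := (hI y hy).1
  have h4 := mul_le_mul_of_nonneg_left h2 (hv j)
  have h5 := mul_le_mul_of_nonneg_right h3 hpos.le
  refine le_of_mul_le_mul_right ?_ ha
  linarith

end Barrier

/-! ### Interlacing -/

section Interlacing
open Filter Topology Polynomial

lemma tendsto_arg_zero (u : ℝ) (hu : u ≠ 0) :
    Tendsto (fun T : ℝ => Complex.arg (u + T * Complex.I)) (𝓝[>] 0)
      (𝓝 (if u < 0 then Real.pi else 0)) := by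
  have hc : Tendsto (fun T : ℝ => (u + T * Complex.I : ℂ)) (𝓝 0) (𝓝 (u : ℂ)) := by
    have : Continuous (fun T : ℝ => (u + T * Complex.I : ℂ)) := by fun_prop
    simpa using this.tendsto 0
  rcases lt_or_gt_of_ne hu with h | h
  · rw [if_pos h]
    refine (Complex.tendsto_arg_nhdsWithin_im_nonneg_of_re_neg_of_im_zero
      (z := (u : ℂ)) (by simpa using h) (by simp)).comp ?_
    refine tendsto_nhdsWithin_iff.2 ⟨hc.mono_left nhdsWithin_le_nhds, ?_⟩
    filter_upwards [self_mem_nhdsWithin] with T hT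
    simpa using le_of_lt hT
  · rw [if_neg h.le.not_gt]
    have := (Complex.continuousAt_arg (x := (u : ℂ)) (by simp [Complex.slitPlane, h])).tendsto
    rw [Complex.arg_ofReal_of_nonneg h.le] at this
    exact (this.comp hc).mono_left nhdsWithin_le_nhds

lemma tendsto_arg_top (u : ℝ) :
    Tendsto (fun T : ℝ => Complex.arg (u + T * Complex.I)) atTop (𝓝 (Real.pi / 2)) := by
  have hc : Tendsto (fun T : ℝ => ((u * T⁻¹ : ℝ) + Complex.I : ℂ)) atTop (𝓝 Complex.I) := by
    have h0 : Tendsto (fun T : ℝ => u * T⁻¹) atTop (𝓝 0) := by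
      simpa using tendsto_inv_atTop_zero.const_mul u
    have h1 : Tendsto (fun T : ℝ => ((u * T⁻¹ : ℝ) : ℂ)) atTop (𝓝 0) := by
      have := (Complex.continuous_ofReal.tendsto 0).comp h0
      rwa [Complex.ofReal_zero] at this
    simpa using h1.add_const Complex.I
  have := (Complex.continuousAt_arg (x := Complex.I) (by simp [Complex.slitPlane])).tendsto
  rw [Complex.arg_I] at this
  refine (this.comp hc).congr' ?_
  filter_upwards [eventually_gt_atTop 0] with T hT
  have e : (u + T * Complex.I : ℂ) = (T : ℂ) * ((u * T⁻¹ : ℝ) + Complex.I) := by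
    have : (T : ℂ) ≠ 0 := by exact_mod_cast hT.ne'
    push_cast; field_simp
  simp only [Function.comp]
  rw [e, Complex.arg_real_mul _ hT]

/-- The continuous argument of `∏ (y + iT - a)` over `a ∈ A`, for `T > 0`: the sum of the principal
arguments of the factors. -/
noncomputable def argSum (A : Multiset ℝ) (y T : ℝ) : ℝ :=
  (A.map fun a => Complex.arg (((y - a : ℝ) : ℂ) + T * Complex.I)).sum

lemma argSum_nil (y : ℝ) : argSum 0 y = fun _ => 0 := by funext T; simp [argSum]

lemma argSum_cons (a : ℝ) (A : Multiset ℝ) (y : ℝ) :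
    argSum (a ::ₘ A) y = fun T : ℝ =>
      Complex.arg (((y - a : ℝ) : ℂ) + T * Complex.I) + argSum A y T := by
  funext T; simp [argSum]

/-- As `T → 0⁺`, each root to the right of `y` contributes `π` and each root to its left `0`. -/
lemma argSum_zero (A : Multiset ℝ) (y : ℝ) (hy : ∀ a ∈ A, y ≠ a) :
    Tendsto (argSum A y) (𝓝[>] 0) (𝓝 (A.countP (y < ·) * Real.pi)) := by
  induction A using Multiset.induction_on with
  | empty => simp [argSum_nil]
  | cons a A ih =>
    have h1 := (tendsto_arg_zero (y - a) (sub_ne_zero.2 (hy a (by simp)))).add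
      (ih fun b hb => hy b (by simp [hb]))
    rw [argSum_cons]
    convert h1 using 2
    by_cases h : y < a
    · rw [Multiset.countP_cons_of_pos _ h, if_pos (by linarith)]; push_cast; ring
    · rw [Multiset.countP_cons_of_neg _ h, if_neg (by linarith)]; ring

lemma argSum_top (A : Multiset ℝ) (y : ℝ) :
    Tendsto (argSum A y) atTop (𝓝 (A.card * (Real.pi / 2))) := by
  induction A using Multiset.induction_on with
  | empty => simp [argSum_nil]
  | cons a A ih =>
    have h1 := (tendsto_arg_top (y - a)).add ih
    rw [argSum_cons]
    convert h1 using 2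
    rw [Multiset.card_cons]; push_cast; ring

lemma argSum_cont (A : Multiset ℝ) (y : ℝ) : ContinuousOn (argSum A y) (Set.Ioi 0) := by
  induction A using Multiset.induction_on with
  | empty => rw [argSum_nil]; exact continuousOn_const
  | cons a A ih =>
    rw [argSum_cons]
    refine ContinuousOn.add ?_ ih
    intro T hT
    have hT' : T ≠ 0 := ne_of_gt hT
    refine ContinuousAt.continuousWithinAt ?_
    refine (Complex.continuousAt_arg ?_).comp (f := fun T : ℝ => ((y - a : ℝ) + T * Complex.I : ℂ))
      (by fun_prop)
    simp [Complex.slitPlane, hT']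

lemma prod_eq_exp (A : Multiset ℝ) (y T : ℝ) :
    (A.map fun a : ℝ => ((y : ℂ) + T * Complex.I - a)).prod =
      (‖(A.map fun a : ℝ => ((y : ℂ) + T * Complex.I - a)).prod‖ : ℂ) *
        Complex.exp (argSum A y T * Complex.I) := by
  induction A using Multiset.induction_on with
  | empty => simp [argSum]
  | cons a A ih =>
    have e : argSum (a ::ₘ A) y T = Complex.arg (((y - a : ℝ) : ℂ) + T * Complex.I)
      + argSum A y T := by simp [argSum]
    have e2 : ((y : ℂ) + T * Complex.I - a) = ((y - a : ℝ) : ℂ) + T * Complex.I := by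
      push_cast; ring
    rw [Multiset.map_cons, Multiset.prod_cons, e, norm_mul, e2]
    generalize ((y - a : ℝ) : ℂ) + T * Complex.I = w
    generalize hP : (A.map fun a : ℝ => ((y : ℂ) + T * Complex.I - a)).prod = P at ih ⊢
    have hexp : Complex.exp (((w.arg + argSum A y T : ℝ) : ℂ) * Complex.I) =
        Complex.exp (w.arg * Complex.I) * Complex.exp (argSum A y T * Complex.I) := by
      push_cast
      rw [add_mul, Complex.exp_add]
    have h1 := Complex.norm_mul_exp_arg_mul_I w
    rw [hexp]
    calc w * P = (‖w‖ * Complex.exp (w.arg * Complex.I)) *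
          (‖P‖ * Complex.exp (argSum A y T * Complex.I)) := by rw [h1, ← ih]
      _ = _ := by push_cast; ring

/-- If all roots in `A` lie left of `y` while at least two roots in `B` lie right of it, then along the
ray `y + iT` the difference of the two arguments runs from at least `2π` down to `0`. Where it equals
`π` the two products are opposite up to positive scaling, so some convex combination vanishes. -/
lemma count_contra (A B : Multiset ℝ) (hcard : A.card = B.card) (y : ℝ)
    (hA : ∀ a ∈ A, a < y) (hB : ∀ b ∈ B, y ≠ b) (hB2 : 2 ≤ B.countP (y < ·))
    (h : ∀ x : ℂ, 0 < x.im → ∀ s : ℝ, 0 ≤ s → s ≤ 1 →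
      (s : ℂ) * (A.map fun a : ℝ => (x - a : ℂ)).prod + (1 - s) * (B.map fun a : ℝ => (x - a : ℂ)).prod ≠ 0) :
    False := by
  have hA0 : A.countP (y < ·) = 0 := Multiset.countP_eq_zero.2 fun a ha => (hA a ha).not_gt
  have l1 := (argSum_zero B y hB).sub (argSum_zero A y fun a ha => (hA a ha).ne')
  have l2 := (argSum_top B y).sub (argSum_top A y)
  rw [hcard, sub_self] at l2
  rw [hA0, Nat.cast_zero, zero_mul, sub_zero] at l1
  have hmem : Real.pi ∈ Set.Ioo 0 ((B.countP (y < ·) : ℝ) * Real.pi) := by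
    refine ⟨Real.pi_pos, ?_⟩
    have : (2 : ℝ) ≤ B.countP (y < ·) := by exact_mod_cast hB2
    nlinarith [Real.pi_pos]
  obtain ⟨T, hT, hTe⟩ := isPreconnected_Ioi.intermediate_value_Ioo
    (l₁ := atTop) (l₂ := 𝓝[>] (0 : ℝ)) (le_principal_iff.2 (Ioi_mem_atTop 0))
    (le_principal_iff.2 self_mem_nhdsWithin)
    ((argSum_cont B y).sub (argSum_cont A y)) l2 l1 hmem
  have hTe' : argSum B y T = argSum A y T + Real.pi := by
    have : argSum B y T - argSum A y T = Real.pi := hTe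
    linarith
  have hAe := prod_eq_exp A y T
  have hBe := prod_eq_exp B y T
  have hx : 0 < ((y : ℂ) + T * Complex.I).im := by simpa using hT
  have hBe' : Complex.exp (argSum B y T * Complex.I) = - Complex.exp (argSum A y T * Complex.I) := by
    rw [hTe']; push_cast; rw [add_mul, Complex.exp_add, Complex.exp_pi_mul_I]; ring
  have hn := h _ hx 1 zero_le_one le_rfl
  simp only [Complex.ofReal_one, sub_self, zero_mul, add_zero, one_mul] at hn
  set PA := (A.map fun a : ℝ => ((y : ℂ) + T * Complex.I - a)).prod
  set PB := (B.map fun a : ℝ => ((y : ℂ) + T * Complex.I - a)).prod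
  have hpos : 0 < ‖PA‖ + ‖PB‖ := add_pos_of_pos_of_nonneg (norm_pos_iff.2 hn) (norm_nonneg _)
  refine h _ hx (‖PB‖ / (‖PA‖ + ‖PB‖)) (by positivity)
    (div_le_one_of_le₀ (by linarith [norm_nonneg PA]) hpos.le) ?_
  have hne : ((‖PA‖ : ℂ) + ‖PB‖) ≠ 0 := by exact_mod_cast hpos.ne'
  change _ * PA + _ * PB = 0
  rw [hAe, hBe, hBe']
  simp only [norm_mul, Complex.norm_real, norm_norm, Complex.norm_exp_ofReal_mul_I, norm_neg, mul_one]
  push_cast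
  field_simp
  ring

/-- A real polynomial without zeros in the upper half-plane is real-rooted. -/
lemma exists_real_roots (p : ℝ[X]) (hp : ∀ x : ℂ, 0 < x.im → aeval x p ≠ 0) :
    ∃ A : Multiset ℝ, A.card = p.natDegree ∧
      ∀ x : ℂ, aeval x p = p.leadingCoeff * (A.map fun a : ℝ => (x - a : ℂ)).prod := by
  have hp0 : p ≠ 0 := by rintro rfl; exact hp Complex.I (by simp) (by simp)
  have hs : (p.map (algebraMap ℝ ℂ)).Splits := IsAlgClosed.splits _
  have hreal : ∀ r ∈ (p.map (algebraMap ℝ ℂ)).roots, ((r.re : ℝ) : ℂ) = r := by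
    intro r hr
    have hr0 : aeval r p = 0 := by
      have := (mem_roots'.1 hr).2
      rwa [IsRoot, eval_map_algebraMap] at this
    have h1 : ¬ 0 < r.im := fun h => hp r h hr0
    have h2 : ¬ 0 < ((starRingEnd ℂ) r).im := fun h => hp _ h (by
      rw [Polynomial.aeval_conj, hr0, map_zero])
    simp at h1 h2
    exact Complex.ext (by simp) (by simp; linarith)
  refine ⟨(p.map (algebraMap ℝ ℂ)).roots.map Complex.re, ?_, fun x => ?_⟩
  · rw [Multiset.card_map, ← hs.natDegree_eq_card_roots, natDegree_map]
  · rw [← eval_map_algebraMap]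
    conv_lhs => rw [hs.eq_prod_roots]
    rw [eval_mul, eval_C, leadingCoeff_map, eval_multiset_prod, Multiset.map_map, Multiset.map_map]
    congr 2
    refine Multiset.map_congr rfl fun r hr => ?_
    simp [hreal r hr]

/-- A single root to the right of `a` would make the product nonpositive, so a second one must exist. -/
lemma prod_pos_count (B : Multiset ℝ) (a b : ℝ) (hb : b ∈ B) (hab : a < b)
    (hpos : 0 < (B.map fun c => (a - c : ℝ)).prod) : 2 ≤ B.countP (a < ·) := by
  obtain ⟨B', rfl⟩ := Multiset.exists_cons_of_mem hb
  rw [Multiset.countP_cons_of_pos _ hab]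
  by_contra! hlt
  have h0 : B'.countP (a < ·) = 0 := by
    have : B'.countP (a < ·) + 1 < 1 + 1 := hlt
    omega
  rw [Multiset.countP_eq_zero] at h0
  rw [Multiset.map_cons, Multiset.prod_cons] at hpos
  have : 0 ≤ (B'.map fun c => (a - c : ℝ)).prod := by
    apply Multiset.prod_nonneg
    intro d hd
    obtain ⟨c, hc, rfl⟩ := Multiset.mem_map.1 hd
    linarith [not_lt.1 (h0 c hc)]
  nlinarith

/-- The case of `count_contra` used below: the largest root `a` of the first polynomial lies left of a
root `b` of the second, which is positive at `a`. -/
lemma root_count_contra (A B : Multiset ℝ) (hcard : A.card = B.card) (a b : ℝ) (hA : ∀ c ∈ A, c ≤ a)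
    (hb : b ∈ B) (hab : a < b) (hpos : 0 < (B.map fun c => (a - c : ℝ)).prod)
    (h : ∀ x : ℂ, 0 < x.im → ∀ s : ℝ, 0 ≤ s → s ≤ 1 →
      (s : ℂ) * (A.map fun a : ℝ => (x - a : ℂ)).prod + (1 - s) * (B.map fun a : ℝ => (x - a : ℂ)).prod ≠ 0) :
    False := by
  have hev : ∀ᶠ y in 𝓝[>] a, ∀ c ∈ B.toFinset, a < c → y < c := by
    rw [Filter.eventually_all_finset]
    intro c _
    by_cases hc : a < c
    · filter_upwards [nhdsWithin_le_nhds (Iio_mem_nhds hc)] with y hy _ using hy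
    · exact Eventually.of_forall fun y h' => absurd h' hc
  obtain ⟨y, hy, hay⟩ := (hev.and self_mem_nhdsWithin).exists
  have hay : a < y := hay
  have hy' : ∀ c ∈ B, a < c → y < c := fun c hc => hy c (by simpa using hc)
  refine count_contra A B hcard y (fun c hc => (hA c hc).trans_lt hay) (fun c hc => ?_) ?_ h
  · rcases lt_or_ge a c with h' | h'
    · exact (hy' c hc h').ne
    · exact (h'.trans_lt hay).ne'
  · refine (prod_pos_count B a b hb hab hpos).trans_eq ?_
    refine Multiset.countP_congr rfl fun c hc => ?_
    exact propext ⟨fun hlt => hy' c hc hlt, fun hlt => hay.trans hlt⟩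

/-- Interlacing principle: if no convex combination of `p` and `q` has a zero in the upper half-plane
and one of them is positive on `[α, ∞)`, then so is `p` or `q`. -/
lemma exists_pos_of_mix (p q : ℝ[X]) (hdeg : p.natDegree = q.natDegree)
    (hlead : p.leadingCoeff = q.leadingCoeff) (hL : 0 < p.leadingCoeff)
    (h : ∀ x : ℂ, 0 < x.im → ∀ s : ℝ, 0 ≤ s → s ≤ 1 →
      (s : ℂ) * aeval x p + (1 - s) * aeval x q ≠ 0)
    (s α : ℝ) (hs0 : 0 ≤ s) (hs1 : s ≤ 1)
    (hpos : ∀ x, α ≤ x → 0 < s * p.eval x + (1 - s) * q.eval x) :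
    (∀ x, α ≤ x → 0 < p.eval x) ∨ (∀ x, α ≤ x → 0 < q.eval x) := by
  obtain ⟨A, hAc, hA⟩ := exists_real_roots p fun x hx => by
    simpa using h x hx 1 zero_le_one le_rfl
  obtain ⟨B, hBc, hB⟩ := exists_real_roots q fun x hx => by
    simpa using h x hx 0 le_rfl zero_le_one
  have ev : ∀ (p : ℝ[X]) (A : Multiset ℝ),
      (∀ x : ℂ, aeval x p = p.leadingCoeff * (A.map fun a : ℝ => (x - a : ℂ)).prod) →
      ∀ x : ℝ, p.eval x = p.leadingCoeff * (A.map fun a => (x - a : ℝ)).prod := by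
    intro p A hA x
    have h1 := hA (x : ℂ)
    have h2 : aeval (x : ℂ) p = ((p.eval x : ℝ) : ℂ) := by
      have := Polynomial.aeval_algebraMap_apply ℂ x p
      simpa using this
    have h3 : (A.map fun a : ℝ => ((x : ℂ) - a : ℂ)).prod
        = (((A.map fun a => (x - a : ℝ)).prod : ℝ) : ℂ) := by
      have := map_multiset_prod Complex.ofRealHom (A.map fun a => (x - a : ℝ))
      simpa [Multiset.map_map, Function.comp_def] using this.symm
    rw [h2, h3] at h1
    exact_mod_cast h1
  have hAr := ev p A hA
  have hBr := ev q B hB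
  have hL' := hlead ▸ hL
  have hmax : ∀ (p : ℝ[X]) (A : Multiset ℝ), 0 < p.leadingCoeff →
      (∀ x : ℝ, p.eval x = p.leadingCoeff * (A.map fun a => (x - a : ℝ)).prod) →
      (¬ ∀ x, α ≤ x → 0 < p.eval x) →
      ∃ a ∈ A, α ≤ a ∧ (∀ c ∈ A, c ≤ a) ∧ p.eval a = 0 := by
    intro p A hL hA hn
    have hex : ∃ a ∈ A, α ≤ a := by
      by_contra! hcon
      refine hn fun x hx => ?_
      rw [hA]
      refine mul_pos hL (Multiset.prod_pos ?_)
      intro d hd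
      obtain ⟨c, hc, rfl⟩ := Multiset.mem_map.1 hd
      linarith [hcon c hc]
    obtain ⟨a0, ha0, hα⟩ := hex
    obtain ⟨a, ha, hamax⟩ := A.toFinset.exists_max_image id ⟨a0, by simpa using ha0⟩
    have ha' : a ∈ A := by simpa using ha
    refine ⟨a, ha', hα.trans (hamax a0 (by simpa using ha0)), fun c hc => hamax c (by simpa using hc), ?_⟩
    rw [hA, Multiset.prod_eq_zero (Multiset.mem_map.2 ⟨a, ha', sub_self a⟩), mul_zero]
  have hh : ∀ x : ℂ, 0 < x.im → ∀ s : ℝ, 0 ≤ s → s ≤ 1 →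
      (s : ℂ) * (A.map fun a : ℝ => (x - a : ℂ)).prod
        + (1 - s) * (B.map fun a : ℝ => (x - a : ℂ)).prod ≠ 0 := by
    intro x hx s h0 h1 he
    refine h x hx s h0 h1 ?_
    rw [hA, hB, ← hlead]
    linear_combination (p.leadingCoeff : ℂ) * he
  by_contra! hcon
  obtain ⟨hp, hq⟩ := hcon
  obtain ⟨a, haA, hαa, hamax, hpa⟩ := hmax p A hL hAr (by push Not; exact hp)
  obtain ⟨b, hbB, hαb, hbmax, hqb⟩ := hmax q B hL' hBr (by push Not; exact hq)
  have ha := hpos a hαa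
  have hb := hpos b hαb
  rw [hpa] at ha
  rw [hqb] at hb
  rcases lt_trichotomy a b with hab | hab | hab
  · refine root_count_contra A B (by omega) a b hamax hbB hab ?_ hh
    have : 0 < q.eval a := by nlinarith
    rw [hBr] at this
    exact (mul_pos_iff_of_pos_left hL').1 this
  · rw [hab, hqb] at ha; simp at ha
  · refine root_count_contra B A (by omega) b a hbmax haA hab ?_ fun x hx s h0 h1 he => ?_
    · have : 0 < p.eval b := by nlinarith
      rw [hAr] at this
      exact (mul_pos_iff_of_pos_left hL).1 this
    · refine hh x hx (1 - s) (by linarith) (by linarith) ?_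
      push_cast
      linear_combination he

end Interlacing

/-! ### The determinantal pencil -/

section Pencil
set_option linter.unusedSectionVars false
open scoped ComplexOrder MatrixOrder
variable {ι N : Type*} [DecidableEq ι] [Fintype ι] [DecidableEq N] [Fintype N]

/-- The determinant of `x M + ∑ zᵢ wᵢ wᵢᵀ`, as a function of `x` and the coefficients `z`. -/
def pencil {R : Type*} [CommRing R] (M : Matrix N N R) (w : ι → N → R) (x : R) (z : ι → R) : R :=
  (x • M + ∑ i, z i • vecMulVec (w i) (w i)).det

lemma pencil_map {R S : Type*} [CommRing R] [CommRing S] (f : R →+* S) (M : Matrix N N R)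
    (w : ι → N → R) (x : R) (z : ι → R) :
    f (pencil M w x z) = pencil (M.map f) (fun i j => f (w i j)) (f x) (fun i => f (z i)) := by
  unfold pencil
  rw [RingHom.map_det]
  congr 1
  ext a b
  simp [Matrix.sum_apply, vecMulVec_apply]

lemma det_add_smul_vecMulVec {R : Type*} [CommRing R] (A : Matrix N N R) (u : N → R) (s : R) :
    (A + s • vecMulVec u u).det = A.det + s * ((A + vecMulVec u u).det - A.det) := by
  -- By a Schur complement the determinant equals one of a bordered matrix whose last row is affine
  -- in `t`.
  have key : ∀ t : R, (A + t • vecMulVec u u).det =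
      t * ((fromBlocks A (of fun i (_ : Unit) => -u i) 0 1).updateRow (Sum.inr ())
        (Sum.elim u 0)).det +
      ((fromBlocks A (of fun i (_ : Unit) => -u i) 0 1).updateRow (Sum.inr ())
        (Sum.elim 0 1)).det := by
    intro t
    rw [← det_updateRow_smul, ← det_updateRow_add]
    have h := det_fromBlocks_one₂₂ A (of fun i (_ : Unit) => -u i) (of fun (_ : Unit) j => t * u j)
    have e1 : A - (of fun i (_ : Unit) => -u i) * (of fun (_ : Unit) j => t * u j) =
        A + t • vecMulVec u u := by
      ext i j
      simp [Matrix.mul_apply, vecMulVec_apply]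
      ring
    rw [e1] at h
    rw [← h]
    congr 1
    ext i j
    rcases i with i | i <;> rcases j with j | j <;> simp [updateRow_apply]
  have h0 := key 0
  have h1 := key 1
  simp only [zero_smul, add_zero, zero_mul, zero_add, one_smul, one_mul] at h0 h1
  rw [key s, h1, h0]
  ring

lemma pencil_add_single {R : Type*} [CommRing R] (M : Matrix N N R) (w : ι → N → R) (x : R)
    (z : ι → R) (i : ι) (s : R) :
    pencil M w x (z + Pi.single i s) =
      ((x • M + ∑ i, z i • vecMulVec (w i) (w i)) + s • vecMulVec (w i) (w i)).det := by
  unfold pencil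
  congr 1
  rw [add_assoc]
  congr 1
  simp only [Pi.add_apply, add_smul, Finset.sum_add_distrib]
  congr 1
  rw [Finset.sum_eq_single i]
  · simp
  · intro j _ hj
    simp [Pi.single_eq_of_ne hj]
  · simp

lemma pencil_affine {K : Type*} [Field K] (M : Matrix N N K) (w : ι → N → K) (x : K) :
    Affine (pencil M w x) := by
  intro z i s
  rw [pencil_add_single, pencil_add_single, det_add_smul_vecMulVec, one_smul]
  rfl

lemma posDef_map {M : Matrix N N ℝ} (hM : M.PosDef) :
    (M.map (Complex.ofRealHom : ℝ → ℂ)).PosDef := by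
  have hdet := hM.det_pos
  have hps : (M.map (Complex.ofRealHom : ℝ → ℂ)).PosSemidef := by
    obtain ⟨B, hB⟩ := CStarAlgebra.nonneg_iff_eq_star_mul_self.mp hM.posSemidef.nonneg
    have : M.map (Complex.ofRealHom : ℝ → ℂ) = (B.map (Complex.ofRealHom : ℝ → ℂ))ᴴ *
        (B.map (Complex.ofRealHom : ℝ → ℂ)) := by
      ext i j
      rw [hB]
      simp [Matrix.mul_apply, star_eq_conjTranspose]
    rw [this]
    exact posSemidef_conjTranspose_mul_self _
  rw [hps.posDef_iff_det_ne_zero]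
  have := (RingHom.map_det Complex.ofRealHom M)
  rw [RingHom.mapMatrix_apply] at this
  rw [← this]
  simpa using hdet.ne'

/-- A null vector `y` of the matrix would give `x · y*My + ∑ zᵢ |wᵢᵀy|² = 0`, whose imaginary part is
positive. -/
lemma pencil_nonVan {M : Matrix N N ℝ} (hM : M.PosDef) (w : ι → N → ℝ) {x : ℂ} (hx : 0 < x.im) :
    NonVan (pencil (M.map (Complex.ofRealHom : ℝ → ℂ)) (fun i j => (w i j : ℂ)) x) := by
  intro z hz h
  obtain ⟨y, hy, hy0⟩ := Matrix.exists_mulVec_eq_zero_iff.mpr h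
  have hp := (posDef_map hM).dotProduct_mulVec_pos hy
  set q := star y ⬝ᵥ (M.map (Complex.ofRealHom : ℝ → ℂ)) *ᵥ y with hq
  have hqre := (Complex.pos_iff.mp hp)
  have h1 : star y ⬝ᵥ ((x • M.map (Complex.ofRealHom : ℝ → ℂ) +
      ∑ i, z i • vecMulVec (fun j => (w i j : ℂ)) (fun j => (w i j : ℂ))) *ᵥ y) =
      x * q + ∑ i, z i * (Complex.normSq ((fun j => (w i j : ℂ)) ⬝ᵥ y) : ℂ) := by
    rw [add_mulVec, dotProduct_add, smul_mulVec, dotProduct_smul, sum_mulVec, dotProduct_sum,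
      smul_eq_mul, hq]
    congr 1
    refine Finset.sum_congr rfl fun i _ => ?_
    rw [smul_mulVec, dotProduct_smul, smul_eq_mul, vecMulVec_mulVec, dotProduct_smul]
    congr 1
    have : star y ⬝ᵥ (fun j => (w i j : ℂ)) = star ((fun j => (w i j : ℂ)) ⬝ᵥ y) := by
      simp [dotProduct, mul_comm]
    rw [this, ← Complex.mul_conj]
    simp [mul_comm]
  rw [hy0, dotProduct_zero] at h1
  have h2 := congrArg Complex.im h1
  have hqre' : 0 < q.re := hqre.1
  have hqim : q.im = 0 := hqre.2.symm
  simp only [Complex.zero_im, Complex.add_im, Complex.im_sum, Complex.mul_im, Complex.ofReal_re,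
    Complex.ofReal_im, mul_zero, zero_add, hqim] at h2
  have : 0 ≤ ∑ i, (z i).im * Complex.normSq ((fun j => (w i j : ℂ)) ⬝ᵥ y) :=
    Finset.sum_nonneg fun i _ => mul_nonneg (hz i) (Complex.normSq_nonneg _)
  nlinarith [mul_pos hx hqre']

lemma pairing_nonVan {F : (ι → ℂ) → ℂ} (hF : NonVan F) (ξ : ι → ℝ) :
    NonVan (pairing F (fun i => (ξ i : ℂ))) := by
  intro z hz
  exact mul_ne_zero (hF _ (by simpa using hz)) (hF _ (by simpa using hz))

lemma pairing_lifts {Fc : (ι → ℂ) → ℂ} {Fr : (ι → ℝ) → ℝ} (h : Lifts Fc Fr) (ξ : ι → ℝ) :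
    Lifts (pairing Fc (fun i => (ξ i : ℂ))) (pairing Fr ξ) := by
  intro z
  unfold pairing
  have h1 := h (z - ξ)
  have h2 := h (z + ξ)
  push_cast [← h1, ← h2]
  congr 2 <;> (ext; simp)

lemma pencil_lifts (M : Matrix N N ℝ) (w : ι → N → ℝ) (x : ℝ) :
    Lifts (pencil (M.map (Complex.ofRealHom : ℝ → ℂ)) (fun i j => (w i j : ℂ)) x)
      (pencil M w x) := by
  intro z
  exact (pencil_map Complex.ofRealHom M w x z).symm

end Pencil

/-! ### Positivity of the expected polynomial -/

section Barrier2
set_option linter.unusedSectionVars false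
variable {ι N : Type*} [DecidableEq ι] [Fintype ι] [DecidableEq N] [Fintype N]

lemma continuous_ops {X : Type*} [TopologicalSpace X] {G : X → (ι → ℂ) → ℂ}
    (hG : ∀ z, Continuous fun x => G x z) (v : ι → ℂ) (l : List ι) (z : ι → ℂ) :
    Continuous fun x => ops v l (G x) z := by
  induction l generalizing z with
  | nil => exact hG z
  | cons i l ih =>
    change Continuous fun x => op (v i) i (ops v l (G x)) z
    unfold op d2
    have h1 := ih z
    have h2 := ih (z + Pi.single i 1)
    have h3 := ih (z - Pi.single i 1)
    fun_prop

lemma continuous_pencil (M : Matrix N N ℂ) (w : ι → N → ℂ) (z : ι → ℂ) :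
    Continuous fun x => pencil M w x z := by
  unfold pencil
  apply Continuous.matrix_det
  fun_prop

lemma ops_pencil_nonVan {M : Matrix N N ℝ} (hM : M.PosDef) (w : ι → N → ℝ) {v : ι → ℝ}
    (hv : ∀ i, 0 ≤ v i) (l : List ι) (ξ : ι → ℝ) {x : ℂ} (hx : 0 < x.im) :
    NonVan (ops (fun i => (v i : ℂ)) l (pairing (pencil (M.map (Complex.ofRealHom : ℝ → ℂ))
      (fun i j => (w i j : ℂ)) x) (fun i => (ξ i : ℂ)))) :=
  (pairing_nonVan (pencil_nonVan hM w hx) ξ).ops ((pencil_affine _ _ _).quad_pairing _) hv l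

lemma ops_pencil_lifts (M : Matrix N N ℝ) (w : ι → N → ℝ) (v : ι → ℝ) (l : List ι) (ξ : ι → ℝ)
    (x : ℝ) :
    Lifts (ops (fun i => (v i : ℂ)) l (pairing (pencil (M.map (Complex.ofRealHom : ℝ → ℂ))
      (fun i j => (w i j : ℂ)) x) (fun i => (ξ i : ℂ)))) (ops v l (pairing (pencil M w x) ξ)) :=
  (pairing_lifts (pencil_lifts M w x) ξ).ops v l

/-- The Rayleigh inequality at real `x`, where the determinant may have real zeros: it is inherited
from `x + iη` with `η → 0⁺`. -/
lemma rayleigh_ops {M : Matrix N N ℝ} (hM : M.PosDef) (w : ι → N → ℝ) {v : ι → ℝ}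
    (hv : ∀ i, 0 ≤ v i) (l : List ι) (ξ : ι → ℝ) (x : ℝ) (z : ι → ℝ) (i j : ι) :
    ops v l (pairing (pencil M w x) ξ) z * d1 j (d1 i (ops v l (pairing (pencil M w x) ξ))) z ≤
      d1 i (ops v l (pairing (pencil M w x) ξ)) z *
        d1 j (ops v l (pairing (pencil M w x) ξ)) z := by
  refine rayleigh (ops_pencil_lifts M w v l ξ x)
    (((pencil_affine _ _ _).quad_pairing _).ops _ _) ?_ z i j
  intro z hz i
  set G : ℂ → (ι → ℂ) → ℂ := fun x => ops (fun i => (v i : ℂ)) l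
    (pairing (pencil (M.map (Complex.ofRealHom : ℝ → ℂ)) (fun i j => (w i j : ℂ)) x)
      (fun i => (ξ i : ℂ))) with hG
  have hc : ∀ z, Continuous fun x => G x z := by
    intro z
    refine continuous_ops (fun z => ?_) _ _ _
    exact (continuous_pencil _ _ _).mul (continuous_pencil _ _ _)
  have hcont : Continuous fun η : ℝ => (d1 i (G (x + η * Complex.I)) z *
      (starRingEnd ℂ) (G (x + η * Complex.I) z)).im := by
    unfold d1
    have h0 : Continuous fun η : ℝ => (x + η * Complex.I : ℂ) := by fun_prop
    have h1 := (hc z).comp h0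
    have h2 := (hc (z + Pi.single i 1)).comp h0
    have h3 := (hc (z - Pi.single i 1)).comp h0
    have h4 := Complex.continuous_conj.comp h1
    exact Complex.continuous_im.comp (((h2.sub h3).div_const 2).mul h4)
  have hlim := (hcont.tendsto 0).mono_left (nhdsWithin_le_nhds (s := Set.Ioi 0))
  have := le_of_tendsto hlim (b := 0) (by
    filter_upwards [self_mem_nhdsWithin] with η hη
    have hη' : (0 : ℝ) < η := hη
    exact (ops_pencil_nonVan hM w hv l ξ (by simpa using hη')).im_le
      (((pencil_affine _ _ _).quad_pairing _).ops _ _) hz i)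
  simpa using this

lemma Inv.ops {v δ : ι → ℝ} (hv : ∀ i, 0 ≤ v i) {F : (ι → ℝ) → ℝ} {z₀ : ι → ℝ}
    (hI : Inv v δ F z₀) (hq : Quad F)
    (hR : ∀ l z i j, ops v l F z * d1 j (d1 i (ops v l F)) z ≤
      d1 i (ops v l F) z * d1 j (ops v l F) z) (l : List ι) :
    Inv v δ (ops v l F) (z₀ + (l.map fun i => Pi.single i (δ i)).sum) := by
  induction l with
  | nil => simpa [SpectralRounding.ops] using hI
  | cons i l ih =>
    have := Inv.op hv ih (hq.ops v l) (hR l) i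
    rw [add_right_comm, add_assoc] at this
    exact this

lemma form_vecMulVec (u y : N → ℝ) : y ⬝ᵥ vecMulVec u u *ᵥ y = (u ⬝ᵥ y) ^ 2 := by
  rw [vecMulVec_mulVec, dotProduct_smul]
  simp [dotProduct_comm y u, sq]

lemma form_sum (z : ι → ℝ) (w : ι → N → ℝ) (y : N → ℝ) :
    y ⬝ᵥ (∑ i, z i • vecMulVec (w i) (w i)) *ᵥ y = ∑ i, z i * (w i ⬝ᵥ y) ^ 2 := by
  rw [sum_mulVec, dotProduct_sum]
  refine Finset.sum_congr rfl fun i _ => ?_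
  rw [smul_mulVec, dotProduct_smul, form_vecMulVec, smul_eq_mul]

lemma isHermitian_vecMulVec (u : N → ℝ) : (vecMulVec u u).IsHermitian := by
  ext i j
  simp [vecMulVec_apply, mul_comm]

lemma isHermitian_sum (z : ι → ℝ) (w : ι → N → ℝ) :
    (∑ i, z i • vecMulVec (w i) (w i)).IsHermitian := by
  ext i j
  simp [Matrix.sum_apply, vecMulVec_apply, mul_comm]

/-- The barrier invariant before any operator is applied. With `z ≥ -δ` and `t ≥ 8ε` the matrix
`N = t M + ∑ zᵢ wᵢ wᵢᵀ` dominates `4ε M`, hence also `(2/ε) wⱼ wⱼᵀ`. So `N - (2/ε) wⱼ wⱼᵀ` has nonnegative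
determinant, which bounds the logarithmic derivative of `det N` in the direction `j` by `ε/2`. -/
lemma base_inv {M : Matrix N N ℝ} (hM : M.PosDef) {w : ι → N → ℝ} {x : ι → ℝ} {ε : ℝ}
    (hε : 0 < ε) (hx : ∀ i, 0 ≤ x i ∧ x i ≤ 1)
    (H1 : ∀ i y, (w i ⬝ᵥ y) ^ 2 ≤ 2 * ε ^ 2 * (y ⬝ᵥ M *ᵥ y))
    (H2 : ∀ y, ∑ i, x i * (w i ⬝ᵥ y) ^ 2 ≤ 2 * (y ⬝ᵥ M *ᵥ y)) {t : ℝ} (ht : 8 * ε ≤ t) :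
    Inv (fun i => x i * (1 - x i)) (fun i => 2 * ε * (x i * (1 - x i)))
      (pairing (pencil M w t) 0) (-fun i => 2 * ε * (x i * (1 - x i))) := by
  intro z hz
  have hform : ∀ y, 4 * ε * (y ⬝ᵥ M *ᵥ y) ≤ y ⬝ᵥ (t • M + ∑ i, z i • vecMulVec (w i) (w i)) *ᵥ y := by
    intro y
    have hQ : 0 ≤ y ⬝ᵥ M *ᵥ y := hM.posSemidef.dotProduct_mulVec_nonneg y
    rw [add_mulVec, dotProduct_add, form_sum, smul_mulVec, dotProduct_smul, smul_eq_mul]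
    have : -(2 * ε) * ∑ i, x i * (w i ⬝ᵥ y) ^ 2 ≤ ∑ i, z i * (w i ⬝ᵥ y) ^ 2 := by
      rw [Finset.mul_sum]
      refine Finset.sum_le_sum fun i _ => ?_
      rw [← mul_assoc]
      refine mul_le_mul_of_nonneg_right ?_ (sq_nonneg _)
      have h1 := hz i
      simp only [Pi.neg_apply] at h1
      nlinarith [hx i, mul_nonneg (mul_nonneg hε.le (hx i).1) (hx i).1]
    nlinarith [H2 y, mul_le_mul_of_nonneg_right ht hQ]
  have hherm : (t • M + ∑ i, z i • vecMulVec (w i) (w i)).IsHermitian :=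
    (hM.isHermitian.smul (by simp [IsSelfAdjoint])).add (isHermitian_sum z w)
  have hpd : (t • M + ∑ i, z i • vecMulVec (w i) (w i)).PosDef := by
    refine PosDef.of_dotProduct_mulVec_pos hherm fun y hy => ?_
    have h1 : 0 < y ⬝ᵥ M *ᵥ y := hM.dotProduct_mulVec_pos hy
    have := hform y
    exact lt_of_lt_of_le (by positivity) this
  have hP : 0 < pencil M w t z := hpd.det_pos
  have hpair : ∀ z, pairing (pencil M w t) 0 z = pencil M w t z ^ 2 := by
    intro z; simp [pairing, sq]
  refine ⟨by rw [hpair]; positivity, fun j => ?_⟩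
  have hps : ((t • M + ∑ i, z i • vecMulVec (w i) (w i)) +
      (-(2 / ε)) • vecMulVec (w j) (w j)).PosSemidef := by
    refine PosSemidef.of_dotProduct_mulVec_nonneg
      (hherm.add ((isHermitian_vecMulVec _).smul (by simp [IsSelfAdjoint]))) fun y => ?_
    change 0 ≤ y ⬝ᵥ _
    rw [add_mulVec, dotProduct_add, smul_mulVec (-(2 / ε)), dotProduct_smul, form_vecMulVec,
      smul_eq_mul]
    have h1 := mul_le_mul_of_nonneg_left (H1 j y) (by positivity : 0 ≤ 2 / ε)
    have h2 : 2 / ε * (2 * ε ^ 2 * (y ⬝ᵥ M *ᵥ y)) = 4 * ε * (y ⬝ᵥ M *ᵥ y) := by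
      field_simp; ring
    linarith [hform y]
  have hdet := hps.det_nonneg
  rw [← pencil_add_single] at hdet
  have haff := pencil_affine M w t
  have e1 := haff z j (-(2 / ε))
  have e2 := haff.sub z j 1
  set g := pencil M w t (z + Pi.single j 1) - pencil M w t z with hg
  have hplus : pencil M w t (z + Pi.single j 1) = pencil M w t z + g := by rw [hg]; ring
  have hd : d1 j (pairing (pencil M w t) 0) z = 2 * pencil M w t z * g := by
    simp only [d1, hpair, hplus, e2]
    ring
  rw [hd, hpair]
  have hgP : g ≤ ε * pencil M w t z := by
    rw [e1] at hdet
    have : 2 / ε * g ≤ pencil M w t z := by linarith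
    rw [div_mul_eq_mul_div, div_le_iff₀ hε] at this
    nlinarith
  have hv : 0 ≤ x j * (1 - x j) := mul_nonneg (hx j).1 (by linarith [(hx j).2])
  have := mul_le_mul_of_nonneg_left hgP (mul_nonneg hv hP.le)
  nlinarith

/-- The expected polynomial is positive on `[8ε, ∞)`: the shifts `δ` made by all operators together
bring the base point from `-δ` to `0`. -/
lemma ops_base_pos {M : Matrix N N ℝ} (hM : M.PosDef) {w : ι → N → ℝ} {x : ι → ℝ} {ε : ℝ}
    (hε : 0 < ε) (hx : ∀ i, 0 ≤ x i ∧ x i ≤ 1)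
    (H1 : ∀ i y, (w i ⬝ᵥ y) ^ 2 ≤ 2 * ε ^ 2 * (y ⬝ᵥ M *ᵥ y))
    (H2 : ∀ y, ∑ i, x i * (w i ⬝ᵥ y) ^ 2 ≤ 2 * (y ⬝ᵥ M *ᵥ y)) {t : ℝ} (ht : 8 * ε ≤ t) :
    0 < ops (fun i => x i * (1 - x i)) Finset.univ.toList (pairing (pencil M w t) 0) 0 := by
  have hv : ∀ i, 0 ≤ x i * (1 - x i) := fun i => mul_nonneg (hx i).1 (by linarith [(hx i).2])
  have := Inv.ops hv (base_inv hM hε hx H1 H2 ht) ((pencil_affine _ _ _).quad_pairing _)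
    (fun l => rayleigh_ops hM w hv l 0 t) Finset.univ.toList
  refine (this 0 ?_).1
  rw [Finset.sum_map_toList, Finset.univ_sum_single]
  simp

end Barrier2

/-! ### Selecting a good outcome -/

section Selection
set_option linter.unusedSectionVars false
open scoped MatrixOrder
variable {ι N : Type*} [DecidableEq ι] [Fintype ι] [DecidableEq N] [Fintype N]

open Polynomial in
lemma exists_poly_pencil (M : Matrix N N ℝ) (w : ι → N → ℝ) (z : ι → ℝ) :
    ∃ p : ℝ[X], p.natDegree ≤ Fintype.card N ∧ p.coeff (Fintype.card N) = M.det ∧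
      ∀ x : ℂ, aeval x p = pencil (M.map (Complex.ofRealHom : ℝ → ℂ))
        (fun i j => (w i j : ℂ)) x (fun i => (z i : ℂ)) := by
  refine ⟨_, natDegree_det_X_add_C_le M (∑ i, z i • vecMulVec (w i) (w i)),
    coeff_det_X_add_C_card M _, fun x => ?_⟩
  rw [AlgHom.map_det, pencil]
  congr 1
  ext a b
  simp [Matrix.sum_apply, vecMulVec_apply, mul_comm x]

open Polynomial in
/-- As a function of `x`, the value at a real point is a polynomial of degree at most `2 |N|`,
whose coefficient in that degree is `(det M)²`, independently of the shift `ξ`. -/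
lemma exists_poly_ops (M : Matrix N N ℝ) (w : ι → N → ℝ) (v : ι → ℝ) (l : List ι)
    (ξ z : ι → ℝ) :
    ∃ p : ℝ[X], p.natDegree ≤ Fintype.card N + Fintype.card N ∧
      p.coeff (Fintype.card N + Fintype.card N) = M.det * M.det ∧
      ∀ x : ℂ, aeval x p = ops (fun i => (v i : ℂ)) l
        (pairing (pencil (M.map (Complex.ofRealHom : ℝ → ℂ)) (fun i j => (w i j : ℂ)) x)
          (fun i => (ξ i : ℂ))) (fun i => (z i : ℂ)) := by
  induction l generalizing z with
  | nil =>
    obtain ⟨p, hp1, hp2, hp3⟩ := exists_poly_pencil M w (z - ξ)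
    obtain ⟨q, hq1, hq2, hq3⟩ := exists_poly_pencil M w (z + ξ)
    refine ⟨p * q, natDegree_mul_le_of_le hp1 hq1, ?_, fun x => ?_⟩
    · rw [coeff_mul_add_eq_of_natDegree_le hp1 hq1, hp2, hq2]
    · rw [map_mul, hp3, hq3]
      change _ = pairing _ _ _
      unfold pairing
      congr 2 <;> (ext; simp)
  | cons i l ih =>
    obtain ⟨p, hp1, hp2, hp3⟩ := ih z
    obtain ⟨q, hq1, hq2, hq3⟩ := ih (z + Pi.single i 1)
    obtain ⟨r, hr1, hr2, hr3⟩ := ih (z - Pi.single i 1)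
    refine ⟨C (1 + v i) * p + (C (-(v i / 2)) * q + C (-(v i / 2)) * r), ?_, ?_, fun x => ?_⟩
    · refine natDegree_add_le_of_degree_le ((natDegree_C_mul_le _ _).trans hp1)
        (natDegree_add_le_of_degree_le ((natDegree_C_mul_le _ _).trans hq1)
          ((natDegree_C_mul_le _ _).trans hr1))
    · simp only [coeff_add, coeff_C_mul, hp2, hq2, hr2]
      ring
    · have c1 : (fun j => (((z + Pi.single i 1 : ι → ℝ) j : ℝ) : ℂ)) =
          (fun j => (z j : ℂ)) + Pi.single i 1 := by
        ext j
        by_cases h : j = i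
        · subst h; simp
        · simp [Pi.single_eq_of_ne h]
      have c2 : (fun j => (((z - Pi.single i 1 : ι → ℝ) j : ℝ) : ℂ)) =
          (fun j => (z j : ℂ)) - Pi.single i 1 := by
        ext j
        by_cases h : j = i
        · subst h; simp
        · simp [Pi.single_eq_of_ne h]
      change _ = op _ i (ops _ l _) _
      rw [c1] at hq3
      rw [c2] at hr3
      simp only [map_add, map_mul, aeval_C, hp3, hq3, hr3, op, d2]
      simp
      ring

lemma cast_add_single (ξ : ι → ℝ) (i : ι) (t : ℝ) :
    (fun j => (((ξ + Pi.single i t : ι → ℝ) j : ℝ) : ℂ)) =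
      (fun j => (ξ j : ℂ)) + Pi.single i (t : ℂ) := by
  ext j
  by_cases h : j = i
  · subst h; simp
  · simp [Pi.single_eq_of_ne h]

lemma ops_op_pairing {K : Type*} [Field K] [CharZero K] {F : (ι → K) → K} (h : Affine F)
    (v : ι → K) (l : List ι) (ξ : ι → K) (i : ι) (s t₁ t₂ : K) :
    op (s * (1 - s) * (t₁ - t₂) ^ 2) i
      (ops v l (pairing F (ξ + Pi.single i (s * t₁ + (1 - s) * t₂)))) =
      fun z => s * ops v l (pairing F (ξ + Pi.single i t₁)) z +
        (1 - s) * ops v l (pairing F (ξ + Pi.single i t₂)) z := by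
  rw [op_ops, h.op_pairing, ops_lin]

/-- Fixing one coordinate of the random shift: if the expected polynomial is positive on `[α, ∞)`, so
is one of the two conditional expectations. All convex combinations of these two are free of zeros
in the upper half-plane, being themselves obtained by an operator `op`. -/
lemma select_one {M : Matrix N N ℝ} (hM : M.PosDef) (w : ι → N → ℝ) {v : ι → ℝ}
    (hv : ∀ i, 0 ≤ v i) (l : List ι) (ξ : ι → ℝ) (i : ι) {s t₁ t₂ α : ℝ} (hs0 : 0 ≤ s)
    (hs1 : s ≤ 1) (hmean : s * t₁ + (1 - s) * t₂ = 0) (hvar : v i = s * (1 - s) * (t₁ - t₂) ^ 2)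
    (hpos : ∀ t, α ≤ t → 0 < ops v (i :: l) (pairing (pencil M w t) ξ) 0) :
    (∀ t, α ≤ t → 0 < ops v l (pairing (pencil M w t) (ξ + Pi.single i t₁)) 0) ∨
    (∀ t, α ≤ t → 0 < ops v l (pairing (pencil M w t) (ξ + Pi.single i t₂)) 0) := by
  obtain ⟨p, hp1, hp2, hp3⟩ := exists_poly_ops M w v l (ξ + Pi.single i t₁) 0
  obtain ⟨q, hq1, hq2, hq3⟩ := exists_poly_ops M w v l (ξ + Pi.single i t₂) 0
  have hD : 0 < M.det * M.det := mul_pos hM.det_pos hM.det_pos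
  have hpd : p.natDegree = Fintype.card N + Fintype.card N :=
    Polynomial.natDegree_eq_of_le_of_coeff_ne_zero hp1 (by rw [hp2]; exact hD.ne')
  have hqd : q.natDegree = Fintype.card N + Fintype.card N :=
    Polynomial.natDegree_eq_of_le_of_coeff_ne_zero hq1 (by rw [hq2]; exact hD.ne')
  have hpl : p.leadingCoeff = M.det * M.det := by rw [Polynomial.leadingCoeff, hpd, hp2]
  have hql : q.leadingCoeff = M.det * M.det := by rw [Polynomial.leadingCoeff, hqd, hq2]
  have real_eval : ∀ (r : Polynomial ℝ) (ξ' : ι → ℝ), (∀ x : ℂ, Polynomial.aeval x r =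
      ops (fun i => (v i : ℂ)) l
        (pairing (pencil (M.map (Complex.ofRealHom : ℝ → ℂ)) (fun i j => (w i j : ℂ)) x)
          (fun i => (ξ' i : ℂ))) (fun i => (((0 : ι → ℝ) i : ℝ) : ℂ))) →
      ∀ t : ℝ, r.eval t = ops v l (pairing (pencil M w t) ξ') 0 := by
    intro r ξ' hr t
    have h1 := hr t
    rw [ops_pencil_lifts M w v l ξ' t 0] at h1
    have h2 : Polynomial.aeval (t : ℂ) r = ((r.eval t : ℝ) : ℂ) := by
      have := Polynomial.aeval_algebraMap_apply ℂ t r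
      simpa using this
    rw [h2] at h1
    exact_mod_cast h1
  have hpe := real_eval p _ hp3
  have hqe := real_eval q _ hq3
  have hmix : ∀ x : ℂ, 0 < x.im → ∀ s : ℝ, 0 ≤ s → s ≤ 1 →
      (s : ℂ) * Polynomial.aeval x p + (1 - s) * Polynomial.aeval x q ≠ 0 := by
    intro x hx s hs0 hs1
    have h := congrFun (ops_op_pairing (pencil_affine (M.map (Complex.ofRealHom : ℝ → ℂ))
      (fun i j => (w i j : ℂ)) x) (fun i => (v i : ℂ)) l (fun i => (ξ i : ℂ)) i (s : ℂ) t₁ t₂)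
      (fun i => (((0 : ι → ℝ) i : ℝ) : ℂ))
    rw [hp3, hq3, cast_add_single, cast_add_single, ← h]
    have h2 := (ops_pencil_nonVan hM w hv l
      (ξ + Pi.single i (s * t₁ + (1 - s) * t₂)) hx).op
        (((pencil_affine _ _ _).quad_pairing _).ops _ _) i
        (v := s * (1 - s) * (t₁ - t₂) ^ 2)
        (mul_nonneg (mul_nonneg hs0 (by linarith)) (sq_nonneg _))
    rw [cast_add_single] at h2
    have h3 := h2 (fun i => (((0 : ι → ℝ) i : ℝ) : ℂ)) (by simp)
    push_cast at h3 ⊢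
    exact h3
  have key := exists_pos_of_mix p q (hpd.trans hqd.symm) (hpl.trans hql.symm) (by rw [hpl]; exact hD)
    hmix s α hs0 hs1 (by
      intro t ht
      have h1 := hpos t ht
      have h2 := congrFun (ops_op_pairing (pencil_affine M w t) v l ξ i s t₁ t₂) 0
      rw [hmean, ← hvar, Pi.single_zero, add_zero] at h2
      rw [hpe, hqe, ← h2]
      exact h1)
  simpa only [hpe, hqe] using key

lemma select_all {M : Matrix N N ℝ} (hM : M.PosDef) (w : ι → N → ℝ) {x : ι → ℝ}
    (hx : ∀ i, 0 ≤ x i ∧ x i ≤ 1) {α : ℝ} (l : List ι) (hl : l.Nodup) (ξ : ι → ℝ)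
    (hpos : ∀ t, α ≤ t → 0 < ops (fun i => x i * (1 - x i)) l (pairing (pencil M w t) ξ) 0) :
    ∃ ξ' : ι → ℝ, (∀ i ∈ l, ξ' i = ξ i - x i ∨ ξ' i = ξ i + (1 - x i)) ∧
      (∀ i ∉ l, ξ' i = ξ i) ∧ ∀ t, α ≤ t → 0 < pairing (pencil M w t) ξ' 0 := by
  induction l generalizing ξ with
  | nil => exact ⟨ξ, by simp, by simp, hpos⟩
  | cons i l ih =>
    have hv : ∀ i, 0 ≤ x i * (1 - x i) := fun i => mul_nonneg (hx i).1 (by linarith [(hx i).2])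
    rw [List.nodup_cons] at hl
    have hsel := select_one hM w hv l ξ i (s := x i) (t₁ := 1 - x i) (t₂ := -x i) (hx i).1
      (hx i).2 (by ring) (by ring) hpos
    have finish : ∀ t₀, (t₀ = 1 - x i ∨ t₀ = -x i) →
        (∀ t, α ≤ t → 0 < ops (fun i => x i * (1 - x i)) l
          (pairing (pencil M w t) (ξ + Pi.single i t₀)) 0) →
        ∃ ξ' : ι → ℝ, (∀ j ∈ i :: l, ξ' j = ξ j - x j ∨ ξ' j = ξ j + (1 - x j)) ∧
          (∀ j ∉ i :: l, ξ' j = ξ j) ∧ ∀ t, α ≤ t → 0 < pairing (pencil M w t) ξ' 0 := by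
      intro t₀ ht₀ h
      obtain ⟨ξ', h1, h2, h3⟩ := ih hl.2 _ h
      refine ⟨ξ', fun j hj => ?_, fun j hj => ?_, h3⟩
      · rcases List.mem_cons.mp hj with rfl | hj
        · rw [h2 _ hl.1]
          rcases ht₀ with rfl | rfl
          · right; simp
          · left; simp [sub_eq_add_neg]
        · have hne : j ≠ i := fun e => hl.1 (e ▸ hj)
          simpa [Pi.single_eq_of_ne hne] using h1 j hj
      · rw [List.mem_cons, not_or] at hj
        rw [h2 j hj.2]
        simp [Pi.single_eq_of_ne hj.1]
    rcases hsel with h | h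
    · exact finish _ (Or.inl rfl) h
    · exact finish _ (Or.inr rfl) h

/-- If the determinant of `t M + S` does not vanish for `t ≥ α`, then no generalized eigenvalue of `-S`
relative to `M` exceeds `α`. -/
lemma posSemidef_of_det_ne {M S : Matrix N N ℝ} (hM : M.PosDef) (hS : S.IsHermitian) {α : ℝ}
    (h : ∀ t, α ≤ t → (t • M + S).det ≠ 0) : (α • M + S).PosSemidef := by
  obtain ⟨B, hB⟩ := CStarAlgebra.nonneg_iff_eq_star_mul_self.mp hM.posSemidef.nonneg
  rw [star_eq_conjTranspose] at hB
  have hBdet : IsUnit B.det := by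
    have := hM.det_pos
    rw [hB, det_mul] at this
    exact isUnit_iff_ne_zero.mpr (right_ne_zero_of_mul this.ne')
  have hBH : IsUnit (Bᴴ).det := by rw [det_conjTranspose]; exact hBdet.star
  set T := α • M + S with hT
  have hTh : T.IsHermitian := (hM.isHermitian.smul (by simp [IsSelfAdjoint])).add hS
  set A := (B⁻¹)ᴴ * T * B⁻¹ with hA
  have hAh : A.IsHermitian := isHermitian_conjTranspose_mul_mul _ hTh
  have hTA : T = Bᴴ * A * B := by
    rw [hA, conjTranspose_nonsing_inv]
    rw [Matrix.mul_assoc, Matrix.mul_assoc, Matrix.mul_assoc, nonsing_inv_mul _ hBdet,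
      Matrix.mul_one, ← Matrix.mul_assoc, mul_nonsing_inv _ hBH, Matrix.one_mul]
  have hAps : A.PosSemidef := by
    rw [hAh.posSemidef_iff_eigenvalues_nonneg]
    intro k
    by_contra hneg
    simp only [Pi.zero_apply, not_le] at hneg
    set μ := hAh.eigenvalues k with hμ
    refine h (α - μ) (by linarith) ?_
    have e : (α - μ) • M + S = Bᴴ * (A - μ • 1) * B := by
      rw [Matrix.mul_sub, Matrix.sub_mul, ← hTA, hT]
      simp only [mul_smul_comm, smul_mul_assoc, Matrix.mul_one]
      rw [← hB, sub_smul]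
      abel
    rw [e, det_mul, det_mul]
    have : (A - μ • (1 : Matrix N N ℝ)).det = 0 := by
      rw [← exists_mulVec_eq_zero_iff]
      refine ⟨(hAh.eigenvectorBasis k).ofLp, ?_, ?_⟩
      · intro h0
        have := hAh.eigenvectorBasis.orthonormal.ne_zero k
        exact this (by ext j; exact congrFun h0 j)
      · rw [sub_mulVec, smul_mulVec, one_mulVec, hAh.mulVec_eigenvectorBasis, sub_self]
    rw [this]; ring
  rw [hTA]
  exact hAps.conjTranspose_mul_mul_same B

/-- Discrepancy form of the rounding: `zᵢ` is a `0`/`1` rounding of `xᵢ`, and the signed sum of the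
rank-one matrices `wᵢ wᵢᵀ` with coefficients `z - x` is between `-8ε M` and `8ε M`. -/
theorem two_sided_rounding {M : Matrix N N ℝ} (hM : M.PosDef) {w : ι → N → ℝ} {x : ι → ℝ} {ε : ℝ}
    (hε : 0 < ε) (hx : ∀ i, 0 ≤ x i ∧ x i ≤ 1)
    (H1 : ∀ i y, (w i ⬝ᵥ y) ^ 2 ≤ 2 * ε ^ 2 * (y ⬝ᵥ M *ᵥ y))
    (H2 : ∀ y, ∑ i, x i * (w i ⬝ᵥ y) ^ 2 ≤ 2 * (y ⬝ᵥ M *ᵥ y)) :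
    ∃ z : ι → ℝ, (∀ i, z i = 0 ∨ z i = 1) ∧
      ∀ y, |∑ i, (z i - x i) * (w i ⬝ᵥ y) ^ 2| ≤ 8 * ε * (y ⬝ᵥ M *ᵥ y) := by
  obtain ⟨ξ, h1, -, h3⟩ := select_all hM w hx Finset.univ.toList (Finset.nodup_toList _) 0
    (α := 8 * ε) (fun t ht => ops_base_pos hM hε hx H1 H2 ht)
  refine ⟨ξ + x, fun i => ?_, fun y => ?_⟩
  · rcases h1 i (by simp) with h | h
    · left; simp [h]
    · right; simp [h]
  have side : ∀ ζ : ι → ℝ, (∀ t, 8 * ε ≤ t → pencil M w t ζ ≠ 0) →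
      0 ≤ 8 * ε * (y ⬝ᵥ M *ᵥ y) + ∑ i, ζ i * (w i ⬝ᵥ y) ^ 2 := by
    intro ζ hζ
    have := (posSemidef_of_det_ne hM (isHermitian_sum ζ w) hζ).dotProduct_mulVec_nonneg y
    rw [add_mulVec, dotProduct_add, smul_mulVec, dotProduct_smul, smul_eq_mul] at this
    rw [← form_sum]
    exact this
  have hp := side ξ fun t ht => by
    have := (h3 t ht).ne'
    simp only [pairing, zero_add] at this
    exact right_ne_zero_of_mul this
  have hn := side (-ξ) fun t ht => by
    have := (h3 t ht).ne'
    simp only [pairing, zero_sub] at this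
    exact left_ne_zero_of_mul this
  simp only [Pi.neg_apply, neg_mul, Finset.sum_neg_distrib] at hn
  simp only [Pi.add_apply, add_sub_cancel_right]
  rw [abs_le]
  constructor <;> linarith

end Selection

/-! ### Graph Laplacians with a cost coordinate -/

section Graph

/-- Connectivity, in the form of the rank condition, makes the all-ones vector span the kernel of the
Laplacian. -/
lemma eq_zero_of_rank {n m : ℕ} {b : Fin m → Fin n → ℝ} {x : Fin m → ℝ} (hx : ∀ e, 0 ≤ x e)
    (hb1 : ∀ e, b e ⬝ᵥ (fun _ => (1 : ℝ)) = 0)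
    (hconn : (∑ e, x e • vecMulVec (b e) (b e)).rank = n - 1) {y : Fin n → ℝ}
    (h0 : ∑ e, x e * (b e ⬝ᵥ y) ^ 2 = 0) (h1 : (fun _ => (1 : ℝ)) ⬝ᵥ y = 0) : y = 0 := by
  rcases Nat.eq_zero_or_pos n with rfl | hn
  · exact Subsingleton.elim _ _
  set L := ∑ e, x e • vecMulVec (b e) (b e) with hL
  have hker : ∀ u : Fin n → ℝ, (∀ e, x e * (b e ⬝ᵥ u) = 0) → L *ᵥ u = 0 := by
    intro u hu
    rw [hL, sum_mulVec]
    refine Finset.sum_eq_zero fun e _ => ?_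
    rw [smul_mulVec, vecMulVec_mulVec]
    ext w
    have := hu e
    simp only [Pi.smul_apply, smul_eq_mul, MulOpposite.smul_eq_mul_unop, MulOpposite.unop_op,
      Pi.zero_apply]
    linear_combination b e w * this
  have hy : L *ᵥ y = 0 := by
    refine hker y fun e => ?_
    have := (Finset.sum_eq_zero_iff_of_nonneg
      (fun e _ => mul_nonneg (hx e) (sq_nonneg (b e ⬝ᵥ y)))).mp h0 e (Finset.mem_univ _)
    rcases mul_eq_zero.mp this with h | h
    · simp [h]
    · simp [pow_eq_zero_iff (two_ne_zero) |>.mp h]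
  have hone : L *ᵥ (fun _ => (1 : ℝ)) = 0 := hker _ fun e => by rw [hb1, mul_zero]
  have hdim : Module.finrank ℝ (LinearMap.ker L.mulVecLin) = 1 := by
    have := LinearMap.finrank_range_add_finrank_ker L.mulVecLin
    rw [← Matrix.rank, hconn, Module.finrank_fin_fun] at this
    omega
  have hne : (⟨fun _ => (1 : ℝ), hone⟩ : LinearMap.ker L.mulVecLin) ≠ 0 := by
    intro h
    have := congrFun (congrArg Subtype.val h) ⟨0, hn⟩
    simp at this
  obtain ⟨a, ha⟩ := (finrank_eq_one_iff_of_nonzero' _ hne).mp hdim ⟨y, hy⟩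
  have hya : ∀ w, y w = a := fun w => by
    have := congrFun (congrArg Subtype.val ha) w
    simpa using this.symm
  have ha0 : a = 0 := by
    simp only [dotProduct, hya, one_mul, Finset.sum_const, Finset.card_univ, Fintype.card_fin,
      nsmul_eq_mul] at h1
    rcases mul_eq_zero.mp h1 with h | h
    · exact absurd h (by exact_mod_cast hn.ne')
    · exact h
  ext w
  rw [hya, ha0, Pi.zero_apply]

lemma elim_dotProduct {n : ℕ} (u : Fin n → ℝ) (a : ℝ) (y : Fin n ⊕ Unit → ℝ) :
    Sum.elim u (fun _ => a) ⬝ᵥ y = u ⬝ᵥ (y ∘ Sum.inl) + a * y (Sum.inr ()) := by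
  simp [dotProduct, Fintype.sum_sum_type]

/-- The rounding for Laplacian and cost together. Each edge vector gets the extra coordinate
`√(c e / ⟨c, x⟩)`, and the Laplacian is completed to a positive definite matrix by the all-ones
rank-one matrix and a unit entry for the new coordinate. The factor `2` in the hypotheses of
`two_sided_rounding` absorbs the cross terms between the edge and the cost coordinates. -/
lemma exists_rounding {n m : ℕ} {b : Fin m → Fin n → ℝ} {x c : Fin m → ℝ} {ε : ℝ}
    (hx : ∀ e, 0 ≤ x e ∧ x e ≤ 1) (hc : ∀ e, 0 ≤ c e) (hε : 0 < ε)
    (hb1 : ∀ e, b e ⬝ᵥ (fun _ => (1 : ℝ)) = 0)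
    (hconn : (∑ e, x e • vecMulVec (b e) (b e)).rank = n - 1)
    (hreff : ∀ e y, (b e ⬝ᵥ y) ^ 2 ≤ ε ^ 2 * ∑ e', x e' * (b e' ⬝ᵥ y) ^ 2)
    (hcinf : ∀ e, c e ≤ ε ^ 2 * ∑ e', c e' * x e') :
    ∃ z : Fin m → ℝ, (∀ e, z e = 0 ∨ z e = 1) ∧
      (∀ y, |∑ e, (z e - x e) * (b e ⬝ᵥ y) ^ 2| ≤ 8 * ε * ∑ e, x e * (b e ⬝ᵥ y) ^ 2) ∧
      |∑ e, (z e - x e) * c e| ≤ 8 * ε * ∑ e, c e * x e := by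
  set C := ∑ e, c e * x e with hC
  have hC0 : 0 ≤ C := Finset.sum_nonneg fun e _ => mul_nonneg (hc e) (hx e).1
  set d : Fin m → ℝ := fun e => √(c e / C) with hd
  have hd2 : ∀ e, d e ^ 2 = c e / C := fun e => Real.sq_sqrt (div_nonneg (hc e) hC0)
  have hdε : ∀ e, d e ^ 2 ≤ ε ^ 2 := fun e => by
    rw [hd2]
    exact div_le_of_le_mul₀ hC0 (sq_nonneg _) (hcinf e)
  have hdsum : ∑ e, x e * d e ^ 2 ≤ 1 := by
    have : ∑ e, x e * d e ^ 2 = C / C := by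
      rw [hC, Finset.sum_div]
      exact Finset.sum_congr rfl fun e _ => by rw [hd2]; ring
    rw [this]
    exact div_self_le_one C
  set M : Matrix (Fin n ⊕ Unit) (Fin n ⊕ Unit) ℝ :=
    ∑ e, x e • vecMulVec (Sum.elim (b e) fun _ => 0) (Sum.elim (b e) fun _ => 0) +
      (vecMulVec (Sum.elim (fun _ => 1) fun _ => 0) (Sum.elim (fun _ => 1) fun _ => 0) +
      vecMulVec (Sum.elim (fun _ => 0) fun _ => 1) (Sum.elim (fun _ => 0) fun _ => 1)) with hMdef
  have hform : ∀ y : Fin n ⊕ Unit → ℝ, y ⬝ᵥ M *ᵥ y =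
      ∑ e, x e * (b e ⬝ᵥ (y ∘ Sum.inl)) ^ 2 + (((fun _ => (1 : ℝ)) ⬝ᵥ (y ∘ Sum.inl)) ^ 2 +
        y (Sum.inr ()) ^ 2) := by
    intro y
    have hz : (fun _ => (0 : ℝ)) ⬝ᵥ (y ∘ Sum.inl) = 0 := by simp [dotProduct]
    rw [hMdef, add_mulVec, add_mulVec, dotProduct_add, dotProduct_add, form_sum, form_vecMulVec,
      form_vecMulVec]
    simp only [elim_dotProduct, zero_mul, add_zero, one_mul, hz, zero_add]
  have hM : M.PosDef := by
    refine PosDef.of_dotProduct_mulVec_pos ((isHermitian_sum _ _).add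
      ((isHermitian_vecMulVec _).add (isHermitian_vecMulVec _))) fun y hy => ?_
    change 0 < y ⬝ᵥ M *ᵥ y
    rw [hform]
    have s1 : 0 ≤ ∑ e, x e * (b e ⬝ᵥ (y ∘ Sum.inl)) ^ 2 :=
      Finset.sum_nonneg fun e _ => mul_nonneg (hx e).1 (sq_nonneg _)
    have s2 := sq_nonneg ((fun _ => (1 : ℝ)) ⬝ᵥ (y ∘ Sum.inl))
    have s3 := sq_nonneg (y (Sum.inr ()))
    by_contra hneg
    apply hy
    have hyl := eq_zero_of_rank (fun e => (hx e).1) hb1 hconn (y := y ∘ Sum.inl) (by linarith)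
      (pow_eq_zero_iff two_ne_zero |>.mp (by linarith))
    have hyr : y (Sum.inr ()) = 0 := pow_eq_zero_iff two_ne_zero |>.mp (by linarith)
    ext k
    rcases k with k | k
    · exact congrFun hyl k
    · exact hyr
  have H1 : ∀ e (y : Fin n ⊕ Unit → ℝ), (Sum.elim (b e) (fun _ => d e) ⬝ᵥ y) ^ 2 ≤
      2 * ε ^ 2 * (y ⬝ᵥ M *ᵥ y) := by
    intro e y
    rw [hform, elim_dotProduct]
    have h1 := hreff e (y ∘ Sum.inl)
    have h2 := mul_le_mul_of_nonneg_right (hdε e) (sq_nonneg (y (Sum.inr ())))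
    have h3 := mul_nonneg (sq_nonneg ε) (sq_nonneg ((fun _ => (1 : ℝ)) ⬝ᵥ (y ∘ Sum.inl)))
    nlinarith [sq_nonneg (b e ⬝ᵥ (y ∘ Sum.inl) - d e * y (Sum.inr ()))]
  have H2 : ∀ y : Fin n ⊕ Unit → ℝ, ∑ e, x e * (Sum.elim (b e) (fun _ => d e) ⬝ᵥ y) ^ 2 ≤
      2 * (y ⬝ᵥ M *ᵥ y) := by
    intro y
    rw [hform]
    have h1 : ∑ e, x e * (Sum.elim (b e) (fun _ => d e) ⬝ᵥ y) ^ 2 ≤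
        ∑ e, (2 * (x e * (b e ⬝ᵥ (y ∘ Sum.inl)) ^ 2) +
          2 * y (Sum.inr ()) ^ 2 * (x e * d e ^ 2)) := by
      refine Finset.sum_le_sum fun e _ => ?_
      rw [elim_dotProduct]
      nlinarith [mul_nonneg (hx e).1 (sq_nonneg (b e ⬝ᵥ (y ∘ Sum.inl) - d e * y (Sum.inr ())))]
    rw [Finset.sum_add_distrib, ← Finset.mul_sum, ← Finset.mul_sum] at h1
    have h2 := mul_le_mul_of_nonneg_left hdsum (sq_nonneg (y (Sum.inr ())))
    have s2 := sq_nonneg ((fun _ => (1 : ℝ)) ⬝ᵥ (y ∘ Sum.inl))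
    nlinarith
  obtain ⟨z, hz, hbound⟩ := two_sided_rounding hM hε hx H1 H2
  refine ⟨z, hz, fun y => ?_, ?_⟩
  -- Subtracting the mean of `y` changes no `b e ⬝ᵥ y` and kills the all-ones term of `M`.
  · obtain ⟨a, ha⟩ : ∃ a : ℝ, (fun _ => (1 : ℝ)) ⬝ᵥ (fun k => y k - a * 1) = 0 := by
      rcases Nat.eq_zero_or_pos n with rfl | hn
      · exact ⟨0, by simp [dotProduct]⟩
      · refine ⟨(∑ k, y k) / n, ?_⟩
        have : (n : ℝ) ≠ 0 := by exact_mod_cast hn.ne'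
        simp only [dotProduct, one_mul, mul_one, Finset.sum_sub_distrib, Finset.sum_const,
          Finset.card_univ, Fintype.card_fin, nsmul_eq_mul]
        field_simp
        ring
    have hshift : ∀ e, b e ⬝ᵥ (fun k => y k - a * 1) = b e ⬝ᵥ y := by
      intro e
      have : (fun k => y k - a * 1) = y - a • (fun _ => (1 : ℝ)) := by ext; simp
      rw [this, dotProduct_sub, dotProduct_smul, hb1, smul_zero, sub_zero]
    have := hbound (Sum.elim (fun k => y k - a * 1) fun _ => 0)
    rw [hform] at this
    simpa only [elim_dotProduct, Sum.elim_comp_inl, Sum.elim_inr, mul_zero, add_zero, hshift, ha,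
      ne_eq, OfNat.ofNat_ne_zero, not_false_eq_true, zero_pow] using this
  · have := hbound (Sum.elim (fun _ => 0) fun _ => 1)
    rw [hform] at this
    have hb0 : ∀ u : Fin n → ℝ, u ⬝ᵥ (fun _ => (0 : ℝ)) = 0 := fun u => by simp [dotProduct]
    simp only [elim_dotProduct, Sum.elim_comp_inl, Sum.elim_inr, mul_one, hb0, zero_add, hd2,
      ne_eq, OfNat.ofNat_ne_zero, not_false_eq_true, zero_pow, mul_zero, Finset.sum_const_zero,
      one_pow] at this
    -- If `⟨c, x⟩ = 0`, all costs vanish.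
    rcases hC0.eq_or_lt with h | h
    · have hc0 : ∀ e, c e = 0 := fun e => le_antisymm (by simpa [← h] using hcinf e) (hc e)
      simp [hc0, ← h]
    · have e1 : ∑ e, (z e - x e) * c e = (∑ e, (z e - x e) * (c e / C)) * C := by
        rw [Finset.sum_mul]
        exact Finset.sum_congr rfl fun e _ => by field_simp
      rw [e1, abs_mul, abs_of_pos h]
      exact mul_le_mul_of_nonneg_right this h.le

end Graph

end SpectralRounding

/-- **Two-sided spectral rounding for graph Laplacians (network design version).**
Let `G` be a graph on `n` vertices whose edges are given by an edge list `E : Fin m → V × V`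
with `b_e := χ_u - χ_v` and Laplacian `L_y := ∑ y_e b_e b_eᵀ`. Suppose the support of the
fractional solution `x ∈ [0,1]^E` is connected (rank of `L_x` is `n - 1`), that
`b_e b_eᵀ ⪯ ε² L_x` for every edge (effective resistance at most `ε²`), and that
`c_∞ ≤ ε² ⟨c, x⟩`, where `ε ∈ (0, 1/8)`. Then there exists `z ∈ {0,1}^E` with
`(1 - 8ε) L_x ⪯ L_z ⪯ (1 + 8ε) L_x` and `(1 - 8ε) ⟨c, x⟩ ≤ ⟨c, z⟩ ≤ (1 + 8ε) ⟨c, x⟩`. -/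
theorem network_design_two_sided_rounding {n m : ℕ} (E : Fin m → Fin n × Fin n)
    (hE : ∀ e, (E e).1 ≠ (E e).2)
    (b : Fin m → Fin n → ℝ)
    (hb : b = fun e w => (if w = (E e).1 then (1 : ℝ) else 0) - (if w = (E e).2 then 1 else 0))
    (x c : Fin m → ℝ) (ε : ℝ)
    (hx : ∀ e, 0 ≤ x e ∧ x e ≤ 1) (hc : ∀ e, 0 ≤ c e)
    (hε0 : 0 < ε) (hε1 : ε < 1/8)
    (hconn : (∑ e, x e • vecMulVec (b e) (b e)).rank = n - 1)
    (hreff : ∀ e, (ε^2 • (∑ e', x e' • vecMulVec (b e') (b e')) -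
      vecMulVec (b e) (b e)).PosSemidef)
    (hcinf : ∀ e, c e ≤ ε^2 * ∑ e', c e' * x e') :
    ∃ z : Fin m → ℝ, (∀ e, z e = 0 ∨ z e = 1) ∧
      ((∑ e, z e • vecMulVec (b e) (b e)) -
        (1 - 8*ε) • ∑ e, x e • vecMulVec (b e) (b e)).PosSemidef ∧
      ((1 + 8*ε) • (∑ e, x e • vecMulVec (b e) (b e)) -
        ∑ e, z e • vecMulVec (b e) (b e)).PosSemidef ∧
      (1 - 8*ε) * (∑ e, c e * x e) ≤ (∑ e, c e * z e) ∧
      (∑ e, c e * z e) ≤ (1 + 8*ε) * (∑ e, c e * x e) := by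
  have hb1 : ∀ e, b e ⬝ᵥ (fun _ => (1 : ℝ)) = 0 := by
    intro e
    simp [hb, dotProduct]
  obtain ⟨z, hz, hspec, hcost⟩ := SpectralRounding.exists_rounding (ε := ε) hx hc hε0 hb1 hconn
    (fun e y => by
      have h : 0 ≤ y ⬝ᵥ _ := (hreff e).dotProduct_mulVec_nonneg y
      rw [sub_mulVec, dotProduct_sub, smul_mulVec, dotProduct_smul,
        SpectralRounding.form_sum, SpectralRounding.form_vecMulVec, smul_eq_mul] at h
      linarith) hcinf
  have hself : ∀ t : ℝ, IsSelfAdjoint t := fun t => by simp [IsSelfAdjoint]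
  refine ⟨z, hz, ?_, ?_, ?_, ?_⟩
  · refine PosSemidef.of_dotProduct_mulVec_nonneg ((SpectralRounding.isHermitian_sum _ _).sub
      ((SpectralRounding.isHermitian_sum _ _).smul (hself _))) fun y => ?_
    change 0 ≤ y ⬝ᵥ _
    rw [sub_mulVec, dotProduct_sub, smul_mulVec, dotProduct_smul, SpectralRounding.form_sum,
      SpectralRounding.form_sum, smul_eq_mul]
    have := (abs_le.mp (hspec y)).1
    simp only [sub_mul, Finset.sum_sub_distrib] at this
    linarith
  · refine PosSemidef.of_dotProduct_mulVec_nonneg (((SpectralRounding.isHermitian_sum _ _).smul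
      (hself _)).sub (SpectralRounding.isHermitian_sum _ _)) fun y => ?_
    change 0 ≤ y ⬝ᵥ _
    rw [sub_mulVec, dotProduct_sub, smul_mulVec, dotProduct_smul, SpectralRounding.form_sum,
      SpectralRounding.form_sum, smul_eq_mul]
    have := (abs_le.mp (hspec y)).2
    simp only [sub_mul, Finset.sum_sub_distrib] at this
    linarith
  · have := (abs_le.mp hcost).1
    simp only [sub_mul, Finset.sum_sub_distrib] at this
    simp only [mul_comm (c _)] at this ⊢
    linarith
  · have := (abs_le.mp hcost).2
    simp only [sub_mul, Finset.sum_sub_distrib] at this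
    simp only [mul_comm (c _)] at this ⊢
    linarith
end

section
/- Let G = (V, E) be a simple graph with n vertices, m edges, and maximum degree d. Let ε ∈ (0, 1], suppose m ≥ n/ε², and set m̃ := n/ε² (a real number). Then there exists a subset of edges F ⊆ E with |F| ≤ 8n/ε² such that −8√2·ε·d·I_n ⪯ L_G − (m/m̃)·Σ_{e ∈ F} b_e b_eᵀ ⪯ 8√2·ε·d·I_n. (Existence of a linear-sized additive unweighted spectral sparsifier.) -/
open Matrix BigOperators

/-!
The subset `F` is found by the method of interlacing polynomials, in a two-sided form that controls
both ends of the spectrum at once.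

Put `s = m̃ / m` and sample each edge with probability `s`. To every edge a vector `u` is attached and
`S = ∑ (ξ_u - s) u uᵀ` is the centred random sum, with `ξ_u` Bernoulli variables of mean `s`. The
expectation of `det (X₁ + S) * det (X₂ - S)` is obtained from `det X₁ * det X₂` by applying, for each
`u`, the operator `1 - s (1 - s) ∂₁ ∂₂`, where `∂₁`, `∂₂` are the derivatives along `u uᵀ` in `X₁` and
in `X₂` (`pairPoly`). These polynomials are affine along rank-one directions. They have no zeros in
the upper half-plane (`pairPoly_stable`), and hence satisfy the Rayleigh inequality
`f * ∂D ∂E f ≤ ∂D f * ∂E f` along rank-one directions (`pairPoly_rayleigh`). Nothing else about them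
is used in the remaining argument.

A point is called above the roots of `f` if `f` is positive on the cone of positive semidefinite pairs
translated to it (`Above`). Two facts are derived from the Rayleigh inequality.

* Barrier: starting at `(α I, α I)`, applying the operator of `u` and at the same time moving by
  `δ (u uᵀ, u uᵀ)` with `δ = s (1 - s) φ`, `φ = 2 ρ / α`, `|u|² ≤ ρ`, keeps the point above the roots and
  does not increase the relative increments of `f` (`Above.sub_mixedDiff`, `Above.ratio_shift`,
  `barrier`). Hence `(x I, x I)` is above the roots of the expected polynomial as soon as
  `α I + δ ∑ u uᵀ ⪯ x I`.
* Selection: if `X` is above the roots of the average of two translates of `f`, then it is above the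
  roots of one of them (`Above.of_add`, `Above.select`). Deciding the edges one after the other gives a
  set `F` for which `(x I + S, x I - S)` is above the roots of `det X₁ * det X₂`, that is, `-x I ⪯ S ⪯ x I`
  (`exists_balanced_subset`).

For the graph, `u` is `b_e` with one more coordinate `√(2 d / m)`, so that the last diagonal entry of `S`
measures `|F| - m̃`. With `ρ = 4` and `α = 8 √(s d)` one gets `x ≤ 12 √(s d)`, and `ε² s d = n d / m ≥ 2`
turns this into the stated bounds.
-/

set_option linter.unusedSectionVars false

/-! ### Polynomials with the Rayleigh property -/

section Abstract
variable {V : Type*} [AddCommGroup V] [Module ℝ V]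

/-- The second mixed difference of `f` at `X` in the directions `D`, `E`; for `f` affine along `D`
and along `E` this is the mixed directional derivative. -/
def mixedDiff {V R : Type*} [Add V] [AddGroup R] (f : V → R) (D E X : V) : R :=
  f (X + D + E) - f (X + D) - f (X + E) + f X

/-- `f` is affine along every direction of `S` and satisfies the Rayleigh inequality
`f * ∂D ∂E f ≤ ∂D f * ∂E f` at every point, for all directions `D, E ∈ S`. Since `f` is affine along
`D` and `E`, the derivatives are written as differences. -/
structure RayleighOn (S : Set V) (f : V → ℝ) : Prop where
  affine : ∀ X, ∀ D ∈ S, ∀ t : ℝ, f (X + t • D) = f X + t * (f (X + D) - f X)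
  rayleigh : ∀ X, ∀ D ∈ S, ∀ E ∈ S,
    f X * mixedDiff f D E X ≤ (f (X + D) - f X) * (f (X + E) - f X)

/-- `X` lies above the roots of `f`: `f` is positive on the translate by `X` of the cone generated
by `S`. -/
def Above (S : Set V) (f : V → ℝ) (X : V) : Prop :=
  ∀ P ∈ AddSubmonoid.closure S, 0 < f (X + P)

variable {S : Set V} {f : V → ℝ} {X P D E W : V}

lemma Above.pos (h : Above S f X) : 0 < f X := by
  simpa using h 0 (zero_mem _)

lemma Above.add (h : Above S f X) (hP : P ∈ AddSubmonoid.closure S) : Above S f (X + P) := by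
  intro Q hQ
  rw [add_assoc]
  exact h _ (add_mem hP hQ)

lemma Above.le_add (hS : ∀ D ∈ S, ∀ t : ℝ, 0 ≤ t → t • D ∈ S) (hf : RayleighOn S f)
    (h : Above S f X) (hD : D ∈ S) : f X ≤ f (X + D) := by
  by_contra! hlt
  have hpos : 0 ≤ f X / (f X - f (X + D)) :=
    div_nonneg h.pos.le (by linarith)
  have h1 := h _ (AddSubmonoid.subset_closure (hS D hD _ hpos))
  rw [hf.affine X D hD] at h1
  have h2 : f X / (f X - f (X + D)) * (f (X + D) - f X) = - f X := by
    have : f X - f (X + D) ≠ 0 := by linarith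
    field_simp
    ring
  linarith

/-- The Rayleigh inequality says that the relative increment of `f` along `D` decreases when the
base point moves up the cone. -/
lemma Above.ratio_anti (hf : RayleighOn S f) (hD : D ∈ S)
    (hP : P ∈ AddSubmonoid.closure S) :
    ∀ X, Above S f X → f (X + P + D) / f (X + P) ≤ f (X + D) / f X := by
  induction hP using AddSubmonoid.closure_induction with
  | mem E hE =>
    intro X h
    have h1 := h.pos
    have h2 := (h.add (AddSubmonoid.subset_closure hE)).pos
    have h3 := hf.rayleigh X D hD E hE
    rw [mixedDiff, add_right_comm X D E] at h3
    rw [div_le_div_iff₀ h2 h1]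
    nlinarith
  | zero => intro X h; simp
  | add P Q hP hQ ihP ihQ =>
    intro X h
    rw [← add_assoc]
    exact (ihQ _ (h.add hP)).trans (ihP X h)

/-- Moving down from a point above the roots along a single direction stays above the roots as long
as `f` itself remains positive: by `Above.ratio_anti` the relative decrease is smaller further up. -/
lemma Above.sub_smul (hf : RayleighOn S f) (h : Above S f X) (hD : D ∈ S) {t : ℝ} (ht : 0 ≤ t)
    (hpos : 0 < f (X - t • D)) : Above S f (X - t • D) := by
  intro P hP
  have h0 := h.pos
  have h1 := h P hP
  have h2 := Above.ratio_anti hf hD hP X h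
  rw [div_le_div_iff₀ h1 h0] at h2
  have e1 : f (X - t • D) = f X + (-t) * (f (X + D) - f X) := by
    rw [← hf.affine X D hD]; simp [sub_eq_add_neg]
  have e2 : f (X - t • D + P) = f (X + P) + (-t) * (f (X + P + D) - f (X + P)) := by
    rw [← hf.affine _ D hD]; congr 1; rw [neg_smul]; abel
  rw [e1] at hpos
  rw [e2]
  have h3 := mul_pos hpos h1
  have h4 : 0 < f X * (f (X + P) + (-t) * (f (X + P + D) - f (X + P))) := by nlinarith
  exact pos_of_mul_pos_right h4 h0.le

lemma Above.mixedDiff_nonneg (hS : ∀ D ∈ S, ∀ t : ℝ, 0 ≤ t → t • D ∈ S) (hf : RayleighOn S f)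
    (h : Above S f X) (hD : D ∈ S) (hE : E ∈ S) : 0 ≤ mixedDiff f D E X := by
  by_contra! hlt
  have hE0 := h.le_add hS hf hE
  -- along the ray `X + t • D`, the slope in direction `E` is affine in `t`
  have key : ∀ t : ℝ, 0 ≤ t → 0 ≤ (f (X + E) - f X) + t * mixedDiff f D E X := by
    intro t ht
    have h1 := (h.add (AddSubmonoid.subset_closure (hS D hD t ht))).le_add hS hf hE
    rw [add_right_comm, hf.affine _ D hD, hf.affine _ D hD] at h1
    rw [mixedDiff, add_right_comm X D E]
    linarith
  have h2 := key ((f (X + E) - f X + 1) / (- mixedDiff f D E X))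
    (div_nonneg (by linarith) (by linarith))
  have h3 : (f (X + E) - f X + 1) / (- mixedDiff f D E X) * mixedDiff f D E X
      = -(f (X + E) - f X + 1) := by
    have : mixedDiff f D E X ≠ 0 := hlt.ne
    field_simp
  linarith

/-- Being above the roots of `f - c * ∂D ∂E f` implies being above the roots of `f`, provided some
point further up the cone is above the roots of `f`. Descending from that point, at the first zero
of `f` the value of `f - c * ∂D ∂E f` would be `- c * ∂D ∂E f ≤ 0`. -/
lemma Above.of_add (hS : ∀ D ∈ S, ∀ t : ℝ, 0 ≤ t → t • D ∈ S) (hf : RayleighOn S f)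
    {c : ℝ} (hc : 0 ≤ c) (hD : D ∈ S) (hE : E ∈ S) (hP : P ∈ AddSubmonoid.closure S) :
    ∀ X, Above S (fun Y => f Y - c * mixedDiff f D E Y) X → Above S f (X + P) → Above S f X := by
  induction hP using AddSubmonoid.closure_induction with
  | mem W hW =>
    intro X h' h
    have hline : ∀ t : ℝ, X + W - (1 - t) • W = X + t • W := by
      intro t; rw [_root_.sub_smul, one_smul]; abel
    suffices hpos : 0 < f X by
      have := h.sub_smul hf hW (t := 1) zero_le_one (by simpa using hpos)
      simpa using this
    by_contra! hle
    have h1 := h.pos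
    -- the zero of the affine function `t ↦ f (X + t • W)` in `[0, 1)`
    set t₀ := - f X / (f (X + W) - f X) with ht₀
    have hden : 0 < f (X + W) - f X := by linarith
    have ht0 : 0 ≤ t₀ := div_nonneg (by linarith) hden.le
    have hval : ∀ t, f (X + t • W) = (t - t₀) * (f (X + W) - f X) := by
      intro t
      rw [hf.affine X W hW, sub_mul, ht₀, div_mul_cancel₀ _ hden.ne']
      ring
    have ht1 : t₀ < 1 := by
      have := hval 1
      rw [one_smul] at this
      by_contra! hh
      nlinarith
    have hab : ∀ t, t₀ < t → t ≤ 1 → Above S f (X + t • W) := by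
      intro t h2 h3
      rw [← hline]
      apply h.sub_smul hf hW (by linarith)
      rw [hline, hval]
      exact mul_pos (by linarith) hden
    have haff : ∀ t, mixedDiff f D E (X + t • W) =
        mixedDiff f D E X + t * (mixedDiff f D E (X + W) - mixedDiff f D E X) := by
      intro t
      have e1 : ∀ Z, X + t • W + Z = X + Z + t • W := fun Z => by abel
      have e2 : ∀ Z, X + W + Z = X + Z + W := fun Z => by abel
      simp only [mixedDiff]
      rw [add_assoc _ D E, add_assoc _ D E, add_assoc _ D E, e1, e1, e1, e2, e2, e2]
      simp only [hf.affine _ W hW]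
      ring
    have hlim : 0 ≤ mixedDiff f D E (X + t₀ • W) := by
      have hcont : Filter.Tendsto (fun t : ℝ => mixedDiff f D E (X + t • W))
          (nhdsWithin t₀ (Set.Ioi t₀)) (nhds (mixedDiff f D E (X + t₀ • W))) := by
        have : Continuous (fun t : ℝ => mixedDiff f D E (X + t • W)) := by
          simp_rw [haff]; fun_prop
        exact (this.tendsto t₀).mono_left nhdsWithin_le_nhds
      refine ge_of_tendsto hcont ?_
      filter_upwards [Ioc_mem_nhdsGT ht1] with t ht
      exact (hab t ht.1 ht.2).mixedDiff_nonneg hS hf hD hE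
    have h3 := h' _ (AddSubmonoid.subset_closure (hS W hW t₀ ht0))
    have h4 := hval t₀
    simp only at h3
    nlinarith [mul_nonneg hc hlim]
  | zero => intro X _ h; simpa using h
  | add P Q hP hQ ihP ihQ =>
    intro X h' h
    rw [← add_assoc] at h
    exact ihP X h' (ihQ _ (h'.add hP) h)

/-- If the relative increments of `f` along `D` and `E` are at most `p` at `X` and `c * p ^ 2 < 1`,
then `X` stays above the roots of `f - c * ∂D ∂E f`. -/
lemma Above.sub_mixedDiff (hS : ∀ D ∈ S, ∀ t : ℝ, 0 ≤ t → t • D ∈ S) (hf : RayleighOn S f)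
    (h : Above S f X) (hD : D ∈ S) (hE : E ∈ S) {c p : ℝ} (hc : 0 ≤ c)
    (hpD : f (X + D) ≤ (1 + p) * f X) (hpE : f (X + E) ≤ (1 + p) * f X) (hcp : c * p ^ 2 < 1) :
    Above S (fun Y => f Y - c * mixedDiff f D E Y) X := by
  intro P hP
  have h0 := h.pos
  have h1 := h P hP
  have hDP := (h.add hP).le_add hS hf hD
  have hEP := (h.add hP).le_add hS hf hE
  have bound : ∀ D ∈ S, f (X + D) ≤ (1 + p) * f X → f (X + P + D) - f (X + P) ≤ p * f (X + P) := by
    intro D hD hp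
    have h2 := Above.ratio_anti hf hD hP X h
    have h3 : f (X + D) / f X ≤ 1 + p := by rwa [div_le_iff₀ h0]
    have h4 := (div_le_iff₀ h1).1 (h2.trans h3)
    linarith
  have h5 := hf.rayleigh (X + P) D hD E hE
  have h6 := mul_le_mul (bound D hD hpD) (bound E hE hpE) (by linarith)
    (le_trans (by linarith) (bound D hD hpD))
  have h7 : f (X + P) * (c * mixedDiff f D E (X + P)) < f (X + P) * f (X + P) := by
    calc f (X + P) * (c * mixedDiff f D E (X + P))
        = c * (f (X + P) * mixedDiff f D E (X + P)) := by ring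
      _ ≤ c * (p * f (X + P) * (p * f (X + P))) :=
          mul_le_mul_of_nonneg_left (h5.trans h6) hc
      _ = (c * p ^ 2) * (f (X + P) * f (X + P)) := by ring
      _ < 1 * (f (X + P) * f (X + P)) := by
          apply mul_lt_mul_of_pos_right hcp (mul_pos h1 h1)
      _ = _ := one_mul _
  have := lt_of_mul_lt_mul_left h7 h1.le
  simpa using this

/-- The scalar inequality behind `Above.ratio_shift`. There `r0 + r1 * t + r2 * t ^ 2` and
`s0 + s1 * t + s2 * t ^ 2` are the restrictions of `f` and of its increment along `W` to the line
`X + t • (D + E)`, and `hW` says that the quotient of the second by the first is antitone in `t`. -/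
lemma barrier_algebra {r0 r1 r2 s0 s1 s2 c φ : ℝ} (hr0 : 0 < r0) (hr2 : 0 ≤ r2)
    (hφ : 0 < φ) (hc : 0 ≤ c) (hcφ : c * φ ^ 2 ≤ 1) (hr1 : r1 ≤ φ * r0)
    (hW : ∀ t : ℝ, 0 ≤ (r1 * s0 - r0 * s1) + 2 * t * (r2 * s0 - r0 * s2)
      + t ^ 2 * (r2 * s1 - r1 * s2)) :
    (s0 + c * φ * s1 + ((c * φ) ^ 2 - c) * s2) * r0
      ≤ (r0 + c * φ * r1 + ((c * φ) ^ 2 - c) * r2) * s0 := by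
  set w0 := r1 * s0 - r0 * s1 with hw0
  set w1 := r2 * s0 - r0 * s2 with hw1
  have h0 : 0 ≤ w0 := by simpa using hW 0
  suffices 0 ≤ c * φ * w0 + ((c * φ) ^ 2 - c) * w1 by
    rw [hw0, hw1] at this; linarith
  rcases le_or_gt w1 0 with h1 | h1
  · have : (c * φ) ^ 2 ≤ c := by nlinarith
    nlinarith [mul_nonneg (mul_nonneg hc hφ.le) h0]
  · have h2 := hW (-1 / φ)
    have h3 : w1 ≤ φ * w0 := by
      have e : r0 * (r2 * s1 - r1 * s2) = r1 * w1 - r2 * w0 := by rw [hw0, hw1]; ring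
      have h4 : 0 ≤ φ ^ 2 * r0 * (w0 + 2 * (-1 / φ) * w1 + (-1 / φ) ^ 2 * (r2 * s1 - r1 * s2)) :=
        mul_nonneg (by positivity) h2
      have e2 : φ ^ 2 * r0 * (w0 + 2 * (-1 / φ) * w1 + (-1 / φ) ^ 2 * (r2 * s1 - r1 * s2))
          = φ ^ 2 * r0 * w0 - 2 * φ * r0 * w1 + r0 * (r2 * s1 - r1 * s2) := by
        field_simp
        ring
      rw [e2, e] at h4
      have h5 : 0 ≤ φ * r0 * (φ * w0 - w1) := by
        nlinarith [mul_nonneg hr2 h0, mul_le_mul_of_nonneg_right hr1 h1.le]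
      have := nonneg_of_mul_nonneg_right h5 (by positivity)
      linarith
    nlinarith [mul_le_mul_of_nonneg_left h3 hc, mul_nonneg (sq_nonneg (c * φ)) h1.le]

/-- The barrier step: passing from `f` to `f - c * ∂D ∂E f` and from `X` to
`X + (c * φ) • (D + E)` does not increase the relative increment along any `W ∈ S`, if the relative
increments along `D` and `E` add up to at most `φ` and `c * φ ^ 2 ≤ 1`. -/
lemma Above.ratio_shift (hS : ∀ D ∈ S, ∀ t : ℝ, 0 ≤ t → t • D ∈ S) (hf : RayleighOn S f)
    (h : Above S f X) (hD : D ∈ S) (hE : E ∈ S) (hW : W ∈ S) {c φ : ℝ} (hc : 0 ≤ c)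
    (hφ : 0 < φ) (hcφ : c * φ ^ 2 ≤ 1)
    (hb : f (X + D) + f (X + E) - 2 * f X ≤ φ * f X) :
    (f (X + (c * φ) • (D + E) + W) - c * mixedDiff f D E (X + (c * φ) • (D + E) + W)) * f X ≤
    (f (X + (c * φ) • (D + E)) - c * mixedDiff f D E (X + (c * φ) • (D + E))) * f (X + W) := by
  have hr2 := h.mixedDiff_nonneg hS hf hD hE
  have tri : ∀ X, ∀ a b : ℝ, f (X + a • D + b • E) =
      f X + a * (f (X + D) - f X) + b * (f (X + E) - f X) + a * b * mixedDiff f D E X := by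
    intro X a b
    rw [hf.affine _ E hE, add_right_comm X (a • D) E, hf.affine _ D hD, hf.affine _ D hD, mixedDiff,
      add_right_comm X E D]
    ring
  have mix : ∀ X, ∀ a b : ℝ, mixedDiff f D E (X + a • D + b • E) = mixedDiff f D E X := by
    intro X a b
    have e1 : X + a • D + b • E + D = X + (a + 1) • D + b • E := by rw [add_smul, one_smul]; abel
    have e2 : X + a • D + b • E + E = X + a • D + (b + 1) • E := by rw [add_smul, one_smul]; abel
    have e3 : X + a • D + b • E + D + E = X + (a + 1) • D + (b + 1) • E := by
      rw [add_smul, one_smul, add_smul, one_smul]; abel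
    rw [mixedDiff, e3, e1, e2, tri, tri, tri, tri]
    ring
  have key := barrier_algebra (r0 := f X) (r1 := f (X + D) + f (X + E) - 2 * f X)
    (r2 := mixedDiff f D E X) (s0 := f (X + W) - f X)
    (s1 := (f (X + W + D) + f (X + W + E) - 2 * f (X + W)) - (f (X + D) + f (X + E) - 2 * f X))
    (s2 := mixedDiff f D E (X + W) - mixedDiff f D E X) h.pos hr2 hφ hc hcφ hb ?_
  · have e1 : X + (c * φ) • (D + E) + W = (X + W) + (c * φ) • D + (c * φ) • E := by
      rw [smul_add]; abel
    have e2 : X + (c * φ) • (D + E) = X + (c * φ) • D + (c * φ) • E := by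
      rw [smul_add]; abel
    rw [e1, e2, mix, mix, tri, tri]
    nlinarith [key]
  · intro t
    have h1 := hf.rayleigh (X + t • E) D hD W hW
    have h2 := hf.rayleigh (X + t • D) E hE W hW
    have a1 : f (X + t • E) = f (X + (0 : ℝ) • D + t • E) := by simp
    have a2 : f (X + t • E + D) = f (X + (1 : ℝ) • D + t • E) := by rw [one_smul]; congr 1; abel
    have a3 : f (X + t • E + W) = f (X + W + (0 : ℝ) • D + t • E) := by
      rw [zero_smul]; congr 1; abel
    have a4 : f (X + t • E + D + W) = f (X + W + (1 : ℝ) • D + t • E) := by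
      rw [one_smul]; congr 1; abel
    have b1 : f (X + t • D) = f (X + t • D + (0 : ℝ) • E) := by simp
    have b2 : f (X + t • D + E) = f (X + t • D + (1 : ℝ) • E) := by rw [one_smul]
    have b3 : f (X + t • D + W) = f (X + W + t • D + (0 : ℝ) • E) := by
      rw [zero_smul]; congr 1; abel
    have b4 : f (X + t • D + E + W) = f (X + W + t • D + (1 : ℝ) • E) := by
      rw [one_smul]; congr 1; abel
    rw [tri] at a1 a2 a3 a4 b1 b2 b3 b4
    rw [mixedDiff, a4, a2, a3, a1] at h1
    rw [mixedDiff, b4, b2, b3, b1] at h2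
    nlinarith [h1, h2]

/-- The polynomial `f - s * (1 - s) * ∂D ∂E f` is the average of the translates of `f` by
`(1 - s) • (D - E)` and `(-s) • (D - E)` with weights `s` and `1 - s`. If it is positive at `X`, then
one of the two translated points is above the roots of `f`. -/
lemma Above.select (hf : RayleighOn S f) (h : Above S f X) (hD : D ∈ S) (hE : E ∈ S)
    {s : ℝ} (hs0 : 0 ≤ s) (hs1 : s ≤ 1)
    (hpos : 0 < f X - s * (1 - s) * mixedDiff f D E X)
    (hS : ∀ D ∈ S, ∀ t : ℝ, 0 ≤ t → t • D ∈ S) :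
    Above S f (X + (1 - s) • (D - E)) ∨ Above S f (X + (-s) • (D - E)) := by
  have tri : ∀ a b : ℝ, f (X + a • D - b • E) =
      f X + a * (f (X + D) - f X) - b * (f (X + E) - f X) - a * b * mixedDiff f D E X := by
    intro a b
    rw [sub_eq_add_neg, ← neg_smul,
      hf.affine _ E hE, add_right_comm X (a • D) E, hf.affine _ D hD, hf.affine _ D hD, mixedDiff,
      add_right_comm X E D]
    ring
  have e1 : X + (1 - s) • (D - E) = X + (1 - s) • D - (1 - s) • E := by rw [smul_sub]; abel
  have e2 : X + (-s) • (D - E) = X + s • E - s • D := by rw [smul_sub, neg_smul, neg_smul]; abel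
  have e3 : X + s • E - s • D = X + (-s) • D - (-s) • E := by rw [neg_smul, neg_smul]; abel
  rw [e1, e2]
  by_cases h1 : 0 < f (X + (1 - s) • D - (1 - s) • E)
  · left
    exact (h.add (AddSubmonoid.subset_closure (hS D hD _ (by linarith)))).sub_smul hf hE
      (by linarith) h1
  · right
    refine (h.add (AddSubmonoid.subset_closure (hS E hE s hs0))).sub_smul hf hD hs0 ?_
    push Not at h1
    rw [e3, tri]
    rw [tri] at h1
    by_contra! h2
    have h3 := mul_nonpos_of_nonneg_of_nonpos hs0 h1
    have h4 := mul_nonpos_of_nonneg_of_nonpos (sub_nonneg.2 hs1) h2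
    nlinarith [h3, h4]

end Abstract

/-! ### The expected polynomial -/

section Poly
variable {ι : Type*} [Fintype ι] [DecidableEq ι]

lemma det_add_smul_vecMulVec {R : Type*} [CommRing R] (Y : Matrix ι ι R) (u v : ι → R) (t : R) :
    (Y + t • vecMulVec u v).det = Y.det + t * ((Y + vecMulVec u v).det - Y.det) := by
  -- a Schur complement turns the rank-one update into a change of a single column
  have key : ∀ r : R, (Y + r • vecMulVec u v).det =
      (fromBlocks Y (0 : Matrix ι Unit R) (replicateRow Unit v) 1).det +
      r * ((fromBlocks Y (replicateCol Unit (-u)) (replicateRow Unit v)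
        (0 : Matrix Unit Unit R)).det) := by
    intro r
    have h1 : Y + r • vecMulVec u v
        = Y - replicateCol Unit (r • (-u)) * replicateRow Unit v := by
      ext i j; simp [vecMulVec_apply, Matrix.mul_apply, mul_assoc]
    rw [h1, ← det_fromBlocks_one₂₂]
    set M := fromBlocks Y (0 : Matrix ι Unit R) (replicateRow Unit v) (1 : Matrix Unit Unit R)
      with hM
    have e1 : fromBlocks Y (replicateCol Unit (r • (-u))) (replicateRow Unit v)
        (1 : Matrix Unit Unit R) = M.updateCol (Sum.inr ())
          (Sum.elim (0 : ι → R) 1 + r • Sum.elim (-u) 0) := by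
      ext (i | i) (j | j) <;> simp [hM]
    have e2 : M.updateCol (Sum.inr ()) (Sum.elim (0 : ι → R) 1) = M := by
      ext (i | i) (j | j) <;> simp [hM]
    have e3 : M.updateCol (Sum.inr ()) (Sum.elim (-u) (0 : Unit → R)) =
        fromBlocks Y (replicateCol Unit (-u)) (replicateRow Unit v) (0 : Matrix Unit Unit R) := by
      ext (i | i) (j | j) <;> simp [hM]
    rw [e1, det_updateCol_add, det_updateCol_smul, e2, e3]
  have h0 := key 0
  have h1 := key 1
  rw [zero_smul, add_zero, zero_mul, add_zero] at h0
  rw [one_smul, one_mul] at h1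
  rw [key t, h1, h0]
  ring

variable {R : Type*} [CommRing R]

/-- The rank-one direction `w wᵀ` in the first matrix of a pair. -/
def dirL (w : ι → R) : Matrix ι ι R × Matrix ι ι R := (vecMulVec w w, 0)
/-- The rank-one direction `w wᵀ` in the second matrix of a pair. -/
def dirR (w : ι → R) : Matrix ι ι R × Matrix ι ι R := (0, vecMulVec w w)
/-- All rank-one directions; over `ℝ` they generate the cone of pairs of positive semidefinite
matrices. -/
def rankOneDirs : Set (Matrix ι ι R × Matrix ι ι R) := {D | ∃ w, D = dirL w ∨ D = dirR w}

/-- The polynomial `∏ (1 - c * ∂(u uᵀ, 0) ∂(0, u uᵀ))`, the product being over `u` in the list,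
applied to `det X.1 * det X.2`. For `c = s * (1 - s)` it is the expectation of
`det (X.1 + S) * det (X.2 - S)`, where `S` is the sum of the `(ξ_u - s) u uᵀ` with independent
Bernoulli variables `ξ_u` of mean `s`. The ring is arbitrary so that real and complex arguments are
covered by the same definition. -/
def pairPoly (c : R) : List (ι → R) → Matrix ι ι R × Matrix ι ι R → R
  | [], X => X.1.det * X.2.det
  | u :: l, X => pairPoly c l X - c * mixedDiff (pairPoly c l) (dirL u) (dirR u) X

lemma dirL_mem (w : ι → R) : dirL w ∈ rankOneDirs := ⟨w, Or.inl rfl⟩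
lemma dirR_mem (w : ι → R) : dirR w ∈ rankOneDirs := ⟨w, Or.inr rfl⟩

lemma pairPoly_affine (c : R) (l : List (ι → R)) :
    ∀ X, ∀ D ∈ (rankOneDirs : Set (Matrix ι ι R × Matrix ι ι R)), ∀ t : R,
      pairPoly c l (X + t • D) = pairPoly c l X + t * (pairPoly c l (X + D) - pairPoly c l X) := by
  induction l with
  | nil =>
    rintro X D ⟨w, rfl | rfl⟩ t
    · simp only [pairPoly, dirL, Prod.fst_add, Prod.snd_add, Prod.smul_fst, Prod.smul_snd,
        smul_zero, add_zero, det_add_smul_vecMulVec _ w w t]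
      ring
    · simp only [pairPoly, dirR, Prod.fst_add, Prod.snd_add, Prod.smul_fst, Prod.smul_snd,
        smul_zero, add_zero, det_add_smul_vecMulVec _ w w t]
      ring
  | cons u l ih =>
    intro X D hD t
    have e : ∀ Z W, X + W + Z = X + Z + W := fun Z W => add_right_comm _ _ _
    simp only [pairPoly, mixedDiff]
    rw [add_assoc _ (dirL u), add_assoc _ (dirL u), add_assoc _ (dirL u)]
    simp only [e _ (t • D), e _ D, ih _ D hD]
    ring

lemma pairPoly_map {R' : Type*} [CommRing R'] (φ : R →+* R') (c : R) (l : List (ι → R)) :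
    ∀ X : Matrix ι ι R × Matrix ι ι R,
    pairPoly (φ c) (l.map (fun u i => φ (u i))) (X.1.map φ, X.2.map φ) = φ (pairPoly c l X) := by
  induction l with
  | nil =>
    intro X
    simp [pairPoly, RingHom.map_det]
  | cons u l ih =>
    intro X
    have hv : (vecMulVec (fun i => φ (u i)) (fun i => φ (u i))) = (vecMulVec u u).map φ := by
      ext i j; simp [vecMulVec_apply]
    have eL : ∀ Z : Matrix ι ι R × Matrix ι ι R, (Z.1.map φ, Z.2.map φ) + dirL (fun i => φ (u i))
        = ((Z + dirL u).1.map φ, (Z + dirL u).2.map φ) := by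
      intro Z; ext <;> simp [dirL, vecMulVec_apply]
    have eR : ∀ Z : Matrix ι ι R × Matrix ι ι R, (Z.1.map φ, Z.2.map φ) + dirR (fun i => φ (u i))
        = ((Z + dirR u).1.map φ, (Z + dirR u).2.map φ) := by
      intro Z; ext <;> simp [dirR, vecMulVec_apply]
    simp only [List.map_cons, pairPoly, mixedDiff, eL, eR, ih]
    simp

lemma pairPoly_continuous [TopologicalSpace R] [IsTopologicalRing R] (c : R)
    (l : List (ι → R)) : Continuous (pairPoly c l) := by
  induction l with
  | nil =>
    show Continuous fun X : Matrix ι ι R × Matrix ι ι R => X.1.det * X.2.det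
    exact (Continuous.matrix_det continuous_fst).mul (Continuous.matrix_det continuous_snd)
  | cons u l ih =>
    show Continuous fun X => pairPoly c l X - c * mixedDiff (pairPoly c l) (dirL u) (dirR u) X
    unfold mixedDiff
    fun_prop

end Poly

/-! ### Stability and the Rayleigh inequality -/

/-- If a biaffine polynomial has no zero in the product of two closed upper half-planes, then
`1 - c * ∂y ∂z` with `c ≥ 0` does not create a zero at the origin. Here `z0` is the value of `z` at
which the coefficient of `y` vanishes. -/
lemma biaffine_sub_ne_zero {f00 f10 f01 f11 : ℂ} {c : ℝ} (hc : 0 ≤ c)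
    (h : ∀ y z : ℂ, 0 ≤ y.im → 0 ≤ z.im → f00 + y * f10 + z * f01 + y * z * f11 ≠ 0) :
    f00 - c * f11 ≠ 0 := by
  intro h0
  have h00 : f00 = c * f11 := sub_eq_zero.1 h0
  have h11 : f11 ≠ 0 := by
    rintro rfl
    exact h 0 0 le_rfl le_rfl (by simp [h00])
  obtain ⟨z0, hz0⟩ : ∃ z0, f10 = - (z0 * f11) := ⟨-(f10 / f11), by field_simp⟩
  obtain ⟨k, hk⟩ : ∃ k, f01 = k * f11 := ⟨f01 / f11, by field_simp⟩
  by_cases hB : z0.im ≤ 0 ∧ z0 ≠ 0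
  · refine h (c / z0) 0 ?_ le_rfl ?_
    · rw [Complex.div_im]
      simp only [Complex.ofReal_im, Complex.ofReal_re, zero_mul, zero_div, zero_sub]
      rw [neg_nonneg]
      exact div_nonpos_of_nonpos_of_nonneg (mul_nonpos_of_nonneg_of_nonpos hc hB.1)
        (Complex.normSq_nonneg _)
    · have := hB.2
      rw [h00, hz0]
      field_simp
      ring
  · -- `z` close to `z0` makes the coefficient of `y` small, so the root `y` is high up
    set K := c + z0 * k with hK
    have hz : ∃ T : ℝ, 0 < T ∧ k.im ≤ T ∧ 0 ≤ (z0 + Complex.I * K / T).im := by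
      have him : ∀ T : ℝ, (z0 + Complex.I * K / T).im = z0.im + K.re / T := by
        intro T
        rw [Complex.add_im, Complex.div_ofReal_im]
        simp
      by_cases hz : z0 = 0
      · refine ⟨|k.im| + 1, by positivity, by linarith [le_abs_self k.im], ?_⟩
        rw [him, hK, hz]
        simp only [Complex.zero_im, zero_mul, add_zero, Complex.ofReal_re, zero_add]
        positivity
      · have hpos : 0 < z0.im := by
          by_contra! hh
          exact hB ⟨hh, hz⟩
        refine ⟨|k.im| + 1 + |K.re| / z0.im, by positivity, ?_, ?_⟩
        · have : 0 ≤ |K.re| / z0.im := by positivity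
          linarith [le_abs_self k.im]
        · rw [him]
          set T := |k.im| + 1 + |K.re| / z0.im with hT
          have hT0 : 0 < T := by positivity
          have h1 : |K.re| ≤ z0.im * T := by
            rw [hT]
            have : z0.im * (|K.re| / z0.im) = |K.re| := by field_simp
            nlinarith [abs_nonneg k.im]
          have h2 : -z0.im ≤ K.re / T := by
            rw [le_div_iff₀ hT0]
            linarith [neg_abs_le K.re]
          linarith
    obtain ⟨T, hT0, hT1, hT2⟩ := hz
    refine h (Complex.I * T - k) (z0 + Complex.I * K / T) ?_ hT2 ?_
    · simpa using hT1
    · have hTc : (T : ℂ) ≠ 0 := by exact_mod_cast hT0.ne'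
      rw [h00, hz0, hk, hK]
      field_simp
      ring_nf
      simp only [Complex.I_sq]
      ring

section Stable
variable {ι : Type*} [Fintype ι]

/-- The matrix analogue of the open upper half-plane: the quadratic form of `Y` has positive imaginary
part. -/
def UpperHalf (Y : Matrix ι ι ℂ) : Prop := ∀ v : ι → ℂ, v ≠ 0 → 0 < (star v ⬝ᵥ Y *ᵥ v).im

lemma UpperHalf.det_ne_zero [DecidableEq ι] {Y : Matrix ι ι ℂ} (h : UpperHalf Y) : Y.det ≠ 0 := by
  intro h0
  obtain ⟨v, hv, hv0⟩ := Matrix.exists_mulVec_eq_zero_iff.2 h0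
  have := h v hv
  simp [hv0] at this

lemma UpperHalf.add_smul {Y : Matrix ι ι ℂ} (h : UpperHalf Y) (u : ι → ℝ) {t : ℂ}
    (ht : 0 ≤ t.im) :
    UpperHalf (Y + t • vecMulVec (fun i => (u i : ℂ)) (fun i => (u i : ℂ))) := by
  intro v hv
  have h1 : star v ⬝ᵥ (fun i => (u i : ℂ)) = star ((fun i => (u i : ℂ)) ⬝ᵥ v) := by
    rw [← Matrix.star_dotProduct_star]
    congr 1
    ext i; simp
  have h2 : star v ⬝ᵥ (t • vecMulVec (fun i => (u i : ℂ)) (fun i => (u i : ℂ))) *ᵥ v =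
      t * (Complex.normSq ((fun i => (u i : ℂ)) ⬝ᵥ v) : ℂ) := by
    rw [smul_mulVec, vecMulVec_mulVec, dotProduct_smul, Complex.normSq_eq_conj_mul_self]
    simp only [dotProduct_smul, h1, smul_eq_mul]
    rfl
  rw [add_mulVec, dotProduct_add, Complex.add_im, h2, Complex.im_mul_ofReal]
  exact add_pos_of_pos_of_nonneg (h v hv) (mul_nonneg ht (Complex.normSq_nonneg _))

lemma UpperHalf.of_real [DecidableEq ι] {Y : Matrix ι ι ℝ} (hY : Yᵀ = Y) {η : ℝ} (hη : 0 < η) :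
    UpperHalf (Y.map (Complex.ofRealHom) + (Complex.I * η) • (1 : Matrix ι ι ℂ)) := by
  intro v hv
  have hH : (Y.map (Complex.ofRealHom)).IsHermitian := by
    ext i j
    simp only [conjTranspose_apply, map_apply, Complex.ofRealHom_eq_coe, RCLike.star_def,
      Complex.conj_ofReal, Complex.ofReal_inj]
    exact congrFun (congrFun hY i) j
  have h1 : (star v ⬝ᵥ (Y.map (Complex.ofRealHom)) *ᵥ v).im = 0 := by
    have := hH.im_star_dotProduct_mulVec_self v
    simpa using this
  have h2 : star v ⬝ᵥ v = ((∑ i, Complex.normSq (v i) : ℝ) : ℂ) := by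
    simp [dotProduct, Complex.normSq_eq_conj_mul_self]
  rw [add_mulVec, dotProduct_add, Complex.add_im, h1, smul_mulVec, one_mulVec, dotProduct_smul,
    h2, smul_eq_mul, Complex.im_mul_ofReal, zero_add]
  obtain ⟨i, hi⟩ := Function.ne_iff.1 hv
  have : 0 < ∑ i, Complex.normSq (v i) :=
    Finset.sum_pos' (fun i _ => Complex.normSq_nonneg _) ⟨i, Finset.mem_univ _, by
      simpa [Complex.normSq_pos] using hi⟩
  simp
  positivity

variable [DecidableEq ι]

lemma pairPoly_biaffine {R : Type*} [CommRing R] (c : R) (l : List (ι → R))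
    (X : Matrix ι ι R × Matrix ι ι R) {D E : Matrix ι ι R × Matrix ι ι R}
    (hD : D ∈ rankOneDirs) (hE : E ∈ rankOneDirs) (y z : R) :
    pairPoly c l (X + y • D + z • E) = pairPoly c l X
      + y * (pairPoly c l (X + D) - pairPoly c l X)
      + z * (pairPoly c l (X + E) - pairPoly c l X) + y * z * mixedDiff (pairPoly c l) D E X := by
  rw [pairPoly_affine c l _ E hE, add_right_comm X (y • D) E, pairPoly_affine c l _ D hD,
    pairPoly_affine c l _ D hD, mixedDiff, add_right_comm X E D]
  ring

/-- A real vector regarded as a complex one. -/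
def ofRealVec (u : ι → ℝ) : ι → ℂ := fun i => Complex.ofRealHom (u i)

/-- Both matrices of the pair are in the upper half-plane. -/
def UpperHalfPair (X : Matrix ι ι ℂ × Matrix ι ι ℂ) : Prop := UpperHalf X.1 ∧ UpperHalf X.2

lemma UpperHalfPair.add_dirL {X : Matrix ι ι ℂ × Matrix ι ι ℂ} (h : UpperHalfPair X) (u : ι → ℝ)
    {t : ℂ} (ht : 0 ≤ t.im) : UpperHalfPair (X + t • dirL (ofRealVec u)) :=
  ⟨h.1.add_smul u ht, by simpa [dirL] using h.2⟩

lemma UpperHalfPair.add_dirR {X : Matrix ι ι ℂ × Matrix ι ι ℂ} (h : UpperHalfPair X) (u : ι → ℝ)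
    {t : ℂ} (ht : 0 ≤ t.im) : UpperHalfPair (X + t • dirR (ofRealVec u)) :=
  ⟨by simpa [dirR] using h.1, h.2.add_smul u ht⟩

/-- Stability: `pairPoly` with `c ≥ 0` and real vectors has no zero in the upper half-plane. -/
lemma pairPoly_stable {c : ℝ} (hc : 0 ≤ c) (l : List (ι → ℝ)) :
    ∀ X : Matrix ι ι ℂ × Matrix ι ι ℂ, UpperHalfPair X →
      pairPoly (c : ℂ) (l.map ofRealVec) X ≠ 0 := by
  induction l with
  | nil =>
    intro X h
    exact mul_ne_zero h.1.det_ne_zero h.2.det_ne_zero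
  | cons u l ih =>
    intro X h
    refine biaffine_sub_ne_zero hc
      (f10 := pairPoly (c : ℂ) (l.map ofRealVec) (X + dirL (ofRealVec u)) -
        pairPoly (c : ℂ) (l.map ofRealVec) X)
      (f01 := pairPoly (c : ℂ) (l.map ofRealVec) (X + dirR (ofRealVec u)) -
        pairPoly (c : ℂ) (l.map ofRealVec) X) (fun y z hy hz => ?_)
    rw [← pairPoly_biaffine _ _ _ (dirL_mem _) (dirR_mem _)]
    exact ih _ ((h.add_dirL u hy).add_dirR u hz)

/-- A pair of real matrices regarded as a pair of complex ones. -/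
def complexify (X : Matrix ι ι ℝ × Matrix ι ι ℝ) : Matrix ι ι ℂ × Matrix ι ι ℂ :=
  (X.1.map Complex.ofRealHom, X.2.map Complex.ofRealHom)

lemma pairPoly_complexify (c : ℝ) (l : List (ι → ℝ)) (X : Matrix ι ι ℝ × Matrix ι ι ℝ) :
    pairPoly (c : ℂ) (l.map ofRealVec) (complexify X) = ((pairPoly c l X : ℝ) : ℂ) :=
  pairPoly_map Complex.ofRealHom c l X

lemma complexify_add (X Y : Matrix ι ι ℝ × Matrix ι ι ℝ) :
    complexify (X + Y) = complexify X + complexify Y := by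
  ext <;> simp [complexify]

lemma complexify_dir {D : Matrix ι ι ℝ × Matrix ι ι ℝ} (hD : D ∈ rankOneDirs) :
    complexify D ∈ rankOneDirs ∧ ∀ X, UpperHalfPair X → ∀ t : ℂ, 0 ≤ t.im →
      UpperHalfPair (X + t • complexify D) := by
  obtain ⟨w, rfl | rfl⟩ := hD
  · have e : complexify (dirL w) = dirL (ofRealVec w) := by
      ext <;> simp [complexify, dirL, ofRealVec, vecMulVec_apply]
    rw [e]
    exact ⟨dirL_mem _, fun X h t ht => h.add_dirL w ht⟩
  · have e : complexify (dirR w) = dirR (ofRealVec w) := by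
      ext <;> simp [complexify, dirR, ofRealVec, vecMulVec_apply]
    rw [e]
    exact ⟨dirR_mem _, fun X h t ht => h.add_dirR w ht⟩

/-- The Rayleigh inequality is a consequence of stability: if it failed at `X`, then the biaffine
restriction to `X + y • D + z • E` would, for `z = I`, vanish at a point `y` of the open upper
half-plane, and a nearby zero would exist with `X` shifted by
 a small positive imaginary multiple of the identity. -/
lemma pairPoly_rayleigh {c : ℝ} (hc : 0 ≤ c) (l : List (ι → ℝ))
    {X : Matrix ι ι ℝ × Matrix ι ι ℝ} (hX1 : X.1ᵀ = X.1) (hX2 : X.2ᵀ = X.2)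
    {D E : Matrix ι ι ℝ × Matrix ι ι ℝ} (hD : D ∈ rankOneDirs) (hE : E ∈ rankOneDirs) :
    pairPoly c l X * mixedDiff (pairPoly c l) D E X ≤
      (pairPoly c l (X + D) - pairPoly c l X) * (pairPoly c l (X + E) - pairPoly c l X) := by
  by_contra! hlt
  obtain ⟨hDc, hDu⟩ := complexify_dir hD
  obtain ⟨hEc, hEu⟩ := complexify_dir hE
  set F : Matrix ι ι ℂ × Matrix ι ι ℂ → ℂ := pairPoly (c : ℂ) (l.map ofRealVec) with hF
  have hFc : Continuous F := pairPoly_continuous _ _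
  set Z : ℝ → Matrix ι ι ℂ × Matrix ι ι ℂ :=
    fun η => complexify X + (Complex.I * η) • (1, 1) with hZ
  have hZc : Continuous Z := by
    rw [hZ]
    fun_prop
  set a : ℝ → ℂ := fun η => F (Z η)
  set b : ℝ → ℂ := fun η => F (Z η + complexify D) - F (Z η) with hb
  set g : ℝ → ℂ := fun η => F (Z η + complexify E) - F (Z η) with hg
  set k : ℝ → ℂ := fun η => mixedDiff F (complexify D) (complexify E) (Z η) with hk
  have hZ0 : Z 0 = complexify X := by simp [hZ]
  have ha0 : a 0 = ((pairPoly c l X : ℝ) : ℂ) := by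
    simp only [a, hZ0, hF, pairPoly_complexify]
  have hb0 : b 0 = ((pairPoly c l (X + D) - pairPoly c l X : ℝ) : ℂ) := by
    simp only [b, hZ0, hF, ← complexify_add, pairPoly_complexify, Complex.ofReal_sub]
  have hg0 : g 0 = ((pairPoly c l (X + E) - pairPoly c l X : ℝ) : ℂ) := by
    simp only [g, hZ0, hF, ← complexify_add, pairPoly_complexify, Complex.ofReal_sub]
  have hk0 : k 0 = ((mixedDiff (pairPoly c l) D E X : ℝ) : ℂ) := by
    simp only [k, mixedDiff, hZ0, hF, ← complexify_add, pairPoly_complexify, Complex.ofReal_sub,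
      Complex.ofReal_add]
  set A := pairPoly c l X
  set B := pairPoly c l (X + D) - A
  set C := pairPoly c l (X + E) - A
  set K := mixedDiff (pairPoly c l) D E X
  have hac : Continuous a := hFc.comp hZc
  have hbc : Continuous b := by rw [hb]; fun_prop
  have hgc : Continuous g := by rw [hg]; fun_prop
  have hkc : Continuous k := by rw [hk]; unfold mixedDiff; fun_prop
  -- with the second variable equal to `I`, the root in the first one has positive imaginary part
  -- already at `η = 0`
  have hden : (B : ℂ) + Complex.I * K ≠ 0 := by
    intro h0
    have h1 : B = 0 := by simpa using congrArg Complex.re h0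
    have h2 : K = 0 := by simpa using congrArg Complex.im h0
    rw [h1, h2] at hlt
    simp at hlt
  have hev1 : ∀ᶠ η in nhds (0 : ℝ), b η + Complex.I * k η ≠ 0 := by
    have hcont : Continuous fun η => b η + Complex.I * k η := by fun_prop
    apply hcont.continuousAt.eventually_ne
    rw [hb0, hk0]
    exact hden
  have hev2 : ∀ᶠ η in nhds (0 : ℝ), 0 < (-(a η + Complex.I * g η) / (b η + Complex.I * k η)).im := by
    have hcont : ContinuousAt (fun η => (-(a η + Complex.I * g η) / (b η + Complex.I * k η)).im)
        0 := by
      apply Complex.continuous_im.continuousAt.comp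
      apply ContinuousAt.div
      · fun_prop
      · fun_prop
      · rw [hb0, hk0]
        exact hden
    apply hcont.eventually (lt_mem_nhds _)
    simp only [ha0, hb0, hg0, hk0]
    rw [Complex.div_im, ← sub_div]
    apply div_pos _ (Complex.normSq_pos.2 hden)
    simp
    linarith
  have hev := (hev1.and hev2).filter_mono (nhdsWithin_le_nhds (s := Set.Ioi 0))
  obtain ⟨η, ⟨h1, h2⟩, hη⟩ := (hev.and self_mem_nhdsWithin).exists
  have hU : UpperHalfPair (Z η) := by
    constructor
    · simpa [hZ, complexify] using UpperHalf.of_real hX1 hη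
    · simpa [hZ, complexify] using UpperHalf.of_real hX2 hη
  have hne := pairPoly_stable hc l _ (hEu _ (hDu _ hU _ h2.le) Complex.I (by simp))
  rw [pairPoly_biaffine _ _ _ hDc hEc] at hne
  apply hne
  change a η + _ * b η + Complex.I * g η + _ * Complex.I * k η = 0
  have h3 : -(a η + Complex.I * g η) / (b η + Complex.I * k η) * (b η + Complex.I * k η) =
      -(a η + Complex.I * g η) := div_mul_cancel₀ _ h1
  linear_combination h3

end Stable

/-! ### Barrier and selection for sums of rank-one matrices -/

section Concrete
variable {ι : Type*} [Fintype ι] [DecidableEq ι]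

lemma smul_mem_rankOneDirs : ∀ D ∈ (rankOneDirs : Set (Matrix ι ι ℝ × Matrix ι ι ℝ)),
    ∀ t : ℝ, 0 ≤ t → t • D ∈ (rankOneDirs : Set (Matrix ι ι ℝ × Matrix ι ι ℝ)) := by
  have h : ∀ (w : ι → ℝ) (t : ℝ), 0 ≤ t →
      t • vecMulVec w w = vecMulVec (√t • w) (√t • w) := by
    intro w t ht
    rw [vecMulVec_smul, smul_vecMulVec, smul_smul, Real.mul_self_sqrt ht]
  rintro D ⟨w, rfl | rfl⟩ t ht
  · exact ⟨√t • w, Or.inl (by simp [dirL, h w t ht])⟩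
  · exact ⟨√t • w, Or.inr (by simp [dirR, h w t ht])⟩

/-- The symmetric part of a real matrix. -/
noncomputable def symPart (Y : Matrix ι ι ℝ) : Matrix ι ι ℝ := (1 / 2 : ℝ) • (Y + Yᵀ)

/-- Componentwise symmetric part. -/
noncomputable def symPair (X : Matrix ι ι ℝ × Matrix ι ι ℝ) : Matrix ι ι ℝ × Matrix ι ι ℝ :=
  (symPart X.1, symPart X.2)

/-- `pairPoly` precomposed with the symmetric part. The Rayleigh inequality holds for `pairPoly` at
symmetric pairs only; this extends it to all pairs of matrices. -/
noncomputable def symPoly (c : ℝ) (l : List (ι → ℝ)) (X : Matrix ι ι ℝ × Matrix ι ι ℝ) : ℝ :=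
  pairPoly c l (symPair X)

lemma symPart_transpose (Y : Matrix ι ι ℝ) : (symPart Y)ᵀ = symPart Y := by
  simp [symPart, add_comm]

lemma symPart_of_symm {Y : Matrix ι ι ℝ} (h : Yᵀ = Y) : symPart Y = Y := by
  rw [symPart, h, ← two_smul ℝ Y, smul_smul]
  norm_num

lemma symPair_of_symm {X : Matrix ι ι ℝ × Matrix ι ι ℝ} (h1 : X.1ᵀ = X.1) (h2 : X.2ᵀ = X.2) :
    symPair X = X := by
  rw [symPair, symPart_of_symm h1, symPart_of_symm h2]

lemma symPair_add (X Y : Matrix ι ι ℝ × Matrix ι ι ℝ) :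
    symPair (X + Y) = symPair X + symPair Y := by
  simp only [symPair, symPart, Prod.fst_add, Prod.snd_add, transpose_add, smul_add, Prod.mk_add_mk]
  congr 1 <;> abel

lemma symPair_smul (t : ℝ) (X : Matrix ι ι ℝ × Matrix ι ι ℝ) :
    symPair (t • X) = t • symPair X := by
  simp only [symPair, symPart, Prod.smul_fst, Prod.smul_snd, transpose_smul, ← smul_add,
    Prod.smul_mk, smul_comm t]

lemma vecMulVec_self_transpose (w : ι → ℝ) : (vecMulVec w w)ᵀ = vecMulVec w w := by
  rw [transpose_vecMulVec]

lemma symPair_dir {D : Matrix ι ι ℝ × Matrix ι ι ℝ} (hD : D ∈ rankOneDirs) : symPair D = D := by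
  obtain ⟨w, rfl | rfl⟩ := hD <;>
  exact symPair_of_symm (by simp [dirL, dirR, transpose_vecMulVec])
    (by simp [dirL, dirR, transpose_vecMulVec])

lemma mixedDiff_symPoly (c : ℝ) (l : List (ι → ℝ)) {D E : Matrix ι ι ℝ × Matrix ι ι ℝ}
    (hD : D ∈ rankOneDirs) (hE : E ∈ rankOneDirs) (X : Matrix ι ι ℝ × Matrix ι ι ℝ) :
    mixedDiff (symPoly c l) D E X = mixedDiff (pairPoly c l) D E (symPair X) := by
  simp only [mixedDiff, symPoly, symPair_add, symPair_dir hD, symPair_dir hE]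

lemma symPoly_cons (c : ℝ) (u : ι → ℝ) (l : List (ι → ℝ)) :
    symPoly c (u :: l) = fun Y => symPoly c l Y -
      c * mixedDiff (symPoly c l) (dirL u) (dirR u) Y := by
  ext Y
  rw [mixedDiff_symPoly c l (dirL_mem u) (dirR_mem u)]
  rfl

lemma symPoly_rayleighOn {c : ℝ} (hc : 0 ≤ c) (l : List (ι → ℝ)) :
    RayleighOn (rankOneDirs : Set (Matrix ι ι ℝ × Matrix ι ι ℝ)) (symPoly c l) where
  affine X D hD t := by
    simp only [symPoly, symPair_add, symPair_smul, symPair_dir hD]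
    exact pairPoly_affine c l _ D hD t
  rayleigh X D hD E hE := by
    rw [mixedDiff_symPoly c l hD hE]
    simp only [symPoly, symPair_add, symPair_dir hD, symPair_dir hE]
    exact pairPoly_rayleigh hc l (symPart_transpose _) (symPart_transpose _) hD hE

lemma posSemidef_of_mem_closure {P : Matrix ι ι ℝ × Matrix ι ι ℝ}
    (hP : P ∈ AddSubmonoid.closure (rankOneDirs : Set (Matrix ι ι ℝ × Matrix ι ι ℝ))) :
    P.1.PosSemidef ∧ P.2.PosSemidef := by
  have h : ∀ w : ι → ℝ, (vecMulVec w w).PosSemidef := fun w => by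
    simpa using posSemidef_vecMulVec_self_star w
  induction hP using AddSubmonoid.closure_induction with
  | mem D hD =>
    obtain ⟨w, rfl | rfl⟩ := hD
    · exact ⟨h w, PosSemidef.zero⟩
    · exact ⟨PosSemidef.zero, h w⟩
  | zero => exact ⟨PosSemidef.zero, PosSemidef.zero⟩
  | add P Q _ _ ihP ihQ => exact ⟨ihP.1.add ihQ.1, ihP.2.add ihQ.2⟩

open scoped MatrixOrder Matrix.Norms.L2Operator in
lemma posSemidef_eq_sum {Y : Matrix ι ι ℝ} (hY : Y.PosSemidef) :
    ∃ w : ι → ι → ℝ, Y = ∑ k, vecMulVec (w k) (w k) := by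
  obtain ⟨B, rfl⟩ := CStarAlgebra.nonneg_iff_eq_star_mul_self.mp hY.nonneg
  refine ⟨fun k => B k, ?_⟩
  ext i j
  simp [Matrix.mul_apply, Matrix.sum_apply, vecMulVec_apply, star_eq_conjTranspose]

lemma mem_closure_of_posSemidef {P : Matrix ι ι ℝ × Matrix ι ι ℝ}
    (h1 : P.1.PosSemidef) (h2 : P.2.PosSemidef) :
    P ∈ AddSubmonoid.closure (rankOneDirs : Set (Matrix ι ι ℝ × Matrix ι ι ℝ)) := by
  obtain ⟨v, hv⟩ := posSemidef_eq_sum h1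
  obtain ⟨w, hw⟩ := posSemidef_eq_sum h2
  have e : P = ∑ k, dirL (v k) + ∑ k, dirR (w k) := by
    ext1
    · simp [Prod.fst_sum, dirL, dirR, hv]
    · simp [Prod.snd_sum, dirL, dirR, hw]
  rw [e]
  exact add_mem (sum_mem fun k _ => AddSubmonoid.subset_closure (dirL_mem _))
    (sum_mem fun k _ => AddSubmonoid.subset_closure (dirR_mem _))

lemma posDef_smul_one {α : ℝ} (hα : 0 < α) : (α • (1 : Matrix ι ι ℝ)).PosDef :=
  PosDef.one.smul hα

lemma det_smul_one_add {α : ℝ} (hα : 0 < α) (w : ι → ℝ) :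
    (α • (1 : Matrix ι ι ℝ) + vecMulVec w w).det =
      (1 + (w ⬝ᵥ w) / α) * (α • (1 : Matrix ι ι ℝ)).det := by
  have e : α • (1 : Matrix ι ι ℝ) + vecMulVec w w =
      α • (1 + replicateCol Unit (α⁻¹ • w) * replicateRow Unit w) := by
    ext i j
    simp [Matrix.mul_apply, vecMulVec_apply, mul_add]
    field_simp
  rw [e, det_smul, det_smul, det_one_add_replicateCol_mul_replicateRow, det_one, dotProduct_smul,
    smul_eq_mul]
  ring

/-- The sum of `u uᵀ` over `u` in the list. -/
noncomputable def outerSum (l : List (ι → ℝ)) : Matrix ι ι ℝ := (l.map fun u => vecMulVec u u).sum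

lemma outerSum_transpose (l : List (ι → ℝ)) : (outerSum l)ᵀ = outerSum l := by
  induction l with
  | nil => simp [outerSum]
  | cons u l ih =>
    simp only [outerSum, List.map_cons, List.sum_cons, transpose_add, transpose_vecMulVec] at ih ⊢
    rw [ih]

/-- The point reached from `(α I, α I)` after a barrier step of length `δ` for each vector of the list. -/
noncomputable def barrierPoint (α δ : ℝ) (l : List (ι → ℝ)) : Matrix ι ι ℝ × Matrix ι ι ℝ :=
  (α • 1 + δ • outerSum l, α • 1 + δ • outerSum l)

lemma barrierPoint_cons (α δ : ℝ) (u : ι → ℝ) (l : List (ι → ℝ)) :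
    barrierPoint α δ (u :: l) = barrierPoint α δ l + δ • (dirL u + dirR u) := by
  simp only [barrierPoint, outerSum, List.map_cons, List.sum_cons, dirL, dirR]
  ext1
  · simp; abel
  · simp; abel

/-- Starting from `(α I, α I)`, at which the relative increment of `det X.1 * det X.2` along `w wᵀ`
is exactly `|w|² / α`, each vector of the list is absorbed by `Above.ratio_shift`; the bound on the
increments is preserved throughout. -/
lemma barrier {c α ρ : ℝ} (hc : 0 ≤ c) (hα : 0 < α) (hρ : 0 < ρ)
    (hcφ : c * (2 * ρ / α) ^ 2 ≤ 1) (l : List (ι → ℝ)) (hl : ∀ u ∈ l, u ⬝ᵥ u ≤ ρ) :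
    Above rankOneDirs (symPoly c l) (barrierPoint α (c * (2 * ρ / α)) l) ∧
    ∀ w : ι → ℝ, ∀ D, D = dirL w ∨ D = dirR w →
      symPoly c l (barrierPoint α (c * (2 * ρ / α)) l + D) ≤
        (1 + (w ⬝ᵥ w) / α) * symPoly c l (barrierPoint α (c * (2 * ρ / α)) l) := by
  set φ := 2 * ρ / α with hφ
  have hφ0 : 0 < φ := by positivity
  induction l with
  | nil =>
    have e0 : barrierPoint α (c * φ) ([] : List (ι → ℝ)) = (α • 1, α • 1) := by
      simp [barrierPoint, outerSum]
    rw [e0]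
    refine ⟨?_, ?_⟩
    · intro P hP
      obtain ⟨h1, h2⟩ := posSemidef_of_mem_closure hP
      have d1 := (posDef_smul_one (ι := ι) hα).add_posSemidef h1
      have d2 := (posDef_smul_one (ι := ι) hα).add_posSemidef h2
      rw [symPoly, symPair_of_symm (by simpa using d1.isHermitian.eq)
        (by simpa using d2.isHermitian.eq)]
      exact mul_pos d1.det_pos d2.det_pos
    · rintro w D hD
      have h0 : symPair ((α • 1, α • 1) : Matrix ι ι ℝ × Matrix ι ι ℝ) = (α • 1, α • 1) :=
        symPair_of_symm (by simp) (by simp)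
      rw [symPoly, symPoly, symPair_add, symPair_dir ⟨w, hD⟩, h0]
      apply le_of_eq
      rcases hD with rfl | rfl
      · simp only [pairPoly, dirL, Prod.fst_add, Prod.snd_add, add_zero, det_smul_one_add hα]
        ring
      · simp only [pairPoly, dirR, Prod.fst_add, Prod.snd_add, add_zero, det_smul_one_add hα]
        ring
  | cons u l ih =>
    obtain ⟨h, hr⟩ := ih fun v hv => hl v (List.mem_cons_of_mem _ hv)
    have hu : u ⬝ᵥ u ≤ ρ := hl u List.mem_cons_self
    set X := barrierPoint α (c * φ) l
    have hf := symPoly_rayleighOn (ι := ι) hc l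
    have hp : (u ⬝ᵥ u) / α ≤ ρ / α := by gcongr
    have hpos := h.pos
    have hub : ∀ D, D = dirL u ∨ D = dirR u →
        symPoly c l (X + D) ≤ (1 + ρ / α) * symPoly c l X := by
      intro D hD
      refine (hr u D hD).trans ?_
      gcongr
    have hδ : 0 ≤ c * φ := by positivity
    rw [barrierPoint_cons, symPoly_cons]
    have hA := h.sub_mixedDiff smul_mem_rankOneDirs hf (dirL_mem u) (dirR_mem u) hc
      (hub _ (Or.inl rfl)) (hub _ (Or.inr rfl)) (by
        have : c * (ρ / α) ^ 2 = c * φ ^ 2 / 4 := by rw [hφ]; ring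
        rw [this]; linarith)
    have hmem : (c * φ) • (dirL u + dirR u) ∈
        AddSubmonoid.closure (rankOneDirs : Set (Matrix ι ι ℝ × Matrix ι ι ℝ)) := by
      rw [smul_add]
      exact add_mem (AddSubmonoid.subset_closure (smul_mem_rankOneDirs _ (dirL_mem u) _ hδ))
        (AddSubmonoid.subset_closure (smul_mem_rankOneDirs _ (dirR_mem u) _ hδ))
    have hA' := hA.add hmem
    refine ⟨hA', ?_⟩
    intro w D hD
    have hs := h.ratio_shift smul_mem_rankOneDirs hf (dirL_mem u) (dirR_mem u)
      (W := D) ⟨w, hD⟩ hc hφ0 hcφ (by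
        have h1 := hub _ (Or.inl rfl)
        have h2 := hub _ (Or.inr rfl)
        have e : φ * symPoly c l X = 2 * (ρ / α) * symPoly c l X := by rw [hφ]; ring
        rw [e]
        linarith)
    have hpos' := hA'.pos
    simp only at hpos' ⊢
    refine le_of_mul_le_mul_right (hs.trans ?_) hpos
    refine (mul_le_mul_of_nonneg_left (hr w D hD) hpos'.le).trans (le_of_eq ?_)
    ring

lemma exists_smul_one_sub_posSemidef {Y : Matrix ι ι ℝ} (hY : Yᵀ = Y) :
    ∃ x : ℝ, ∀ y, x ≤ y → (y • 1 - Y).PosSemidef := by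
  refine ⟨∑ i, ∑ j, |Y i j|, fun y hy => .of_dotProduct_mulVec_nonneg ?_ fun v => ?_⟩
  · show (y • 1 - Y)ᴴ = y • 1 - Y
    simp [conjTranspose_eq_transpose_of_trivial, hY]
  · have h1 : ∀ i, v i ^ 2 ≤ v ⬝ᵥ v := fun i => by
      rw [dotProduct, sq]
      exact Finset.single_le_sum (f := fun i => v i * v i) (fun i _ => mul_self_nonneg _)
        (Finset.mem_univ i)
    have h0 : 0 ≤ v ⬝ᵥ v := Finset.sum_nonneg fun i _ => mul_self_nonneg _
    have h2 : v ⬝ᵥ Y *ᵥ v ≤ (∑ i, ∑ j, |Y i j|) * (v ⬝ᵥ v) := by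
      rw [dotProduct, Finset.sum_mul]
      refine Finset.sum_le_sum fun i _ => ?_
      rw [mulVec, dotProduct, Finset.mul_sum, Finset.sum_mul]
      refine Finset.sum_le_sum fun j _ => ?_
      have h3 : |v i * v j| ≤ v ⬝ᵥ v := by
        rw [abs_le]
        constructor <;> nlinarith [h1 i, h1 j, sq_nonneg (v i - v j), sq_nonneg (v i + v j)]
      calc v i * (Y i j * v j) = Y i j * (v i * v j) := by ring
        _ ≤ |Y i j * (v i * v j)| := le_abs_self _
        _ = |Y i j| * |v i * v j| := abs_mul _ _
        _ ≤ |Y i j| * (v ⬝ᵥ v) := by gcongr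
    rw [star_trivial, sub_mulVec, dotProduct_sub, smul_mulVec, one_mulVec, dotProduct_smul,
      smul_eq_mul]
    nlinarith [mul_le_mul_of_nonneg_right hy h0]

/-- A negative eigenvalue `t` of a symmetric matrix `Y` makes `det (Y - t I)` vanish, so a symmetric
pair above the roots of `det X.1 * det X.2` is positive semidefinite. -/
lemma posSemidef_of_above {c : ℝ} {X : Matrix ι ι ℝ × Matrix ι ι ℝ} (hX1 : X.1ᵀ = X.1)
    (hX2 : X.2ᵀ = X.2) (h : Above rankOneDirs (symPoly c []) X) :
    X.1.PosSemidef ∧ X.2.PosSemidef := by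
  have hdet : ∀ P : Matrix ι ι ℝ × Matrix ι ι ℝ, P.1.PosSemidef → P.2.PosSemidef →
      (X.1 + P.1).det * (X.2 + P.2).det ≠ 0 := by
    intro P h1 h2
    have := h P (mem_closure_of_posSemidef h1 h2)
    have s1 : P.1ᵀ = P.1 := by simpa using h1.isHermitian.eq
    have s2 : P.2ᵀ = P.2 := by simpa using h2.isHermitian.eq
    rw [symPoly, symPair_of_symm (by simp [hX1, s1]) (by simp [hX2, s2])] at this
    exact this.ne'
  have key : ∀ Y : Matrix ι ι ℝ, Yᵀ = Y → (∀ t : ℝ, 0 ≤ t → (Y + t • 1).det ≠ 0) →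
      Y.PosSemidef := by
    intro Y hY hd
    have hH : Y.IsHermitian := by
      show Yᴴ = Y
      simpa [conjTranspose_eq_transpose_of_trivial] using hY
    rw [hH.posSemidef_iff_eigenvalues_nonneg]
    intro i
    by_contra! hlt
    simp only [Pi.zero_apply] at hlt
    refine hd (-hH.eigenvalues i) (by linarith) ?_
    rw [← Matrix.exists_mulVec_eq_zero_iff]
    refine ⟨hH.eigenvectorBasis i, ?_, ?_⟩
    · intro h0
      have := hH.eigenvectorBasis.orthonormal.ne_zero i
      apply this
      ext j
      exact congrFun h0 j
    · rw [add_mulVec, hH.mulVec_eigenvectorBasis, smul_mulVec, one_mulVec, neg_smul, add_neg_cancel]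
  have hone : ∀ t : ℝ, 0 ≤ t → (t • (1 : Matrix ι ι ℝ)).PosSemidef :=
    fun t ht => PosSemidef.one.smul ht
  refine ⟨key _ hX1 fun t ht => ?_, key _ hX2 fun t ht => ?_⟩
  · exact left_ne_zero_of_mul (hdet (t • 1, 0) (hone t ht) PosSemidef.zero)
  · exact right_ne_zero_of_mul (hdet (0, t • 1) PosSemidef.zero (hone t ht))

lemma above_smul_one {c α ρ : ℝ} (hc : 0 ≤ c) (hα : 0 < α) (hρ : 0 < ρ)
    (hcφ : c * (2 * ρ / α) ^ 2 ≤ 1) (l : List (ι → ℝ)) (hl : ∀ u ∈ l, u ⬝ᵥ u ≤ ρ) {x : ℝ}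
    (hx : (x • 1 - (α • 1 + (c * (2 * ρ / α)) • outerSum l)).PosSemidef) :
    Above rankOneDirs (symPoly c l) (x • 1, x • 1) := by
  have h := (barrier hc hα hρ hcφ l hl).1.add (P := (x • 1 - (α • 1 + (c * (2 * ρ / α)) •
    outerSum l), x • 1 - (α • 1 + (c * (2 * ρ / α)) • outerSum l)))
    (mem_closure_of_posSemidef hx hx)
  simpa [barrierPoint] using h

/-- Every symmetric pair can be moved up the cone to a multiple of the identity that is above the
roots of `symPoly c l`. -/
lemma exists_above {c α ρ : ℝ} (hc : 0 ≤ c) (hα : 0 < α) (hρ : 0 < ρ)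
    (hcφ : c * (2 * ρ / α) ^ 2 ≤ 1) (l : List (ι → ℝ)) (hl : ∀ u ∈ l, u ⬝ᵥ u ≤ ρ)
    {X : Matrix ι ι ℝ × Matrix ι ι ℝ} (hX1 : X.1ᵀ = X.1) (hX2 : X.2ᵀ = X.2) :
    ∃ P ∈ AddSubmonoid.closure (rankOneDirs : Set (Matrix ι ι ℝ × Matrix ι ι ℝ)),
      Above rankOneDirs (symPoly c l) (X + P) := by
  obtain ⟨x1, h1⟩ := exists_smul_one_sub_posSemidef hX1
  obtain ⟨x2, h2⟩ := exists_smul_one_sub_posSemidef hX2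
  obtain ⟨x3, h3⟩ := exists_smul_one_sub_posSemidef
    (Y := α • (1 : Matrix ι ι ℝ) + (c * (2 * ρ / α)) • outerSum l)
    (by simp [outerSum_transpose])
  set x := max x1 (max x2 x3)
  refine ⟨(x • 1 - X.1, x • 1 - X.2), mem_closure_of_posSemidef (h1 x (by simp [x]))
    (h2 x (by simp [x])), ?_⟩
  have e : X + (x • 1 - X.1, x • 1 - X.2) = (x • 1, x • 1) := by
    ext1 <;> simp
  rw [e]
  exact above_smul_one hc hα hρ hcφ l hl (h3 x (by simp [x]))

variable {κ : Type*} [DecidableEq κ]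

/-- The vectors are decided one at a time: `Above.select` chooses whether `e` belongs to `F`, and
removes it from the list. -/
lemma exists_selection {s α ρ : ℝ} (hs0 : 0 ≤ s) (hs1 : s ≤ 1) (hα : 0 < α) (hρ : 0 < ρ)
    (hcφ : s * (1 - s) * (2 * ρ / α) ^ 2 ≤ 1) (u : κ → ι → ℝ) (hu : ∀ e, u e ⬝ᵥ u e ≤ ρ)
    (L : List κ) (hL : L.Nodup) :
    ∀ X : Matrix ι ι ℝ × Matrix ι ι ℝ, X.1ᵀ = X.1 → X.2ᵀ = X.2 →
      Above rankOneDirs (symPoly (s * (1 - s)) (L.map u)) X →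
      ∃ F ⊆ L.toFinset, Above rankOneDirs (symPoly (s * (1 - s)) [])
        (X + (∑ e ∈ F, (dirL (u e) - dirR (u e)) -
          s • ∑ e ∈ L.toFinset, (dirL (u e) - dirR (u e)))) := by
  have hc : 0 ≤ s * (1 - s) := mul_nonneg hs0 (by linarith)
  induction L with
  | nil => intro X _ _ h; exact ⟨∅, by simp, by simpa using h⟩
  | cons e L ih =>
    intro X hX1 hX2 h
    obtain ⟨heL, hL'⟩ := List.nodup_cons.1 hL
    have heF : e ∉ L.toFinset := by simpa using heL
    have hf := symPoly_rayleighOn (ι := ι) hc (L.map u)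
    rw [List.map_cons, symPoly_cons] at h
    have hpos := h.pos
    obtain ⟨P, hP, hAP⟩ := exists_above hc hα hρ hcφ (L.map u)
      (by simp only [List.mem_map]; rintro _ ⟨e, _, rfl⟩; exact hu e) hX1 hX2
    have hA := Above.of_add smul_mem_rankOneDirs hf hc (dirL_mem (u e)) (dirR_mem (u e)) hP X h hAP
    have hsym : ∀ t : ℝ, (X + t • (dirL (u e) - dirR (u e))).1ᵀ =
        (X + t • (dirL (u e) - dirR (u e))).1 ∧ (X + t • (dirL (u e) - dirR (u e))).2ᵀ =
        (X + t • (dirL (u e) - dirR (u e))).2 := by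
      intro t
      simp [dirL, dirR, transpose_vecMulVec, hX1, hX2]
    rw [List.toFinset_cons, Finset.sum_insert heF]
    rcases hA.select hf (dirL_mem (u e)) (dirR_mem (u e)) hs0 hs1 hpos smul_mem_rankOneDirs
      with h1 | h1
    · obtain ⟨F, hF, hFA⟩ := ih hL' _ (hsym _).1 (hsym _).2 h1
      refine ⟨insert e F, Finset.insert_subset_insert _ hF, ?_⟩
      rw [Finset.sum_insert fun hh => heF (hF hh)]
      convert hFA using 1
      module
    · obtain ⟨F, hF, hFA⟩ := ih hL' _ (hsym _).1 (hsym _).2 h1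
      refine ⟨F, hF.trans (Finset.subset_insert _ _), ?_⟩
      convert hFA using 1
      module

/-- Sparsification of a sum of rank-one matrices: if the barrier point for all the `u e` is at most
`x I`, then some subset `F` has `‖∑ e ∈ F, u uᵀ - s ∑ e, u uᵀ‖ ≤ x`. -/
theorem exists_balanced_subset [Fintype κ] {s α ρ x : ℝ} (hs0 : 0 ≤ s) (hs1 : s ≤ 1) (hα : 0 < α)
    (hρ : 0 < ρ) (hcφ : s * (1 - s) * (2 * ρ / α) ^ 2 ≤ 1) (u : κ → ι → ℝ)
    (hu : ∀ e, u e ⬝ᵥ u e ≤ ρ)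
    (hx : (x • 1 - (α • 1 + (s * (1 - s) * (2 * ρ / α)) •
      ∑ e, vecMulVec (u e) (u e))).PosSemidef) :
    ∃ F : Finset κ,
      (x • 1 + (∑ e ∈ F, vecMulVec (u e) (u e) - s • ∑ e, vecMulVec (u e) (u e))).PosSemidef ∧
      (x • 1 - (∑ e ∈ F, vecMulVec (u e) (u e) - s • ∑ e, vecMulVec (u e) (u e))).PosSemidef := by
  have hc : 0 ≤ s * (1 - s) := mul_nonneg hs0 (by linarith)
  have hA := above_smul_one hc hα hρ hcφ ((Finset.univ : Finset κ).toList.map u)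
    (by simp only [List.mem_map]; rintro _ ⟨e, _, rfl⟩; exact hu e) (x := x) (by
      have e : outerSum ((Finset.univ : Finset κ).toList.map u) = ∑ e, vecMulVec (u e) (u e) := by
        rw [outerSum, List.map_map]
        exact Finset.sum_map_toList _ _
      rwa [e])
  obtain ⟨F, -, hF⟩ := exists_selection hs0 hs1 hα hρ hcφ u hu _ (Finset.nodup_toList _) _
    (by simp) (by simp) hA
  rw [Finset.toList_toFinset] at hF
  have hT : ∀ A : Finset κ, (∑ e ∈ A, vecMulVec (u e) (u e))ᵀ = ∑ e ∈ A, vecMulVec (u e) (u e) := by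
    intro A
    simp [transpose_sum, transpose_vecMulVec]
  have e1 : ∀ A : Finset κ, ∑ e ∈ A, (dirL (u e) - dirR (u e)) =
      (∑ e ∈ A, vecMulVec (u e) (u e), -∑ e ∈ A, vecMulVec (u e) (u e)) := by
    intro A
    ext1 <;> simp [Prod.fst_sum, Prod.snd_sum, dirL, dirR]
  rw [e1, e1] at hF
  obtain ⟨h1, h2⟩ := posSemidef_of_above (by simp [hT]) (by simp [hT]) hF
  refine ⟨F, by simpa using h1, ?_⟩
  convert h2 using 1
  simp
  abel

end Concrete

/-! ### Graphs -/

lemma dotProduct_sum_vecMulVec {ι κ : Type*} [Fintype ι] (A : Finset κ) (u : κ → ι → ℝ)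
    (v : ι → ℝ) : v ⬝ᵥ (∑ e ∈ A, vecMulVec (u e) (u e)) *ᵥ v = ∑ e ∈ A, (u e ⬝ᵥ v) ^ 2 := by
  rw [sum_mulVec, dotProduct_sum]
  refine Finset.sum_congr rfl fun e _ => ?_
  rw [vecMulVec_mulVec, dotProduct_smul, dotProduct_comm v, sq]
  rfl

section Graph
variable {n m : ℕ} {E : Fin m → Fin n × Fin n}

/-- A sum over edges of a nonnegative function of the endpoints counts each vertex at most `d` times. -/
lemma sum_endpoints_le (hE1 : ∀ e, (E e).1 ≠ (E e).2) {d : ℕ}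
    (hd : ∀ v : Fin n, (Finset.univ.filter fun e => (E e).1 = v ∨ (E e).2 = v).card ≤ d)
    {g : Fin n → ℝ} (hg : ∀ v, 0 ≤ g v) :
    ∑ e, (g (E e).1 + g (E e).2) ≤ d * ∑ v, g v := by
  have h1 : ∀ e, g (E e).1 + g (E e).2 =
      ∑ v, if (E e).1 = v ∨ (E e).2 = v then g v else 0 := by
    intro e
    have h2 : ∀ v, (if (E e).1 = v ∨ (E e).2 = v then g v else 0) =
        (if (E e).1 = v then g v else 0) + (if (E e).2 = v then g v else 0) := by
      intro v
      by_cases h : (E e).1 = v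
      · have : (E e).2 ≠ v := fun h' => hE1 e (h.trans h'.symm)
        simp [h, this]
      · simp [h]
    simp [h2, Finset.sum_add_distrib]
  simp_rw [h1]
  rw [Finset.sum_comm, Finset.mul_sum]
  refine Finset.sum_le_sum fun v _ => ?_
  rw [← Finset.sum_filter, Finset.sum_const, nsmul_eq_mul]
  exact mul_le_mul_of_nonneg_right (by exact_mod_cast hd v) (hg v)

/-- The vectors `b e` compute the difference across the edge. -/
lemma incidence_dotProduct {b : Fin m → Fin n → ℝ}
    (hb : b = fun e w => (if w = (E e).1 then (1 : ℝ) else 0) - (if w = (E e).2 then 1 else 0))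
    (e : Fin m) (y : Fin n → ℝ) : b e ⬝ᵥ y = y (E e).1 - y (E e).2 := by
  simp [hb, dotProduct, sub_mul, Finset.sum_sub_distrib]


/-- The subset obtained at sampling rate `s`. One extra coordinate `γ`, equal for all edges, is
appended to every `b e`; the corresponding diagonal entry of the matrix inequality controls the
cardinality of `F`. The choice `γ² = 2 d / m` balances the two blocks: both contribute at most `4 d`
to the norm of `∑ e, u uᵀ`, and `|u|² ≤ 4`. -/
lemma exists_subset_of_rate (hE1 : ∀ e, (E e).1 ≠ (E e).2) {b : Fin m → Fin n → ℝ}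
    (hb : b = fun e w => (if w = (E e).1 then (1 : ℝ) else 0) - (if w = (E e).2 then 1 else 0))
    {d : ℕ} (hdeg : ∀ v : Fin n, (Finset.univ.filter fun e => (E e).1 = v ∨ (E e).2 = v).card ≤ d)
    (hd1 : 1 ≤ d) (hdm : d ≤ m) {s : ℝ} (hs0 : 0 < s) (hs1 : s ≤ 1) :
    ∃ F : Finset (Fin m), (F.card - s * m) * d ≤ 6 * √(s * d) * m ∧
      ((12 * √(s * d)) • 1 + (∑ e ∈ F, vecMulVec (b e) (b e) -
        s • ∑ e, vecMulVec (b e) (b e))).PosSemidef ∧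
      ((12 * √(s * d)) • 1 - (∑ e ∈ F, vecMulVec (b e) (b e) -
        s • ∑ e, vecMulVec (b e) (b e))).PosSemidef := by
  have hd1R : (1 : ℝ) ≤ d := by exact_mod_cast hd1
  have hd0R : (0 : ℝ) < d := by linarith
  have hdmR : (d : ℝ) ≤ m := by exact_mod_cast hdm
  have hmR : (0 : ℝ) < m := by linarith
  set q : ℝ := √(s * d) with hq
  have hq0 : 0 < q := Real.sqrt_pos.2 (by positivity)
  have hqq : q ^ 2 = s * d := Real.sq_sqrt (by positivity)
  set γ : ℝ := √(2 * d / m) with hγ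
  have hγγ : γ ^ 2 = 2 * d / m := Real.sq_sqrt (by positivity)
  have hγm : γ ^ 2 * m = 2 * d := by rw [hγγ]; field_simp
  set u : Fin m → Fin n ⊕ Unit → ℝ := fun e => Sum.elim (b e) (fun _ => γ) with hu
  have huv : ∀ e (v : Fin n ⊕ Unit → ℝ),
      u e ⬝ᵥ v = b e ⬝ᵥ (fun i => v (Sum.inl i)) + γ * v (Sum.inr ()) := by
    intro e v
    simp [hu, dotProduct]
  have hnorm : ∀ e, u e ⬝ᵥ u e ≤ 4 := by
    intro e
    have h1 : b e ⬝ᵥ b e = 2 := by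
      rw [incidence_dotProduct hb]
      have h2 := hE1 e
      simp [hb, h2, h2.symm]
      norm_num
    have h3 : γ ^ 2 ≤ 2 := by
      rw [hγγ, div_le_iff₀ hmR]
      linarith
    rw [huv]
    simp only [hu, Sum.elim_inl, Sum.elim_inr]
    change b e ⬝ᵥ b e + γ * γ ≤ 4
    nlinarith
  have hφ : 2 * 4 / (8 * q) = 1 / q := by field_simp; norm_num
  have hδ0 : 0 ≤ s * (1 - s) * (1 / q) :=
    mul_nonneg (mul_nonneg hs0.le (by linarith)) (by positivity)
  have hδ : s * (1 - s) * (1 / q) * (4 * d) ≤ 4 * q := by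
    have : s * (1 - s) * (1 / q) * (4 * d) = 4 * (1 - s) * q := by
      field_simp
      linear_combination (-(1 - s)) * hqq
    rw [this]
    nlinarith
  have hquad : ∀ v : Fin n ⊕ Unit → ℝ, ∑ e, (u e ⬝ᵥ v) ^ 2 ≤ 4 * d * (v ⬝ᵥ v) := by
    intro v
    have h1 := sum_endpoints_le hE1 hdeg (g := fun i => v (Sum.inl i) ^ 2) fun i => sq_nonneg _
    have h2 : ∀ e, (u e ⬝ᵥ v) ^ 2 ≤ 4 * (v (Sum.inl (E e).1) ^ 2 + v (Sum.inl (E e).2) ^ 2)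
        + 2 * γ ^ 2 * v (Sum.inr ()) ^ 2 := by
      intro e
      rw [huv, incidence_dotProduct hb]
      nlinarith [sq_nonneg (v (Sum.inl (E e).1) - v (Sum.inl (E e).2) - γ * v (Sum.inr ())),
        sq_nonneg (v (Sum.inl (E e).1) + v (Sum.inl (E e).2))]
    refine (Finset.sum_le_sum fun e _ => h2 e).trans ?_
    rw [Finset.sum_add_distrib, ← Finset.mul_sum, Finset.sum_const, Finset.card_univ,
      Fintype.card_fin, nsmul_eq_mul]
    have h3 : v ⬝ᵥ v = ∑ i, v (Sum.inl i) ^ 2 + v (Sum.inr ()) ^ 2 := by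
      simp [dotProduct, sq]
    have h4 : (m : ℝ) * (2 * γ ^ 2 * v (Sum.inr ()) ^ 2) = 4 * d * v (Sum.inr ()) ^ 2 := by
      linear_combination 2 * v (Sum.inr ()) ^ 2 * hγm
    rw [h3, h4]
    linarith
  obtain ⟨F, hF1, hF2⟩ := exists_balanced_subset (α := 8 * q) (ρ := 4) (x := 12 * q)
    hs0.le hs1 (by positivity) (by norm_num) (by
      rw [hφ]
      have : s * (1 - s) * (1 / q) ^ 2 = (1 - s) / d := by
        rw [div_pow, hqq]; field_simp
      rw [this, div_le_one hd0R]
      linarith) u hnorm (by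
      rw [hφ]
      refine .of_dotProduct_mulVec_nonneg ?_ fun v => ?_
      · change (_ : Matrix _ _ ℝ)ᴴ = _
        simp [conjTranspose_eq_transpose_of_trivial, transpose_sum, transpose_vecMulVec]
      · rw [star_trivial, sub_mulVec, add_mulVec, dotProduct_sub, dotProduct_add, smul_mulVec,
          smul_mulVec, smul_mulVec, one_mulVec, dotProduct_smul, dotProduct_smul, dotProduct_smul,
          dotProduct_sum_vecMulVec]
        simp only [smul_eq_mul]
        have h0 : 0 ≤ v ⬝ᵥ v := Finset.sum_nonneg fun i _ => mul_self_nonneg _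
        have h1 := mul_le_mul_of_nonneg_left (hquad v) hδ0
        have h2 := mul_le_mul_of_nonneg_right hδ h0
        linarith)
  have hsub : ∀ A : Finset (Fin m), (∑ e ∈ A, vecMulVec (u e) (u e)).submatrix Sum.inl Sum.inl =
      ∑ e ∈ A, vecMulVec (b e) (b e) := by
    intro A
    ext i j
    simp [Matrix.sum_apply, vecMulVec_apply, hu]
  have hone : (1 : Matrix (Fin n ⊕ Unit) (Fin n ⊕ Unit) ℝ).submatrix Sum.inl Sum.inl = 1 :=
    submatrix_one _ Sum.inl_injective
  have hB1 : ((12 * q) • 1 + (∑ e ∈ F, vecMulVec (b e) (b e) -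
      s • ∑ e, vecMulVec (b e) (b e))).PosSemidef := by
    have := hF1.submatrix (Sum.inl : Fin n → Fin n ⊕ Unit)
    simpa [submatrix_add, submatrix_sub, submatrix_smul, hsub, hone] using this
  have hB2 : ((12 * q) • 1 - (∑ e ∈ F, vecMulVec (b e) (b e) -
      s • ∑ e, vecMulVec (b e) (b e))).PosSemidef := by
    have := hF2.submatrix (Sum.inl : Fin n → Fin n ⊕ Unit)
    simpa [submatrix_add, submatrix_sub, submatrix_smul, hsub, hone] using this
  refine ⟨F, ?_, hB1, hB2⟩
  have h1 := hF2.diag_nonneg (i := Sum.inr ())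
  have h2 : ((12 * q) • 1 - (∑ e ∈ F, vecMulVec (u e) (u e) -
      s • ∑ e, vecMulVec (u e) (u e))) (Sum.inr ()) (Sum.inr ()) =
      12 * q - ((F.card : ℝ) * γ ^ 2 - s * (m * γ ^ 2)) := by
    simp [Matrix.sum_apply, vecMulVec_apply, hu, sq]
  rw [h2] at h1
  have h3 := mul_nonneg hmR.le h1
  have h4 : (m : ℝ) * (12 * q - ((F.card : ℝ) * γ ^ 2 - s * (m * γ ^ 2))) =
      2 * (6 * q * m - (F.card - s * m) * d) := by
    linear_combination (s * m - F.card) * hγm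
  linarith

end Graph

/-- **Existence of a linear-sized additive unweighted spectral sparsifier.**
Let `G` be a simple graph on `n` vertices with `m` edges (given by an edge list
`E : Fin m → V × V` with distinct endpoints and pairwise distinct unordered pairs),
with maximum degree `d`. For `ε ∈ (0, 1]` with `m ≥ n/ε²`, setting `m̃ := n/ε²`, there
is a subset `F` of the edges with `|F| ≤ 8n/ε²` such that
`-8√2 ε d Iₙ ⪯ L_G - (m/m̃) ∑_{e ∈ F} b_e b_eᵀ ⪯ 8√2 ε d Iₙ`. -/
theorem additive_unweighted_sparsifier_exists {n m : ℕ} (E : Fin m → Fin n × Fin n)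
    (hE1 : ∀ e, (E e).1 ≠ (E e).2)
    (hE2 : ∀ e e', ({(E e).1, (E e).2} : Finset (Fin n)) = {(E e').1, (E e').2} → e = e')
    (b : Fin m → Fin n → ℝ)
    (hb : b = fun e w => (if w = (E e).1 then (1 : ℝ) else 0) - (if w = (E e).2 then 1 else 0))
    (d : ℕ)
    (hd : d = Finset.univ.sup fun v : Fin n =>
      (Finset.univ.filter fun e => (E e).1 = v ∨ (E e).2 = v).card)
    (ε : ℝ) (hε0 : 0 < ε) (hε1 : ε ≤ 1)
    (hm : (n : ℝ) / ε^2 ≤ m) :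
    ∃ F : Finset (Fin m), (F.card : ℝ) ≤ 8 * n / ε^2 ∧
      (((∑ e, vecMulVec (b e) (b e)) -
          ((m : ℝ) / ((n : ℝ) / ε^2)) • ∑ e ∈ F, vecMulVec (b e) (b e)) +
        (8 * Real.sqrt 2 * ε * d) • (1 : Matrix (Fin n) (Fin n) ℝ)).PosSemidef ∧
      ((8 * Real.sqrt 2 * ε * d) • (1 : Matrix (Fin n) (Fin n) ℝ) -
        ((∑ e, vecMulVec (b e) (b e)) -
          ((m : ℝ) / ((n : ℝ) / ε^2)) • ∑ e ∈ F, vecMulVec (b e) (b e))).PosSemidef := by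
  rcases Nat.eq_zero_or_pos n with rfl | hn
  · refine ⟨∅, by simp, ?_, ?_⟩ <;>
    · convert PosSemidef.zero (n := Fin 0) (R := ℝ)
      exact Subsingleton.elim _ _
  have hdeg : ∀ v : Fin n,
      (Finset.univ.filter fun e => (E e).1 = v ∨ (E e).2 = v).card ≤ d := by
    intro v
    rw [hd]
    exact Finset.le_sup (f := fun v : Fin n =>
      (Finset.univ.filter fun e => (E e).1 = v ∨ (E e).2 = v).card) (Finset.mem_univ v)
  have hnR : (0 : ℝ) < n := by exact_mod_cast hn
  set M : ℝ := n / ε ^ 2 with hM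
  have hM0 : 0 < M := by positivity
  have hmR : (0 : ℝ) < m := hM0.trans_le hm
  have hm0 : 0 < m := by exact_mod_cast hmR
  have hd1 : 1 ≤ d := by
    refine le_trans ?_ (hdeg (E ⟨0, hm0⟩).1)
    exact Finset.card_pos.2 ⟨⟨0, hm0⟩, by simp⟩
  have hdm : d ≤ m := by
    rw [hd]
    refine Finset.sup_le fun v _ => ?_
    simpa using Finset.card_le_univ (Finset.univ.filter fun e => (E e).1 = v ∨ (E e).2 = v)
  have hd1R : (1 : ℝ) ≤ d := by exact_mod_cast hd1
  have hd0R : (0 : ℝ) < d := by linarith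
  have hdmR : (d : ℝ) ≤ m := by exact_mod_cast hdm
  have h2m : 2 * (m : ℝ) ≤ n * d := by
    have := sum_endpoints_le hE1 hdeg (g := fun _ => 1) (fun _ => zero_le_one)
    simp at this
    linarith
  -- the sampling rate
  set s : ℝ := M / m with hs
  have hs0 : 0 < s := by positivity
  have hs1 : s ≤ 1 := (div_le_one hmR).2 hm
  have hsm : s * m = M := div_mul_cancel₀ _ hmR.ne'
  set q : ℝ := √(s * d) with hq
  have hq0 : 0 < q := Real.sqrt_pos.2 (by positivity)
  have hqq : q ^ 2 = s * d := Real.sq_sqrt (by positivity)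
  have hεq : √2 ≤ ε * q := by
    apply Real.sqrt_le_iff.2 ⟨by positivity, ?_⟩
    have h1 : (ε * q) ^ 2 = n * d / m := by
      rw [mul_pow, hqq, hs, hM]
      field_simp
    rw [h1, le_div_iff₀ hmR]
    exact h2m
  have hq1 : 1 ≤ q := by
    have h2 : (1 : ℝ) ≤ √2 := by
      rw [Real.le_sqrt' one_pos]; norm_num
    nlinarith
  obtain ⟨F, hF, hB1, hB2⟩ := exists_subset_of_rate hE1 hb hdeg hd1 hdm hs0 hs1
  rw [← hq] at hF hB1 hB2
  have hms : (m : ℝ) / M = s⁻¹ := by rw [hs, inv_div]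
  have hK : 0 ≤ 8 * √2 * ε * d - s⁻¹ * (12 * q) := by
    have h1 : s⁻¹ * (12 * q) = 12 * d / q := by
      field_simp
      linear_combination hqq
    have h2 : √2 * √2 = 2 := Real.mul_self_sqrt (by norm_num)
    rw [h1, sub_nonneg, div_le_iff₀ hq0]
    nlinarith [mul_le_mul_of_nonneg_left hεq (by positivity : (0 : ℝ) ≤ 8 * √2 * d)]
  have hKP : ((8 * √2 * ε * d - s⁻¹ * (12 * q)) • (1 : Matrix (Fin n) (Fin n) ℝ)).PosSemidef :=
    PosSemidef.one.smul hK
  have hsi : 0 ≤ s⁻¹ := by positivity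
  have hss : s⁻¹ * s = 1 := inv_mul_cancel₀ hs0.ne'
  refine ⟨F, ?_, ?_, ?_⟩
  · have h1 : (F.card - s * m) * d ≤ 6 * (s * m) * d := by
      have h2 : q ≤ s * d := by nlinarith
      have h3 := mul_le_mul_of_nonneg_right h2 hmR.le
      linarith
    have h4 := le_of_mul_le_mul_right h1 hd0R
    rw [hsm] at h4
    rw [mul_div_assoc, ← hM]
    linarith
  · rw [hms]
    convert (hB2.smul hsi).add hKP using 1
    simp only [smul_sub, smul_smul, hss, sub_smul, one_smul]
    abel
  · rw [hms]
    convert (hB1.smul hsi).add hKP using 1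
    simp only [smul_sub, smul_add, smul_smul, hss, sub_smul, one_smul]
    abel
end
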